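/- arXiv:2506.23970 — 3 statements merged into one kernel-verified Lean document; each statement's English description precedes it below -/
import Mathlib

section
/- Let n → ∞ through odd integers and let d = d(n) be even with 4 ≤ d ≤ (log n)². Let μ_d be the uniform distribution on the set of isomorphism classes of d-regular graphs on n vertices, extended by assigning probability 0 to a null outcome L_∅. Let η_d be the distribution of op(L, S), where L is a uniformly random isomorphism class of d-regular graphs on n-1 vertices (realized by a fixed labelled representative) and S is an independent uniformly random multiset of d/2 edges of L, sampled with repetition, with op(L, S) := L_∅ whenever S is not an induced d-matching of L. Then the total variation distance d_TV(μ_d, η_d) tends to 0 as n → ∞. -/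
/-- The setoid on simple graphs on `V` identifying isomorphic graphs. -/
def isoSetoid (V : Type*) : Setoid (SimpleGraph V) where
  r G H := Nonempty (G ≃g H)
  iseqv := ⟨fun _ => ⟨SimpleGraph.Iso.refl⟩, fun h => ⟨h.some.symm⟩,
    fun h₁ h₂ => ⟨h₁.some.trans h₂.some⟩⟩

/-- Isomorphism classes (unlabelled copies) of simple graphs on `n` vertices. -/
def GraphClass (n : ℕ) : Type := Quotient (isoSetoid (Fin n))

/-- The isomorphism class `q` is a class of `d`-regular graphs. -/
def IsRegClass {n : ℕ} (q : GraphClass n) (d : ℕ) : Prop :=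
  ∃ G : SimpleGraph (Fin n), Quotient.mk (isoSetoid (Fin n)) G = q ∧
    ∀ v, Nat.card (G.neighborSet v) = d

/-- The entries of the tuple `e` of (unordered) pairs form an induced matching of `L`:
they are edges of `L`, they are pairwise vertex-disjoint (in particular pairwise
distinct), and the subgraph of `L` induced by the vertices they span consists exactly of
these edges. -/
def FormsInducedMatching {V : Type*} {t : ℕ} (L : SimpleGraph V)
    (e : Fin t → Sym2 V) : Prop :=
  (∀ i, e i ∈ L.edgeSet) ∧
  (∀ i j, i ≠ j → ∀ x, x ∈ e i → x ∉ e j) ∧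
  (∀ u v : V, (∃ i, u ∈ e i) → (∃ j, v ∈ e j) → L.Adj u v → ∃ i, e i = s(u, v))

/-- The operation `op` on a tuple `e` of edges of a graph `L` on `n-1` vertices
forming an induced matching: delete the entries of `e` from `L`, add the new vertex
`⟨n-1⟩`, and join it to every vertex covered by an entry of `e`.  Vertices of `L` are
embedded into `Fin n` via `Fin.castLE`. -/
noncomputable def opGraphE (n : ℕ) {t : ℕ} (L : SimpleGraph (Fin (n - 1)))
    (e : Fin t → Sym2 (Fin (n - 1))) : SimpleGraph (Fin n) :=
  if h : 1 ≤ n then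
    SimpleGraph.fromEdgeSet
      ((Sym2.map (Fin.castLE (Nat.sub_le n 1))) '' (L.edgeSet \ Set.range e) ∪
       {f : Sym2 (Fin n) | ∃ x : Fin (n - 1), (∃ i, x ∈ e i) ∧
          f = s(Fin.castLE (Nat.sub_le n 1) x, (⟨n - 1, by omega⟩ : Fin n))})
  else ⊥

open Classical in
/-- The outcome of the operation `op` applied to `L` and the sampled tuple of edges `e`:
the isomorphism class of `op(L,e)` if the entries of `e` form an induced matching of
`L`, and the null outcome `none` (denoted `L_∅`) otherwise. -/
noncomputable def opVal (n : ℕ) {t : ℕ} (L : SimpleGraph (Fin (n - 1)))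
    (e : Fin t → Sym2 (Fin (n - 1))) : Option (GraphClass n) :=
  if FormsInducedMatching L e then
    some (Quotient.mk (isoSetoid (Fin n)) (opGraphE n L e))
  else none

open Classical in
/-- The uniform distribution `μ_d` on isomorphism classes of `d`-regular graphs on `n`
vertices, extended by probability `0` on the null outcome `none = L_∅`. -/
noncomputable def muD (n dd : ℕ) : Option (GraphClass n) → ℝ := fun x =>
  match x with
  | none => 0
  | some q =>
      if IsRegClass q dd then (Nat.card {q' : GraphClass n // IsRegClass q' dd} : ℝ)⁻¹
      else 0

/-- The distribution `η_d` of `op(L,S)`, where `L` is a uniformly random isomorphism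
class of `d`-regular graphs on `n-1` vertices (realized by the fixed representative
`rep`) and `S` is an independent uniformly random multiset of `d/2` edges of `L` sampled
with repetition (modelled by a uniformly random ordered `(d/2)`-tuple of edges). -/
noncomputable def etaD (n dd : ℕ)
    (rep : {q : GraphClass (n - 1) // IsRegClass q dd} → SimpleGraph (Fin (n - 1))) :
    Option (GraphClass n) → ℝ := fun x =>
  (Nat.card {q : GraphClass (n - 1) // IsRegClass q dd} : ℝ)⁻¹ *
  ∑ᶠ q : {q : GraphClass (n - 1) // IsRegClass q dd},
    (Nat.card {e : Fin (dd / 2) → Sym2 (Fin (n - 1)) //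
        (∀ i, e i ∈ (rep q).edgeSet) ∧ opVal n (rep q) e = x} : ℝ) /
    (Nat.card (rep q).edgeSet : ℝ) ^ (dd / 2)

section Helpers
open Finset

open Classical in
noncomputable def regs (V : Type*) [Fintype V] (d : ℕ) : Finset (SimpleGraph V) :=
  Finset.univ.filter (fun G => ∀ v, (Finset.univ.filter (fun w => G.Adj v w)).card = d)

open Classical in
noncomputable def ncont {V : Type*} [Fintype V] (d : ℕ) (H : Finset (Sym2 V)) : Finset (SimpleGraph V) :=
  (regs V d).filter (fun G => ∀ e ∈ H, e ∈ G.edgeSet)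

/-- switching -/
def swt {V : Type*} (G : SimpleGraph V) (u v x y : V) : SimpleGraph V :=
  SimpleGraph.fromEdgeSet ((G.edgeSet \ {s(u,v), s(x,y)}) ∪ {s(u,x), s(v,y)})

theorem swt_adj {V : Type*} (G : SimpleGraph V) (u v x y a b : V) :
    (swt G u v x y).Adj a b ↔ ((G.Adj a b ∧ s(a,b) ≠ s(u,v) ∧ s(a,b) ≠ s(x,y)) ∨ s(a,b) = s(u,x) ∨ s(a,b) = s(v,y)) ∧ a ≠ b := by
  simp only [swt, SimpleGraph.fromEdgeSet_adj, Set.mem_union, Set.mem_sdiff, SimpleGraph.mem_edgeSet, Set.mem_insert_iff, Set.mem_singleton_iff, not_or]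

structure SwOK {V : Type*} (G : SimpleGraph V) (u v x y : V) : Prop where
  uv : G.Adj u v
  xy : G.Adj x y
  xu : x ≠ u
  yv : y ≠ v
  ux : ¬ G.Adj u x
  vy : ¬ G.Adj v y

theorem swt_reg {V : Type*} [Fintype V] {d : ℕ} {G : SimpleGraph V} (hG : G ∈ regs V d) {u v x y : V}
   (h : SwOK G u v x y) : swt G u v x y ∈ regs V d := by
  classical
  simp only [regs, mem_filter, mem_univ, true_and] at hG ⊢
  obtain ⟨uv, xy, xu, yv, ux, vy⟩ := h
  have huv := uv.ne
  have hxy := xy.ne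
  have xv : x ≠ v := by rintro rfl; exact ux uv
  have yu : y ≠ u := by rintro rfl; exact vy uv.symm
  intro a
  by_cases ha1 : a = u
  · subst ha1
    have : univ.filter (fun w => (swt G a v x y).Adj a w) = insert x ((univ.filter (fun w => G.Adj a w)).erase v) := by
      ext b
      simp only [mem_filter, mem_univ, true_and, swt_adj, mem_insert, mem_erase, Sym2.eq_iff]
      grind [SimpleGraph.Adj.symm, SimpleGraph.Adj.ne]
    rw [this, card_insert_of_notMem (by simp [ux]), card_erase_of_mem (by simp [uv]), hG]
    have : 0 < (univ.filter (fun w => G.Adj a w)).card := card_pos.2 ⟨v, by simp [uv]⟩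
    rw [hG] at this; omega
  by_cases ha2 : a = v
  · subst ha2
    have : univ.filter (fun w => (swt G u a x y).Adj a w) = insert y ((univ.filter (fun w => G.Adj a w)).erase u) := by
      ext b
      simp only [mem_filter, mem_univ, true_and, swt_adj, mem_insert, mem_erase, Sym2.eq_iff]
      grind [SimpleGraph.Adj.symm, SimpleGraph.Adj.ne]
    rw [this, card_insert_of_notMem (by simp [vy]), card_erase_of_mem (by simp [uv.symm]), hG]
    have : 0 < (univ.filter (fun w => G.Adj a w)).card := card_pos.2 ⟨u, by simp [uv.symm]⟩
    rw [hG] at this; omega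
  have ux' : ¬ G.Adj x u := fun h => ux h.symm
  have vy' : ¬ G.Adj y v := fun h => vy h.symm
  by_cases ha3 : a = x
  · subst ha3
    have : univ.filter (fun w => (swt G u v a y).Adj a w) = insert u ((univ.filter (fun w => G.Adj a w)).erase y) := by
      ext b
      simp only [mem_filter, mem_univ, true_and, swt_adj, mem_insert, mem_erase, Sym2.eq_iff]
      grind [SimpleGraph.Adj.symm, SimpleGraph.Adj.ne]
    rw [this, card_insert_of_notMem (by simp [ux']), card_erase_of_mem (by simp [xy]), hG]
    have : 0 < (univ.filter (fun w => G.Adj a w)).card := card_pos.2 ⟨y, by simp [xy]⟩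
    rw [hG] at this; omega
  by_cases ha4 : a = y
  · subst ha4
    have : univ.filter (fun w => (swt G u v x a).Adj a w) = insert v ((univ.filter (fun w => G.Adj a w)).erase x) := by
      ext b
      simp only [mem_filter, mem_univ, true_and, swt_adj, mem_insert, mem_erase, Sym2.eq_iff]
      grind [SimpleGraph.Adj.symm, SimpleGraph.Adj.ne]
    rw [this, card_insert_of_notMem (by simp [vy']), card_erase_of_mem (by simp [xy.symm]), hG]
    have : 0 < (univ.filter (fun w => G.Adj a w)).card := card_pos.2 ⟨x, by simp [xy.symm]⟩
    rw [hG] at this; omega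
  have : univ.filter (fun w => (swt G u v x y).Adj a w) = (univ.filter (fun w => G.Adj a w)) := by
    ext b
    simp only [mem_filter, mem_univ, true_and, swt_adj, Sym2.eq_iff]
    grind [SimpleGraph.Adj.symm, SimpleGraph.Adj.ne]
  rw [this, hG]

theorem swt_inj {V : Type*} {G G' : SimpleGraph V} {u v x y : V}
   (h : SwOK G u v x y) (h' : SwOK G' u v x y) (e : swt G u v x y = swt G' u v x y) : G = G' := by
  obtain ⟨uv, xy, xu, yv, ux, vy⟩ := h
  obtain ⟨uv', xy', xu', yv', ux', vy'⟩ := h'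
  ext a b
  have := congrArg (fun K => SimpleGraph.Adj K a b) e
  simp only [swt_adj, Sym2.eq_iff, eq_iff_iff] at this
  have h1 := G.adj_comm
  have h2 := G'.adj_comm
  by_cases hab : a = b
  · subst hab; simp
  grind

open Classical in
theorem switch_count {V : Type*} [Fintype V] {d : ℕ} (H : Finset (Sym2 V)) (u v : V)
   (he : s(u,v) ∉ H) :
   (ncont d (insert s(u,v) H)).card * (Fintype.card V * d - (2 * (H.card + 1) + 2 * (d * (d+1))))
     ≤ (ncont d H).card * d ^ 2 := by
  classical
  set P : SimpleGraph V → Finset (V × V) := fun G =>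
    univ.filter (fun p => SwOK G u v p.1 p.2 ∧ s(p.1,p.2) ∉ insert s(u,v) H) with hP
  set Q : SimpleGraph V → Finset (V × V) := fun G =>
    univ.filter (fun p => G.Adj u p.1 ∧ G.Adj v p.2) with hQ
  have hPc : ∀ G ∈ ncont d (insert s(u,v) H),
      Fintype.card V * d - (2 * (H.card + 1) + 2 * (d * (d+1))) ≤ (P G).card := by
    intro G hG
    simp only [ncont, mem_filter, regs, mem_univ, true_and] at hG
    obtain ⟨hd, hH⟩ := hG
    have huvG : G.Adj u v := hH _ (mem_insert_self _ _)
    set D : Finset (V × V) := univ.filter (fun p => G.Adj p.1 p.2)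
    have hD : D.card = Fintype.card V * d := by
      have : D = (univ : Finset V).biUnion (fun x => (univ.filter (fun w => G.Adj x w)).image (fun w => (x, w))) := by
        ext ⟨a, b⟩; simp [D]
      rw [this, card_biUnion]
      · simp only [card_image_of_injective _ (Prod.mk_right_injective _), hd]; simp
      · intro a _ b _ hab
        rw [Function.onFun, disjoint_left]
        simp only [mem_image]
        rintro _ ⟨w, _, rfl⟩ ⟨w', _, h⟩
        exact hab (by simpa using (congrArg Prod.fst h).symm)
    set B1 : Finset (V × V) := univ.filter (fun p => p.1 ≠ p.2 ∧ s(p.1,p.2) ∈ insert s(u,v) H)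
    set Nu : Finset V := insert u (univ.filter (fun w => G.Adj u w))
    set Nv : Finset V := insert v (univ.filter (fun w => G.Adj v w))
    have hNu : Nu.card = d + 1 := by
      rw [card_insert_of_notMem (by simp), hd]
    have hNv : Nv.card = d + 1 := by
      rw [card_insert_of_notMem (by simp), hd]
    set B2 : Finset (V × V) := Nu.biUnion (fun x => (univ.filter (fun w => G.Adj x w)).image (fun w => (x, w)))
    set B3 : Finset (V × V) := Nv.biUnion (fun x => (univ.filter (fun w => G.Adj x w)).image (fun w => (w, x)))
    have hB2 : B2.card ≤ (d+1) * d := by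
      rw [← hNu]
      apply card_biUnion_le_card_mul
      intro x _
      exact card_image_le.trans (hd x).le
    have hB3 : B3.card ≤ (d+1) * d := by
      rw [← hNv]
      apply card_biUnion_le_card_mul
      intro x _
      exact card_image_le.trans (hd x).le
    have hB1 : B1.card ≤ 2 * (H.card + 1) := by
      have h1 : B1.card ≤ 2 * (B1.image (fun p => s(p.1,p.2))).card := by
        apply card_le_mul_card_image
        intro e he
        obtain ⟨p, hp, rfl⟩ := mem_image.1 he
        have : (B1.filter (fun x => s(x.1,x.2) = s(p.1,p.2))) ⊆ {p, p.swap} := by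
          intro q hq
          have := (mem_filter.1 hq).2
          rw [Sym2.eq_iff] at this
          rcases this with h | h
          · simp [Prod.ext_iff, h]
          · simp [Prod.ext_iff, h]
        exact (card_le_card this).trans card_le_two
      have h2 : (B1.image (fun p => s(p.1,p.2))).card ≤ H.card + 1 := by
        refine le_trans (card_le_card ?_) (card_insert_le s(u,v) H)
        intro e he
        obtain ⟨p, hp, rfl⟩ := mem_image.1 he
        exact (mem_filter.1 hp).2.2
      omega
    have hsub : D ⊆ P G ∪ (B1 ∪ (B2 ∪ B3)) := by
      rintro ⟨x, y⟩ hxy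
      have hxy' : G.Adj x y := by simpa [D] using hxy
      have hne := hxy'.ne
      simp only [mem_union]
      by_contra hcon
      push Not at hcon
      obtain ⟨c1, c2, c3, c4⟩ := hcon
      apply c1
      simp only [hP, mem_filter, mem_univ, true_and]
      have c2' : s(x,y) ∉ insert s(u,v) H := by
        intro h; exact c2 (by simp only [B1, mem_filter, mem_univ, true_and]; exact ⟨hne, h⟩)
      have c3' : x ∉ Nu := by
        intro h
        apply c3
        simp only [B2, mem_biUnion, mem_image, mem_filter, mem_univ, true_and]
        exact ⟨x, h, y, hxy', rfl⟩
      have c4' : y ∉ Nv := by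
        intro h
        apply c4
        simp only [B3, mem_biUnion, mem_image, mem_filter, mem_univ, true_and]
        exact ⟨y, h, x, hxy'.symm, rfl⟩
      simp only [Nu, Nv, mem_insert, mem_filter, mem_univ, true_and, not_or] at c3' c4'
      exact ⟨⟨huvG, hxy', c3'.1, c4'.1, c3'.2, c4'.2⟩, c2'⟩
    have := card_le_card hsub
    have h1 := card_union_le (P G) (B1 ∪ (B2 ∪ B3))
    have h2 := card_union_le B1 (B2 ∪ B3)
    have h3 := card_union_le B2 B3
    rw [hD] at this
    have h4 : (d+1) * d = d * (d+1) := mul_comm _ _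
    omega
  have hQc : ∀ G ∈ ncont d H, (Q G).card = d ^ 2 := by
    intro G hG
    simp only [ncont, mem_filter, regs, mem_univ, true_and] at hG
    have : Q G = (univ.filter (fun w => G.Adj u w)) ×ˢ (univ.filter (fun w => G.Adj v w)) := by
      ext ⟨a, b⟩; simp [hQ]
    rw [this, card_product, hG.1, hG.1, sq]
  have h1 : (ncont d (insert s(u,v) H)).card * (Fintype.card V * d - (2 * (H.card + 1) + 2 * (d * (d+1))))
      ≤ ((ncont d (insert s(u,v) H)).sigma P).card := by
    rw [card_sigma, ← smul_eq_mul]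
    exact card_nsmul_le_sum _ _ _ hPc
  have h2 : ((ncont d H).sigma Q).card = (ncont d H).card * d ^ 2 := by
    rw [card_sigma, sum_const_nat hQc]
  rw [← h2]
  refine h1.trans ?_
  apply card_le_card_of_injOn (fun z => ⟨swt z.1 u v z.2.1 z.2.2, z.2⟩)
  · rintro ⟨G, x, y⟩ hz
    simp only [coe_sigma, Set.mem_sigma_iff, mem_coe] at hz ⊢
    obtain ⟨hG, hp⟩ := hz
    simp only [hP, mem_filter, mem_univ, true_and] at hp
    simp only [ncont, mem_filter] at hG ⊢
    obtain ⟨ok, hx⟩ := hp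
    have ok' := ok
    obtain ⟨uv, xy, xu, yv, ux, vy⟩ := ok
    refine ⟨⟨swt_reg hG.1 ok', ?_⟩, ?_⟩
    · intro e he'
      induction e with | _ a b
      have hab : G.Adj a b := hG.2 _ (mem_insert_of_mem he')
      rw [SimpleGraph.mem_edgeSet, swt_adj]
      refine ⟨Or.inl ⟨hab, ?_, ?_⟩, hab.ne⟩
      · intro h; rw [h] at he'; exact he he'
      · intro h; rw [h] at he'; exact hx (mem_insert_of_mem he')
    · simp only [hQ, mem_filter, mem_univ, true_and]
      constructor
      · rw [swt_adj]; exact ⟨Or.inr (Or.inl rfl), xu.symm⟩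
      · rw [swt_adj]; exact ⟨Or.inr (Or.inr rfl), yv.symm⟩
  · rintro ⟨G, x, y⟩ hz ⟨G', x', y'⟩ hz' h
    simp only [coe_sigma, Set.mem_sigma_iff, mem_coe, hP, mem_filter, mem_univ, true_and] at hz hz'
    simp only [Sigma.mk.injEq, heq_eq_eq, Prod.mk.injEq] at h
    obtain ⟨h1, rfl, rfl⟩ := h
    have := swt_inj hz.2.1 hz'.2.1 h1
    subst this
    rfl

theorem desc_lower (e : ℕ) : ∀ M : ℕ, e ≤ M → M ^ e ≤ 3 ^ e * M.descFactorial e := by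
  induction e with
  | zero => intro M _; simp
  | succ e ih =>
    intro M hM
    obtain ⟨K, rfl⟩ : ∃ K, M = K + 1 := ⟨M - 1, by omega⟩
    rw [Nat.succ_descFactorial_succ]
    have h1 := ih K (by omega)
    have h2 : (K+1) ^ e ≤ 3 * K ^ e := by
      rcases Nat.eq_zero_or_pos K with rfl | hK
      · have : e = 0 := by omega
        subst this; simp
      have hKr : (0:ℝ) < K := by exact_mod_cast hK
      have h3 : ((1:ℝ) + 1 / K) ^ e ≤ 3 := by
        calc ((1:ℝ) + 1 / K) ^ e ≤ (Real.exp (1/K)) ^ e := by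
              gcongr
              have := Real.add_one_le_exp (1/(K:ℝ)); linarith
          _ = Real.exp (e * (1/K)) := by rw [← Real.exp_nat_mul]
          _ ≤ Real.exp 1 := by
              apply Real.exp_le_exp.2
              rw [mul_one_div, div_le_one hKr]
              exact_mod_cast (by omega : e ≤ K)
          _ ≤ 3 := by have := Real.exp_one_lt_d9; linarith
      have h4 : ((K:ℝ)+1) ^ e ≤ 3 * (K:ℝ) ^ e := by
        have : ((K:ℝ)+1) = (1 + 1/K) * K := by field_simp
        rw [this, mul_pow]
        gcongr
      exact_mod_cast h4
    calc (K+1)^(e+1) = (K+1) * (K+1)^e := by ring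
      _ ≤ (K+1) * (3 * K^e) := by gcongr
      _ ≤ (K+1) * (3 * (3^e * K.descFactorial e)) := by gcongr
      _ = _ := by ring

theorem ncont_empty {V : Type*} [Fintype V] (d : ℕ) : ncont d (∅ : Finset (Sym2 V)) = regs V d := by
  simp [ncont]

theorem reg_two_edges {V : Type*} [Fintype V] {d : ℕ} {G : SimpleGraph V} (hG : G ∈ regs V d) :
   2 * Nat.card G.edgeSet = Fintype.card V * d := by
  classical
  simp only [regs, mem_filter, mem_univ, true_and] at hG
  have := G.sum_degrees_eq_twice_card_edges
  rw [Nat.card_eq_fintype_card, ← SimpleGraph.edgeFinset_card, ← this]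
  have : ∀ v, G.degree v = d := by
    intro v; rw [← hG v, ← SimpleGraph.card_neighborFinset_eq_degree]; congr 1; ext; simp
  simp [this]

theorem ncont_bound {V : Type*} [Fintype V] {d M : ℕ} (hM : 2 * M = Fintype.card V * d) (hd : 1 ≤ d)
   (H : Finset (Sym2 V)) :
   (ncont d H).card * M ^ H.card ≤ (18 * d^2) ^ H.card * (regs V d).card := by
  classical
  have key : (ncont d H).card * M.descFactorial H.card ≤ (6 * d^2) ^ H.card * (regs V d).card := by
    induction H using Finset.induction_on with
    | empty => simp [ncont_empty]
    | insert e H he ih =>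
      have hmono : (ncont d (insert e H)).card ≤ (ncont d H).card := by
        apply card_le_card
        intro G hG
        simp only [ncont, mem_filter] at hG ⊢
        exact ⟨hG.1, fun e' h => hG.2 e' (mem_insert_of_mem h)⟩
      have step : (ncont d (insert e H)).card * (M - H.card) ≤ 6 * d^2 * (ncont d H).card := by
        induction e with | _ u v
        by_cases huv : u = v
        · subst huv
          have : ncont d (insert s(u,u) H) = ∅ := by
            ext G
            simp [ncont]
          rw [this]; simp
        have h := switch_count (d := d) H u v he
        have hdd : d ≤ d ^ 2 := by nlinarith
        by_cases hc : 2 + 2 * (d * (d+1)) ≤ M - H.card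
        · have : M - H.card ≤ Fintype.card V * d - (2 * (H.card + 1) + 2 * (d * (d+1))) := by
            rw [← hM]; omega
          calc _ ≤ _ := Nat.mul_le_mul_left _ this
            _ ≤ _ := h
            _ ≤ _ := by nlinarith
        · have : M - H.card ≤ 6 * d^2 := by nlinarith
          calc _ ≤ (ncont d H).card * (6 * d^2) := Nat.mul_le_mul hmono this
            _ = _ := by ring
      rw [card_insert_of_notMem he, Nat.descFactorial_succ]
      calc _ = ((ncont d (insert e H)).card * (M - H.card)) * M.descFactorial H.card := by ring
        _ ≤ (6 * d^2 * (ncont d H).card) * M.descFactorial H.card := by gcongr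
        _ = 6 * d^2 * ((ncont d H).card * M.descFactorial H.card) := by ring
        _ ≤ 6 * d^2 * ((6 * d^2) ^ H.card * (regs V d).card) := by gcongr
        _ = _ := by ring
  by_cases hH : H.card ≤ M
  · have h1 := desc_lower H.card M hH
    calc _ ≤ (ncont d H).card * (3 ^ H.card * M.descFactorial H.card) := by gcongr
      _ = 3 ^ H.card * ((ncont d H).card * M.descFactorial H.card) := by ring
      _ ≤ 3 ^ H.card * ((6 * d^2) ^ H.card * (regs V d).card) := by gcongr
      _ = _ := by
        rw [show (18 * d^2) ^ H.card = 3 ^ H.card * (6 * d^2) ^ H.card by rw [← mul_pow]; congr 1; ring]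
        ring
  · have : ncont d H = ∅ := by
      rw [eq_empty_iff_forall_notMem]
      intro G hG
      simp only [ncont, mem_filter] at hG
      have h2 := reg_two_edges hG.1
      have : H.card ≤ Nat.card G.edgeSet := by
        rw [Nat.card_eq_fintype_card, ← SimpleGraph.edgeFinset_card]
        apply card_le_card
        intro e he
        simpa using hG.2 e he
      omega
    rw [this]; simp

theorem inv_sum_le {Ω : Type*} [Fintype Ω] [DecidableEq Ω] (τ : Equiv.Perm Ω) (a : Ω → ℝ) (ha0 : ∀ e, 0 ≤ a e)
   (hinv : ∀ e, a (τ e) = a e) (b : Ω → ℝ) (hb : ∀ e, b e = if τ e = e then a e else if τ (τ e) = e then a e ^ 2 else a e ^ 3)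
   (k : ℕ) : ∀ F : Finset Ω, F.card = k → (∀ e ∈ F, a e ≤ 1) →  (∀ e, τ e ∈ F ↔ e ∈ F) →
    ∑ H ∈ F.powerset.filter (fun H => ∀ e, τ e ∈ H ↔ e ∈ H), ∏ e ∈ H, a e ≤ Real.exp (∑ e ∈ F, b e) := by
  classical
  have hb0 : ∀ e, 0 ≤ b e := by
    intro e; rw [hb]; have := ha0 e; split_ifs <;> positivity
  induction k using Nat.strong_induction_on with
  | _ k ih =>
  intro F hk ha1 hF
  rcases F.eq_empty_or_nonempty with rfl | ⟨e, he⟩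
  · simp only [powerset_empty, sum_empty, Real.exp_zero]
    rw [sum_filter, sum_singleton]
    simp
  have hz : ∀ (K : Finset Ω), (∀ e, τ e ∈ K ↔ e ∈ K) → ∀ x y, τ.SameCycle x y → (x ∈ K ↔ y ∈ K) := by
    intro K hK x y ⟨i, hi⟩
    rw [← hi]
    have hn : ∀ (n : ℕ) z, (τ ^ n) z ∈ K ↔ z ∈ K := by
      intro n
      induction n with
      | zero => simp
      | succ n ihn => intro z; rw [pow_succ', Equiv.Perm.mul_apply, hK, ihn]
    cases i with
    | ofNat n => simpa using (hn n x).symm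
    | negSucc n =>
      rw [zpow_negSucc]
      have := hn (n+1) ((τ ^ (n+1))⁻¹ x)
      rwa [← Equiv.Perm.mul_apply, mul_inv_cancel, Equiv.Perm.one_apply] at this
  have hac : ∀ x y, τ.SameCycle x y → a y = a x := by
    intro x y h
    have := hz (univ.filter (fun z => a z = a x)) (by intro e; simp [hinv]) x y h
    simpa using this
  set O : Finset Ω := univ.filter (fun z => τ.SameCycle e z) with hO
  have heO : e ∈ O := by simp [hO, Equiv.Perm.SameCycle.refl]
  have hOinv : ∀ z, τ z ∈ O ↔ z ∈ O := by intro z; simp [hO]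
  have hOF : O ⊆ F := by
    intro z hz'
    simp only [hO, mem_filter, mem_univ, true_and] at hz'
    exact (hz F hF _ _ hz').1 he
  have hF' : ∀ z, τ z ∈ F \ O ↔ z ∈ F \ O := by intro z; simp only [mem_sdiff, hF, hOinv]
  have hlt : (F \ O).card < k := by
    rw [← hk]
    exact card_lt_card (ssubset_iff_of_subset sdiff_subset |>.2 ⟨e, he, by simp [heO]⟩)
  have IH := ih _ hlt (F \ O) rfl (fun z hz => ha1 z (mem_sdiff.1 hz).1) hF'
  set S' := ∑ H ∈ (F \ O).powerset.filter (fun H => ∀ e, τ e ∈ H ↔ e ∈ H), ∏ e ∈ H, a e with hS'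
  have hS'0 : 0 ≤ S' := sum_nonneg (fun H _ => prod_nonneg (fun e _ => ha0 e))
  have hprodO : ∏ z ∈ O, a z ≤ b e := by
    have h1 : ∏ z ∈ O, a z = a e ^ O.card := by
      rw [← prod_const]
      apply prod_congr rfl
      intro z hz'
      simp only [hO, mem_filter, mem_univ, true_and] at hz'
      exact hac _ _ hz'
    have h2 : τ e ∈ O := (hOinv e).2 heO
    have h3 : τ (τ e) ∈ O := (hOinv _).2 h2
    rw [h1, hb]
    split_ifs with c1 c2
    · calc a e ^ O.card ≤ a e ^ 1 := pow_le_pow_of_le_one (ha0 e) (ha1 e he) (card_pos.2 ⟨e, heO⟩)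
        _ = a e := pow_one _
    · apply pow_le_pow_of_le_one (ha0 e) (ha1 e he)
      rw [← card_pair (Ne.symm c1)]
      apply card_le_card
      intro z; simp only [mem_insert, mem_singleton]; rintro (rfl | rfl) <;> assumption
    · apply pow_le_pow_of_le_one (ha0 e) (ha1 e he)
      have : ({e, τ e, τ (τ e)} : Finset Ω).card = 3 := by
        rw [card_eq_three]
        exact ⟨e, τ e, τ (τ e), Ne.symm c1, Ne.symm c2, fun h => c1 (τ.injective h).symm, rfl⟩
      rw [← this]
      apply card_le_card
      intro z; simp only [mem_insert, mem_singleton]; rintro (rfl | rfl | rfl) <;> assumption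
  set X := F.powerset.filter (fun H => ∀ e, τ e ∈ H ↔ e ∈ H) with hX
  have hsplit := sum_filter_add_sum_filter_not X (fun H => e ∈ H) (fun H => ∏ e ∈ H, a e)
  have hXO : ∀ H ∈ X, e ∈ H → O ⊆ H := by
    intro H hH heH z hz'
    simp only [hO, mem_filter, mem_univ, true_and] at hz'
    exact (hz H (mem_filter.1 hH).2 _ _ hz').1 heH
  have p1 : ∑ H ∈ X.filter (fun H => e ∈ H), ∏ e ∈ H, a e ≤ (∏ z ∈ O, a z) * S' := by
    have e1 : ∑ H ∈ X.filter (fun H => e ∈ H), ∏ e ∈ H, a e =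
        ∑ H ∈ X.filter (fun H => e ∈ H), (∏ z ∈ O, a z) * ∏ z ∈ H \ O, a z := by
      apply sum_congr rfl
      intro H hH
      rw [mem_filter] at hH
      rw [mul_comm, prod_sdiff (hXO H hH.1 hH.2)]
    rw [e1, ← mul_sum]
    apply mul_le_mul_of_nonneg_left _ (prod_nonneg (fun e _ => ha0 e))
    rw [← sum_image (f := fun K => ∏ z ∈ K, a z) (g := fun H => H \ O)]
    · apply sum_le_sum_of_subset_of_nonneg
      · intro K hK
        obtain ⟨H, hH, rfl⟩ := mem_image.1 hK
        rw [mem_filter, hX, mem_filter, mem_powerset] at hH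
        rw [mem_filter, mem_powerset]
        exact ⟨sdiff_subset_sdiff hH.1.1 le_rfl, by intro z; simp only [mem_sdiff, hH.1.2, hOinv]⟩
      · intro _ _ _; exact prod_nonneg (fun e _ => ha0 e)
    · intro H hH H' hH' h
      simp only [coe_filter, Set.mem_ofPred_eq] at hH hH'
      have h : H \ O = H' \ O := h
      rw [← sdiff_union_of_subset (hXO H hH.1 hH.2), ← sdiff_union_of_subset (hXO H' hH'.1 hH'.2), h]
  have p2 : ∑ H ∈ X.filter (fun H => e ∉ H), ∏ e ∈ H, a e ≤ S' := by
    apply sum_le_sum_of_subset_of_nonneg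
    · intro H hH
      rw [mem_filter, hX, mem_filter, mem_powerset] at hH
      rw [mem_filter, mem_powerset]
      refine ⟨?_, hH.1.2⟩
      intro z hzH
      rw [mem_sdiff]
      refine ⟨hH.1.1 hzH, ?_⟩
      intro hz'
      simp only [hO, mem_filter, mem_univ, true_and] at hz'
      exact hH.2 ((hz H hH.1.2 _ _ hz').2 hzH)
    · intro _ _ _; exact prod_nonneg (fun e _ => ha0 e)
  have hsum : b e + ∑ z ∈ F \ O, b z ≤ ∑ z ∈ F, b z := by
    rw [← sum_sdiff hOF, add_comm]
    gcongr
    exact single_le_sum (fun z _ => hb0 z) heO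
  calc ∑ H ∈ X, ∏ e ∈ H, a e ≤ (∏ z ∈ O, a z) * S' + S' := by rw [← hsplit]; linarith
    _ ≤ b e * S' + S' := by gcongr
    _ = (b e + 1) * S' := by ring
    _ ≤ Real.exp (b e) * Real.exp (∑ z ∈ F \ O, b z) := by
        gcongr
        exact Real.add_one_le_exp _
    _ = Real.exp (b e + ∑ z ∈ F \ O, b z) := by rw [Real.exp_add]
    _ ≤ _ := Real.exp_le_exp.2 hsum

/-- the action of a permutation on unordered pairs -/
def symPerm {V : Type*} (σ : Equiv.Perm V) : Equiv.Perm (Sym2 V) where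
  toFun := Sym2.map σ
  invFun := Sym2.map σ.symm
  left_inv e := by induction e with | _ a b; simp
  right_inv e := by induction e with | _ a b; simp

@[simp] theorem symPerm_mk {V : Type*} (σ : Equiv.Perm V) (a b : V) : symPerm σ s(a,b) = s(σ a, σ b) := rfl

open Classical in
noncomputable def fixG {V : Type*} [Fintype V] (d : ℕ) (σ : Equiv.Perm V) : Finset (SimpleGraph V) :=
  (regs V d).filter (fun G => ∀ a b, G.Adj (σ a) (σ b) ↔ G.Adj a b)

noncomputable def wt {V : Type*} [Fintype V] [DecidableEq V] (w : V → ℝ) (e : Sym2 V) : ℝ := ∏ v ∈ univ.filter (fun v => v ∈ e), w v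

theorem wt_mk {V : Type*} [Fintype V] [DecidableEq V] (w : V → ℝ) {a b : V} (h : a ≠ b) : wt w s(a,b) = w a * w b := by
  classical
  rw [wt]
  have : univ.filter (fun v => v ∈ s(a,b)) = {a, b} := by ext; simp
  rw [this, prod_pair h]

theorem wt_prod {V : Type*} [Fintype V] [DecidableEq V] {d : ℕ} {G : SimpleGraph V} (hG : G ∈ regs V d) (w : V → ℝ)
   (E : Finset (Sym2 V)) (hE : ∀ e, e ∈ E ↔ e ∈ G.edgeSet) :
   ∏ e ∈ E, wt w e = (∏ v, w v) ^ d := by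
  classical
  simp only [regs, mem_filter, mem_univ, true_and] at hG
  simp only [wt, prod_filter]
  rw [prod_comm, ← prod_pow]
  apply prod_congr rfl
  intro v _
  rw [← prod_filter, prod_const]
  congr 1
  rw [← hG v]
  symm
  apply card_bij (fun w _ => s(v, w))
  · intro x hx
    simp only [mem_filter, mem_univ, true_and] at hx
    simp [hE, hx]
  · intro x _ y _ h
    exact Sym2.congr_right.1 h
  · intro e he
    simp only [mem_filter, hE] at he
    obtain ⟨y, rfl⟩ := he.2
    exact ⟨y, by simpa using he.1, rfl⟩

/-- edges touching the support -/
noncomputable def touch {V : Type*} [Fintype V] (σ : Equiv.Perm V) : Finset (Sym2 V) := by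
  classical exact univ.filter (fun e => ¬ e.IsDiag ∧ ∃ u ∈ e, σ u ≠ u)

theorem fix_bound {V : Type*} [Fintype V] [DecidableEq V] {d : ℕ} (σ : Equiv.Perm V) (w : V → ℝ) (hw : ∀ v, 0 < w v)
   (hwσ : ∀ v, w (σ v) = w v) (hw1 : ∀ v, σ v = v → w v = 1) {p : ℝ} (hp : 0 ≤ p)
   (hN : ∀ H : Finset (Sym2 V), ((ncont d H).card : ℝ) ≤ (regs V d).card * p ^ H.card)
   (b : Sym2 V → ℝ) (hb : ∀ e, b e = if symPerm σ e = e then p * wt w e else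
     if symPerm σ (symPerm σ e) = e then (p * wt w e) ^ 2 else (p * wt w e) ^ 3)
   (h1 : ∀ e ∈ touch σ, p * wt w e ≤ 1) :
   ((fixG d σ).card : ℝ) * (∏ v, w v) ^ d ≤ (regs V d).card * Real.exp (∑ e ∈ touch σ, b e) := by
  classical
  have hwt0 : ∀ e, 0 < wt w e := fun e => prod_pos (fun v _ => hw v)
  have hinv : ∀ e, p * wt w (symPerm σ e) = p * wt w e := by
    intro e
    congr 1
    simp only [wt, prod_filter]
    rw [← Equiv.prod_comp σ]
    apply prod_congr rfl
    intro v _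
    have : σ v ∈ symPerm σ e ↔ v ∈ e := by
      induction e with | _ a b; simp
    simp only [this, hwσ]
  have hF : ∀ e, symPerm σ e ∈ touch σ ↔ e ∈ touch σ := by
    intro e
    induction e with | _ a b
    simp [touch]
  have main := inv_sum_le (symPerm σ) (fun e => p * wt w e) (fun e => mul_nonneg hp (hwt0 e).le) hinv b hb
    _ (touch σ) rfl h1 hF
  set Hof : SimpleGraph V → Finset (Sym2 V) := fun G => (touch σ).filter (fun e => e ∈ G.edgeSet) with hHof
  set X := (touch σ).powerset.filter (fun H => ∀ e, symPerm σ e ∈ H ↔ e ∈ H) with hX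
  have hmaps : ∀ G ∈ fixG d σ, Hof G ∈ X := by
    intro G hG
    rw [hX, mem_filter, mem_powerset]
    refine ⟨filter_subset _ _, ?_⟩
    intro e
    simp only [hHof, mem_filter, hF]
    induction e with | _ a b
    simp only [fixG, mem_filter] at hG
    simp [hG.2]
  have hprod : ∀ G ∈ fixG d σ, ∏ e ∈ Hof G, wt w e = (∏ v, w v) ^ d := by
    intro G hG
    simp only [fixG, mem_filter] at hG
    rw [← wt_prod hG.1 w (univ.filter (fun e => e ∈ G.edgeSet)) (by simp)]
    apply prod_subset
    · intro e; simp only [hHof, mem_filter, mem_univ, true_and]; exact fun h => h.2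
    · intro e he he'
      simp only [mem_filter, mem_univ, true_and] at he
      simp only [hHof, mem_filter, he, and_true, touch, mem_univ, true_and, not_and, not_exists] at he'
      have := he' (G.not_isDiag_of_mem_edgeSet he)
      push Not at this
      apply prod_eq_one
      intro v hv
      exact hw1 v (this v (mem_filter.1 hv).2)
  have hW : 0 < (∏ v, w v) ^ d := pow_pos (prod_pos (fun v _ => hw v)) d
  have hcard : ((fixG d σ).card : ℝ) ≤ ∑ H ∈ (fixG d σ).image Hof, ((ncont d H).card : ℝ) := by
    have : (fixG d σ) ⊆ ((fixG d σ).image Hof).biUnion (fun H => ncont d H) := by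
      intro G hG
      rw [mem_biUnion]
      refine ⟨Hof G, mem_image_of_mem _ hG, ?_⟩
      simp only [fixG, mem_filter] at hG
      simp only [ncont, mem_filter]
      exact ⟨hG.1, fun e he => (mem_filter.1 he).2⟩
    exact_mod_cast (card_le_card this).trans card_biUnion_le
  calc ((fixG d σ).card : ℝ) * (∏ v, w v) ^ d
      ≤ (∑ H ∈ (fixG d σ).image Hof, ((ncont d H).card : ℝ)) * (∏ v, w v) ^ d := by gcongr
    _ = ∑ H ∈ (fixG d σ).image Hof, ((ncont d H).card : ℝ) * (∏ v, w v) ^ d := by rw [sum_mul]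
    _ ≤ ∑ H ∈ (fixG d σ).image Hof, (regs V d).card * ∏ e ∈ H, (p * wt w e) := by
        apply sum_le_sum
        intro H hH
        obtain ⟨G, hG, rfl⟩ := mem_image.1 hH
        rw [prod_mul_distrib, prod_const, hprod G hG, ← mul_assoc]
        gcongr
        exact hN _
    _ = (regs V d).card * ∑ H ∈ (fixG d σ).image Hof, ∏ e ∈ H, (p * wt w e) := by rw [mul_sum]
    _ ≤ (regs V d).card * ∑ H ∈ X, ∏ e ∈ H, (p * wt w e) := by
        apply mul_le_mul_of_nonneg_left _ (Nat.cast_nonneg _)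
        apply sum_le_sum_of_subset_of_nonneg
        · intro H hH
          obtain ⟨G, hG, rfl⟩ := mem_image.1 hH
          exact hmaps G hG
        · intro H _ _
          exact prod_nonneg (fun e _ => mul_nonneg hp (hwt0 e).le)
    _ ≤ _ := by gcongr

theorem touch_sum {V : Type*} [Fintype V] [DecidableEq V] (σ : Equiv.Perm V) (b : Sym2 V → ℝ) (hb : ∀ e, 0 ≤ b e)
   (c : V → V → ℝ) (hc0 : ∀ u v, 0 ≤ c u v) (hc : ∀ u v, σ u ≠ u → u ≠ v → b s(u,v) ≤ c u v) (K : ℝ)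
   (hK : ∀ u, σ u ≠ u → ∑ v, c u v ≤ K) :
   ∑ e ∈ touch σ, b e ≤ K * σ.support.card := by
  classical
  set P : Finset (V × V) := univ.filter (fun q => σ q.1 ≠ q.1 ∧ q.1 ≠ q.2)
  have h1 : touch σ ⊆ P.image (fun q => s(q.1,q.2)) := by
    intro e he
    simp only [touch, mem_filter, mem_univ, true_and] at he
    obtain ⟨hd, u, hu, hσ⟩ := he
    obtain ⟨v, rfl⟩ := hu
    exact mem_image.2 ⟨(u,v), by simpa [P, hσ] using hd, rfl⟩
  calc ∑ e ∈ touch σ, b e ≤ ∑ e ∈ P.image (fun q => s(q.1,q.2)), b e :=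
        sum_le_sum_of_subset_of_nonneg h1 (fun _ _ _ => hb _)
    _ ≤ ∑ q ∈ P, b s(q.1,q.2) := by
        rw [← sum_fiberwise_of_maps_to (s := P) (t := P.image (fun q => s(q.1,q.2))) (g := fun q => s(q.1,q.2)) (fun q hq => mem_image_of_mem _ hq)]
        apply sum_le_sum
        intro e he
        obtain ⟨q, hq, rfl⟩ := mem_image.1 he
        exact single_le_sum (f := fun q : V × V => b s(q.1,q.2)) (fun _ _ => hb _) (mem_filter.2 ⟨hq, rfl⟩)
    _ ≤ ∑ q ∈ P, c q.1 q.2 := by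
        apply sum_le_sum
        intro q hq
        simp only [P, mem_filter, mem_univ, true_and] at hq
        exact hc _ _ hq.1 hq.2
    _ ≤ ∑ q ∈ σ.support ×ˢ univ, c q.1 q.2 := by
        apply sum_le_sum_of_subset_of_nonneg
        · intro q hq
          simp only [P, mem_filter, mem_univ, true_and] at hq
          simp [hq.1]
        · intro _ _ _; exact hc0 _ _
    _ = ∑ u ∈ σ.support, ∑ v, c u v := by rw [sum_product]
    _ ≤ ∑ u ∈ σ.support, K := by
        apply sum_le_sum
        intro u hu
        exact hK u (by simpa using hu)
    _ = _ := by rw [sum_const, nsmul_eq_mul, mul_comm]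

theorem fix_lt_cases {V : Type*} {σ : Equiv.Perm V} {u v : V} (hu : σ u ≠ u)
    (h : symPerm σ s(u,v) = s(u,v)) : v = σ u := by
  rw [symPerm_mk, Sym2.eq_iff] at h
  rcases h with h | h
  · exact absurd h.1 hu
  · exact h.1.symm

theorem caseA {V : Type*} [Fintype V] [DecidableEq V] {d : ℕ} (hd : 4 ≤ d) (σ : Equiv.Perm V) {p N : ℝ} (hp : 0 ≤ p)
   (hNV : N = Fintype.card V) (hN1 : 1 ≤ N) (hpN : p ≤ N ^ (-(99/100) : ℝ))
   (hN : ∀ H : Finset (Sym2 V), ((ncont d H).card : ℝ) ≤ (regs V d).card * p ^ H.card)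
   (hs : (σ.support.card : ℝ) ≤ N ^ (9/10 : ℝ)) :
   ((fixG d σ).card : ℝ) ≤ (regs V d).card * (Real.exp 3 * N ^ (-(108/100) : ℝ)) ^ σ.support.card := by
  have hN0 : 0 < N := by linarith
  set z : ℝ := N ^ (27/100 : ℝ) with hz
  have hz1 : 1 ≤ z := Real.one_le_rpow hN1 (by norm_num)
  set w : V → ℝ := fun v => if σ v = v then 1 else z with hw
  have hw0 : ∀ v, 0 < w v := by intro v; simp only [hw]; split_ifs <;> linarith
  have hwz : ∀ v, w v ≤ z := by intro v; simp only [hw]; split_ifs <;> linarith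
  have hwσ : ∀ v, w (σ v) = w v := by intro v; simp [hw]
  have hw1 : ∀ v, σ v = v → w v = 1 := by intro v h; simp [hw, h]
  have hpz2 : p * z * z ≤ N ^ (-(45/100) : ℝ) := by
    calc p * z * z ≤ N ^ (-(99/100) : ℝ) * z * z := by gcongr
      _ = _ := by rw [hz, ← Real.rpow_add hN0, ← Real.rpow_add hN0]; norm_num
  have hpz1 : p * z ≤ N ^ (-(72/100) : ℝ) := by
    calc p * z ≤ N ^ (-(99/100) : ℝ) * z := by gcongr
      _ = _ := by rw [hz, ← Real.rpow_add hN0]; norm_num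
  have hle1 : ∀ r : ℝ, r ≤ 0 → N ^ r ≤ 1 := fun r hr => Real.rpow_le_one_of_one_le_of_nonpos hN1 hr
  have hwt : ∀ u v, u ≠ v → p * wt w s(u,v) ≤ p * z * z := by
    intro u v huv
    rw [wt_mk w huv, mul_assoc]
    gcongr
    · exact hwz u
    · exact hwz v
  have hwt0 : ∀ e, 0 ≤ p * wt w e := fun e => mul_nonneg hp (prod_nonneg (fun v _ => (hw0 v).le))
  have hle : ∀ e ∈ touch σ, p * wt w e ≤ 1 := by
    intro e he
    induction e with | _ u v
    simp only [touch, mem_filter, mem_univ, true_and] at he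
    have huv : u ≠ v := by simpa using he.1
    exact (hwt u v huv).trans (hpz2.trans (hle1 _ (by norm_num)))
  set b : Sym2 V → ℝ := fun e => if symPerm σ e = e then p * wt w e else
     if symPerm σ (symPerm σ e) = e then (p * wt w e) ^ 2 else (p * wt w e) ^ 3 with hb
  have hb0 : ∀ e, 0 ≤ b e := by
    intro e; simp only [hb]; have := hwt0 e; split_ifs <;> positivity
  have key := fix_bound σ w hw0 hwσ hw1 hp hN b (fun _ => rfl) hle
  set c : V → V → ℝ := fun u v => (if v = σ u then 1 else 0) + (if σ v ≠ v then N ^ (-(9/10) : ℝ) else 0) + 1 / N with hc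
  have hc1 : ∀ u v, (0:ℝ) ≤ if v = σ u then 1 else 0 := by intro u v; split_ifs <;> norm_num
  have hc2 : ∀ v, (0:ℝ) ≤ if σ v ≠ v then N ^ (-(9/10) : ℝ) else 0 := by intro v; split_ifs <;> positivity
  have hc3 : 0 ≤ 1 / N := by positivity
  have hsum : ∑ e ∈ touch σ, b e ≤ 3 * σ.support.card := by
    apply touch_sum σ b hb0 c
    · intro u v; simp only [hc]; have := hc1 u v; have := hc2 v; linarith
    · intro u v hu huv
      have hin : s(u,v) ∈ touch σ := by
        simp only [touch, mem_filter, mem_univ, true_and]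
        exact ⟨by simpa using huv, u, by simp, hu⟩
      have ha1 := hle _ hin
      have ha0 := hwt0 s(u,v)
      by_cases hf : symPerm σ s(u,v) = s(u,v)
      · have hv := fix_lt_cases hu hf
        have : b s(u,v) ≤ 1 := by simp only [hb, hf, if_true]; exact ha1
        have e1 : (if v = σ u then (1:ℝ) else 0) = 1 := by simp [hv]
        simp only [hc, e1]
        have := hc2 v; linarith
      · have h2 : b s(u,v) ≤ (p * wt w s(u,v)) ^ 2 := by
          simp only [hb, hf, if_false]
          split_ifs
          · exact le_rfl
          · exact pow_le_pow_of_le_one ha0 ha1 (by norm_num)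
        by_cases hv : σ v = v
        · have h3 : p * wt w s(u,v) ≤ N ^ (-(72/100) : ℝ) := by
            rw [wt_mk w huv, hw1 v hv, mul_one]
            exact le_trans (by gcongr; exact hwz u) hpz1
          have h4 : (p * wt w s(u,v)) ^ 2 ≤ 1 / N := by
            calc (p * wt w s(u,v)) ^ 2 ≤ (N ^ (-(72/100) : ℝ)) ^ 2 := by gcongr
              _ = N ^ (-(144/100) : ℝ) := by rw [← Real.rpow_natCast, ← Real.rpow_mul hN0.le]; norm_num
              _ ≤ N ^ (-1 : ℝ) := Real.rpow_le_rpow_of_exponent_le hN1 (by norm_num)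
              _ = 1 / N := by rw [Real.rpow_neg_one, one_div]
          simp only [hc]; have := hc1 u v; have := hc2 v; linarith
        · have h3 : p * wt w s(u,v) ≤ N ^ (-(45/100) : ℝ) := (hwt u v huv).trans hpz2
          have h4 : (p * wt w s(u,v)) ^ 2 ≤ N ^ (-(9/10) : ℝ) := by
            calc (p * wt w s(u,v)) ^ 2 ≤ (N ^ (-(45/100) : ℝ)) ^ 2 := by gcongr
              _ = N ^ (-(9/10) : ℝ) := by rw [← Real.rpow_natCast, ← Real.rpow_mul hN0.le]; norm_num
          have e1 : (if σ v ≠ v then N ^ (-(9/10) : ℝ) else 0) = N ^ (-(9/10) : ℝ) := by simp [hv]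
          simp only [hc, e1]; have := hc1 u v; linarith
    · intro u hu
      simp only [hc, sum_add_distrib]
      have e1 : ∑ v, (if v = σ u then (1:ℝ) else 0) = 1 := by simp
      have e2 : ∑ v, (if σ v ≠ v then N ^ (-(9/10) : ℝ) else 0) ≤ 1 := by
        rw [← sum_filter, sum_const, nsmul_eq_mul]
        have : (univ.filter (fun v => σ v ≠ v)).card = σ.support.card := by
          congr 1
        rw [this]
        calc (σ.support.card : ℝ) * N ^ (-(9/10) : ℝ) ≤ N ^ (9/10:ℝ) * N ^ (-(9/10) : ℝ) := by gcongr
          _ = 1 := by rw [← Real.rpow_add hN0]; norm_num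
      have e3 : ∑ v : V, 1 / N = 1 := by
        rw [sum_const, card_univ, nsmul_eq_mul, ← hNV]; field_simp
      rw [e1, e3]; linarith
  have hprod : ∏ v, w v = z ^ σ.support.card := by
    rw [← prod_const]
    simp only [hw]
    rw [prod_ite]
    simp only [prod_const_one, one_mul]
    congr 1
  rw [hprod] at key
  have hfin : ((fixG d σ).card : ℝ) * (z ^ 4) ^ σ.support.card ≤ (regs V d).card * (Real.exp 3) ^ σ.support.card := by
    calc ((fixG d σ).card : ℝ) * (z ^ 4) ^ σ.support.card = ((fixG d σ).card : ℝ) * (z ^ σ.support.card) ^ 4 := by ring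
      _ ≤ ((fixG d σ).card : ℝ) * (z ^ σ.support.card) ^ d := by
          gcongr
          exact one_le_pow₀ hz1
      _ ≤ _ := key
      _ ≤ (regs V d).card * Real.exp (3 * σ.support.card) := by gcongr
      _ = _ := by rw [mul_comm (3:ℝ), Real.exp_nat_mul]
  have hz4 : (z ^ 4) * N ^ (-(108/100) : ℝ) = 1 := by
    rw [hz, ← Real.rpow_natCast, ← Real.rpow_mul hN0.le, ← Real.rpow_add hN0]; norm_num
  calc ((fixG d σ).card : ℝ) = ((fixG d σ).card : ℝ) * (z ^ 4) ^ σ.support.card * (N ^ (-(108/100) : ℝ)) ^ σ.support.card := by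
        rw [mul_assoc, ← mul_pow, hz4, one_pow, mul_one]
    _ ≤ (regs V d).card * (Real.exp 3) ^ σ.support.card * (N ^ (-(108/100) : ℝ)) ^ σ.support.card := by gcongr
    _ = _ := by rw [mul_pow]; ring

theorem caseB {V : Type*} [Fintype V] [DecidableEq V] {d : ℕ} (hd : 4 ≤ d) (σ : Equiv.Perm V) {p N : ℝ} (hp : 0 ≤ p)
   (hNV : N = Fintype.card V) (hN1 : 1 ≤ N) (hpN : p ≤ N ^ (-(99/100) : ℝ))
   (hN : ∀ H : Finset (Sym2 V), ((ncont d H).card : ℝ) ≤ (regs V d).card * p ^ H.card)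
   (k : ℕ) (hk : 2 * k = (univ.filter (fun v => σ (σ v) = v ∧ σ v ≠ v)).card + 2 * (univ.filter (fun v => σ (σ v) ≠ v)).card) :
   ((fixG d σ).card : ℝ) ≤ (regs V d).card * (Real.exp 6 * N ^ (-(12/10) : ℝ)) ^ k ∧ σ.support.card ≤ 2 * k := by
  have hN0 : 0 < N := by linarith
  set z : ℝ := N ^ (15/100 : ℝ) with hz
  have hz1 : 1 ≤ z := Real.one_le_rpow hN1 (by norm_num)
  have hz2 : z ≤ z ^ 2 := by nlinarith
  set w : V → ℝ := fun v => if σ (σ v) = v then (if σ v = v then 1 else z) else z ^ 2 with hw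
  have hw0 : ∀ v, 0 < w v := by intro v; simp only [hw]; split_ifs <;> first | linarith | positivity
  have hwz : ∀ v, w v ≤ z ^ 2 := by intro v; simp only [hw]; split_ifs <;> linarith
  have hwz1 : ∀ v, σ (σ v) = v → w v ≤ z := by intro v h; simp only [hw, h, if_true]; split_ifs <;> linarith
  have hwσ : ∀ v, w (σ v) = w v := by intro v; simp [hw]
  have hw1 : ∀ v, σ v = v → w v = 1 := by intro v h; simp [hw, h]
  have hpz4 : p * z ^ 2 * z ^ 2 ≤ N ^ (-(39/100) : ℝ) := by
    calc p * z ^ 2 * z ^ 2 ≤ N ^ (-(99/100) : ℝ) * z ^ 2 * z ^ 2 := by gcongr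
      _ = _ := by rw [hz, ← Real.rpow_natCast, ← Real.rpow_mul hN0.le, ← Real.rpow_add hN0, ← Real.rpow_add hN0]; norm_num
  have hpz2 : p * z * z ≤ N ^ (-(69/100) : ℝ) := by
    calc p * z * z ≤ N ^ (-(99/100) : ℝ) * z * z := by gcongr
      _ = _ := by rw [hz, ← Real.rpow_add hN0, ← Real.rpow_add hN0]; norm_num
  have hle1 : ∀ r : ℝ, r ≤ 0 → N ^ r ≤ 1 := fun r hr => Real.rpow_le_one_of_one_le_of_nonpos hN1 hr
  have hwt : ∀ u v, u ≠ v → p * wt w s(u,v) ≤ p * z ^ 2 * z ^ 2 := by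
    intro u v huv
    rw [wt_mk w huv, mul_assoc]
    gcongr
    · exact hwz u
    · exact hwz v
  have hwt0 : ∀ e, 0 ≤ p * wt w e := fun e => mul_nonneg hp (prod_nonneg (fun v _ => (hw0 v).le))
  have hle : ∀ e ∈ touch σ, p * wt w e ≤ 1 := by
    intro e he
    induction e with | _ u v
    simp only [touch, mem_filter, mem_univ, true_and] at he
    have huv : u ≠ v := by simpa using he.1
    exact (hwt u v huv).trans (hpz4.trans (hle1 _ (by norm_num)))
  set b : Sym2 V → ℝ := fun e => if symPerm σ e = e then p * wt w e else
     if symPerm σ (symPerm σ e) = e then (p * wt w e) ^ 2 else (p * wt w e) ^ 3 with hb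
  have hb0 : ∀ e, 0 ≤ b e := by
    intro e; simp only [hb]; have := hwt0 e; split_ifs <;> positivity
  have key := fix_bound σ w hw0 hwσ hw1 hp hN b (fun _ => rfl) hle
  set c : V → V → ℝ := fun u v => (if v = σ u then 1 else 0) + (if v = σ (σ u) then 1 else 0) + 1 / N with hc
  have hc1 : ∀ u v, (0:ℝ) ≤ if v = σ u then 1 else 0 := by intro u v; split_ifs <;> norm_num
  have hc2 : ∀ u v, (0:ℝ) ≤ if v = σ (σ u) then 1 else 0 := by intro u v; split_ifs <;> norm_num
  have hc3 : 0 ≤ 1 / N := by positivity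
  have hsum : ∑ e ∈ touch σ, b e ≤ 3 * σ.support.card := by
    apply touch_sum σ b hb0 c
    · intro u v; simp only [hc]; have := hc1 u v; have := hc2 u v; linarith
    · intro u v hu huv
      have hin : s(u,v) ∈ touch σ := by
        simp only [touch, mem_filter, mem_univ, true_and]
        exact ⟨by simpa using huv, u, by simp, hu⟩
      have ha1 := hle _ hin
      have ha0 := hwt0 s(u,v)
      have k1 := hc1 u v
      have k2 := hc2 u v
      by_cases hf : symPerm σ s(u,v) = s(u,v)
      · have hv := fix_lt_cases hu hf
        have : b s(u,v) ≤ 1 := by simp only [hb, hf, if_true]; exact ha1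
        have e1 : (if v = σ u then (1:ℝ) else 0) = 1 := by simp [hv]
        simp only [hc, e1]
        linarith
      by_cases hf2 : symPerm σ (symPerm σ s(u,v)) = s(u,v)
      · have h2 : b s(u,v) = (p * wt w s(u,v)) ^ 2 := by
          simp only [hb, hf, hf2, if_false, if_true]
        rw [symPerm_mk, symPerm_mk, Sym2.eq_iff] at hf2
        rcases hf2 with h | h
        · have h3 : p * wt w s(u,v) ≤ N ^ (-(69/100) : ℝ) := by
            rw [wt_mk w huv, ← mul_assoc]
            refine le_trans ?_ hpz2
            gcongr
            · exact hwz1 u h.1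
            · exact hwz1 v h.2
          have h4 : (p * wt w s(u,v)) ^ 2 ≤ 1 / N := by
            calc (p * wt w s(u,v)) ^ 2 ≤ (N ^ (-(69/100) : ℝ)) ^ 2 := by gcongr
              _ = N ^ (-(138/100) : ℝ) := by rw [← Real.rpow_natCast, ← Real.rpow_mul hN0.le]; norm_num
              _ ≤ N ^ (-1 : ℝ) := Real.rpow_le_rpow_of_exponent_le hN1 (by norm_num)
              _ = 1 / N := by rw [Real.rpow_neg_one, one_div]
          simp only [hc]; linarith
        · have : b s(u,v) ≤ 1 := by rw [h2]; exact pow_le_one₀ ha0 ha1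
          have e1 : (if v = σ (σ u) then (1:ℝ) else 0) = 1 := by simp [h.1]
          simp only [hc, e1]; linarith
      · have h2 : b s(u,v) = (p * wt w s(u,v)) ^ 3 := by
          simp only [hb, hf, hf2, if_false]
        have h3 : p * wt w s(u,v) ≤ N ^ (-(39/100) : ℝ) := (hwt u v huv).trans hpz4
        have h4 : (p * wt w s(u,v)) ^ 3 ≤ 1 / N := by
          calc (p * wt w s(u,v)) ^ 3 ≤ (N ^ (-(39/100) : ℝ)) ^ 3 := by gcongr
            _ = N ^ (-(117/100) : ℝ) := by rw [← Real.rpow_natCast, ← Real.rpow_mul hN0.le]; norm_num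
            _ ≤ N ^ (-1 : ℝ) := Real.rpow_le_rpow_of_exponent_le hN1 (by norm_num)
            _ = 1 / N := by rw [Real.rpow_neg_one, one_div]
        simp only [hc]; linarith
    · intro u hu
      simp only [hc, sum_add_distrib]
      have e1 : ∑ v, (if v = σ u then (1:ℝ) else 0) = 1 := by simp
      have e2 : ∑ v, (if v = σ (σ u) then (1:ℝ) else 0) = 1 := by simp
      have e3 : ∑ v : V, 1 / N = 1 := by
        rw [sum_const, card_univ, nsmul_eq_mul, ← hNV]; field_simp
      rw [e1, e2, e3]; linarith
  have hprod : ∏ v, w v = z ^ (2 * k) := by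
    simp only [hw]
    rw [prod_ite, prod_ite]
    simp only [prod_const_one, one_mul, prod_const, filter_filter]
    rw [hk, pow_add, ← pow_mul]
  have hsupp : σ.support.card ≤ 2 * k := by
    have : σ.support ⊆ (univ.filter (fun v => σ (σ v) = v ∧ σ v ≠ v)) ∪ (univ.filter (fun v => σ (σ v) ≠ v)) := by
      intro v hv
      simp only [Equiv.Perm.mem_support] at hv
      by_cases h : σ (σ v) = v <;> simp [h, hv]
    have h1 := (card_le_card this).trans (card_union_le _ _)
    omega
  refine ⟨?_, hsupp⟩
  rw [hprod] at key
  have hfin : ((fixG d σ).card : ℝ) * (z ^ 8) ^ k ≤ (regs V d).card * (Real.exp 6) ^ k := by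
    calc ((fixG d σ).card : ℝ) * (z ^ 8) ^ k = ((fixG d σ).card : ℝ) * (z ^ (2 * k)) ^ 4 := by ring
      _ ≤ ((fixG d σ).card : ℝ) * (z ^ (2 * k)) ^ d := by
          gcongr
          exact one_le_pow₀ hz1
      _ ≤ _ := key
      _ ≤ (regs V d).card * Real.exp (k * 6) := by
          gcongr
          have : (σ.support.card : ℝ) ≤ 2 * k := by exact_mod_cast hsupp
          linarith
      _ = _ := by rw [Real.exp_nat_mul]
  have hz8 : (z ^ 8) * N ^ (-(12/10) : ℝ) = 1 := by
    rw [hz, ← Real.rpow_natCast, ← Real.rpow_mul hN0.le, ← Real.rpow_add hN0]; norm_num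
  calc ((fixG d σ).card : ℝ) = ((fixG d σ).card : ℝ) * (z ^ 8) ^ k * (N ^ (-(12/10) : ℝ)) ^ k := by
        rw [mul_assoc, ← mul_pow, hz8, one_pow, mul_one]
    _ ≤ (regs V d).card * (Real.exp 6) ^ k * (N ^ (-(12/10) : ℝ)) ^ k := by gcongr
    _ = _ := by rw [mul_pow]; ring

/-- sum over small-support permutations -/
theorem perm_sum_small {V : Type*} [Fintype V] [DecidableEq V] (q : ℝ) (hq : 0 ≤ q) (hq2 : Fintype.card V * q ≤ 1/2) :
    ∑ σ ∈ (univ : Finset (Equiv.Perm V)).erase 1, q ^ σ.support.card ≤ 2 * (Fintype.card V * q) := by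
  set n := Fintype.card V with hn
  have hcount : ∀ S : Finset V, ((univ.filter (fun σ : Equiv.Perm V => σ.support = S)).card : ℝ) ≤ (S.card).factorial := by
    intro S
    have h1 : (univ.filter (fun σ : Equiv.Perm V => σ.support = S)).card ≤ Fintype.card {f : Equiv.Perm V // ∀ a, ¬ a ∈ S → f a = a} := by
      rw [Fintype.card_subtype]
      apply card_le_card
      intro σ hσ
      simp only [mem_filter, mem_univ, true_and] at hσ ⊢
      intro a ha
      rw [← hσ] at ha
      simpa using ha
    rw [← Fintype.card_congr (Equiv.Perm.subtypeEquivSubtypePerm (fun a => a ∈ S)), Fintype.card_perm, Fintype.card_coe] at h1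
    exact_mod_cast h1
  have h1 : ∑ σ ∈ (univ : Finset (Equiv.Perm V)).erase 1, q ^ σ.support.card
      = ∑ S ∈ (univ : Finset V).powerset.erase ∅, ∑ σ ∈ ((univ : Finset (Equiv.Perm V)).erase 1).filter (fun σ => σ.support = S), q ^ σ.support.card := by
    symm
    apply sum_fiberwise_of_maps_to
    intro σ hσ
    simpa using hσ
  have h2 : ∀ S ∈ (univ : Finset V).powerset.erase ∅, ∑ σ ∈ ((univ : Finset (Equiv.Perm V)).erase 1).filter (fun σ => σ.support = S), q ^ σ.support.card
      ≤ (S.card).factorial * q ^ S.card := by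
    intro S _
    calc _ = ∑ σ ∈ ((univ : Finset (Equiv.Perm V)).erase 1).filter (fun σ => σ.support = S), q ^ S.card := by
            apply sum_congr rfl
            intro σ hσ
            rw [(mem_filter.1 hσ).2]
      _ = ((((univ : Finset (Equiv.Perm V)).erase 1).filter (fun σ => σ.support = S)).card : ℝ) * q ^ S.card := by
            rw [sum_const, nsmul_eq_mul]
      _ ≤ ((univ.filter (fun σ : Equiv.Perm V => σ.support = S)).card : ℝ) * q ^ S.card := by
            gcongr
            exact erase_subset _ _
      _ ≤ _ := by gcongr; exact_mod_cast hcount S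
  have h3 : ∑ S ∈ (univ : Finset V).powerset, ((S.card).factorial * q ^ S.card : ℝ) =
      ∑ m ∈ range (n + 1), (n.choose m) • (m.factorial * q ^ m : ℝ) := by
    rw [sum_powerset_apply_card (fun m => (m.factorial * q ^ m : ℝ)), card_univ]
  have h4 : ∑ S ∈ (univ : Finset V).powerset.erase ∅, ((S.card).factorial * q ^ S.card : ℝ) =
      ∑ S ∈ (univ : Finset V).powerset, ((S.card).factorial * q ^ S.card : ℝ) - 1 := by
    have h := sum_erase_add (univ : Finset V).powerset (fun S => ((S.card).factorial * q ^ S.card : ℝ)) (a := ∅) (empty_mem_powerset _)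
    rw [← h]
    simp only [card_empty, Nat.factorial_zero, pow_zero, Nat.cast_one, mul_one, add_sub_cancel_right]
  rw [h1]
  refine (sum_le_sum h2).trans ?_
  rw [h4, h3, sum_range_succ']
  simp only [Nat.choose_zero_right, Nat.factorial_zero, pow_zero, one_smul, Nat.cast_one, mul_one, add_sub_cancel_right]
  set x : ℝ := n * q with hx
  have hx0 : 0 ≤ x := by positivity
  have h5 : ∀ m ∈ range n, (n.choose (m+1)) • ((m+1).factorial * q ^ (m+1) : ℝ) ≤ x * (1/2) ^ m := by
    intro m _
    have : ((n.choose (m+1) * (m+1).factorial : ℕ) : ℝ) ≤ (n:ℝ) ^ (m+1) := by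
      have : n.choose (m+1) * (m+1).factorial ≤ n ^ (m+1) := by
        rw [mul_comm, ← Nat.descFactorial_eq_factorial_mul_choose]
        exact Nat.descFactorial_le_pow _ _
      exact_mod_cast this
    rw [nsmul_eq_mul]
    calc _ = ((n.choose (m+1) * (m+1).factorial : ℕ) : ℝ) * q ^ (m+1) := by push_cast; ring
      _ ≤ (n:ℝ) ^ (m+1) * q ^ (m+1) := by gcongr
      _ = x * x ^ m := by rw [hx, ← mul_pow, pow_succ']
      _ ≤ _ := by gcongr
  refine (sum_le_sum h5).trans ?_
  rw [← mul_sum]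
  have := (summable_geometric_two).sum_le_tsum (range n) (fun i _ => by positivity)
  rw [tsum_geometric_two] at this
  nlinarith

/-- the encoding domain -/
def encDom {n : ℕ} (σ : Equiv.Perm (Fin n)) (v : Fin n) : Prop := σ (σ v) ≠ v ∨ v < σ v

instance {n : ℕ} (σ : Equiv.Perm (Fin n)) : DecidablePred (encDom σ) := fun v => by unfold encDom; infer_instance

def enc {n : ℕ} (σ : Equiv.Perm (Fin n)) (v : Fin n) : Option (Fin n) := if encDom σ v then some (σ v) else none

theorem enc_aux {n : ℕ} {σ σ' : Equiv.Perm (Fin n)} (h : enc σ = enc σ') (v : Fin n) (hv : σ v ≠ v) : σ v = σ' v := by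
  have hdom : ∀ v, encDom σ v → encDom σ' v ∧ σ v = σ' v := by
    intro v hv
    have := congrFun h v
    simp only [enc, hv, if_true] at this
    split_ifs at this with h2
    exact ⟨h2, by simpa using this⟩
  have hdom' : ∀ v, encDom σ' v → encDom σ v := by
    intro v hv
    have := congrFun h v
    simp only [enc, hv, if_true] at this
    split_ifs at this with h2
    exact h2
  by_cases hA : encDom σ v
  · exact (hdom v hA).2
  · have hA' : ¬ encDom σ' v := fun h => hA (hdom' v h)
    simp only [encDom, not_or, not_not, not_lt] at hA hA'
    have hlt : σ v < v := lt_of_le_of_ne hA.2 hv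
    have : encDom σ (σ v) := Or.inr (by rw [hA.1]; exact hlt)
    have h2 := (hdom _ this).2
    rw [hA.1] at h2
    have h3 : σ' (σ v) = σ' (σ' v) := by rw [hA'.1, ← h2]
    exact σ'.injective h3

theorem enc_inj {n : ℕ} : Function.Injective (enc : Equiv.Perm (Fin n) → Fin n → Option (Fin n)) := by
  intro σ σ' h
  ext v
  by_cases h1 : σ v = v
  · by_cases h2 : σ' v = v
    · rw [h1, h2]
    · rw [enc_aux h.symm v h2]
  · rw [enc_aux h v h1]

theorem enc_card {n : ℕ} (σ : Equiv.Perm (Fin n)) :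
   2 * (univ.filter (encDom σ)).card = (univ.filter (fun v => σ (σ v) = v ∧ σ v ≠ v)).card + 2 * (univ.filter (fun v => σ (σ v) ≠ v)).card := by
  have h1 : (univ.filter (encDom σ)).card = (univ.filter (fun v => σ (σ v) = v ∧ v < σ v)).card + (univ.filter (fun v => σ (σ v) ≠ v)).card := by
    rw [← card_union_of_disjoint]
    · congr 1; ext v; simp only [encDom, mem_filter, mem_univ, true_and, mem_union]; tauto
    · rw [disjoint_left]; intro v; simp only [mem_filter, mem_univ, true_and]; tauto
  have h2 : (univ.filter (fun v => σ (σ v) = v ∧ σ v ≠ v)).card = (univ.filter (fun v => σ (σ v) = v ∧ v < σ v)).card + (univ.filter (fun v => σ (σ v) = v ∧ σ v < v)).card := by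
    rw [← card_union_of_disjoint]
    · congr 1; ext v; simp only [mem_filter, mem_univ, true_and, mem_union]
      constructor
      · rintro ⟨a, b⟩; rcases lt_or_gt_of_ne b with h | h <;> tauto
      · rintro (⟨a, b⟩ | ⟨a, b⟩)
        · exact ⟨a, b.ne'⟩
        · exact ⟨a, b.ne⟩
    · rw [disjoint_left]; intro v; simp only [mem_filter, mem_univ, true_and]
      rintro ⟨_, h⟩ ⟨_, h'⟩; exact lt_asymm h h'
  have h3 : (univ.filter (fun v => σ (σ v) = v ∧ v < σ v)).card = (univ.filter (fun v => σ (σ v) = v ∧ σ v < v)).card := by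
    apply card_bij (fun v _ => σ v)
    · intro v hv
      simp only [mem_filter, mem_univ, true_and] at hv ⊢
      rw [hv.1]; exact ⟨rfl, hv.2⟩
    · intro a _ b _ h; exact σ.injective h
    · intro v hv
      simp only [mem_filter, mem_univ, true_and] at hv
      exact ⟨σ v, by simp only [mem_filter, mem_univ, true_and]; rw [hv.1]; exact ⟨rfl, hv.2⟩, hv.1⟩
  omega

theorem enc_sum {n : ℕ} (q : ℝ) (hq : 0 ≤ q) :
   ∑ σ : Equiv.Perm (Fin n), q ^ (univ.filter (encDom σ)).card ≤ (1 + n * q) ^ n := by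
  set g : Option (Fin n) → ℝ := fun o => if o.isSome then q else 1 with hg
  have hg0 : ∀ o, 0 ≤ g o := by intro o; simp only [hg]; split_ifs <;> linarith
  have h1 : ∀ σ : Equiv.Perm (Fin n), q ^ (univ.filter (encDom σ)).card = ∏ v, g (enc σ v) := by
    intro σ
    rw [← prod_const, prod_filter]
    apply prod_congr rfl
    intro v _
    simp only [hg, enc]
    split_ifs <;> simp_all
  calc _ = ∑ σ : Equiv.Perm (Fin n), ∏ v, g (enc σ v) := sum_congr rfl (fun σ _ => h1 σ)
    _ = ∑ f ∈ univ.image (enc : Equiv.Perm (Fin n) → _), ∏ v, g (f v) := by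
        rw [sum_image (fun a _ b _ h => enc_inj h)]
    _ ≤ ∑ f : Fin n → Option (Fin n), ∏ v, g (f v) := by
        apply sum_le_sum_of_subset_of_nonneg (subset_univ _)
        intro f _ _; exact prod_nonneg (fun v _ => hg0 _)
    _ = ∏ v : Fin n, ∑ o, g o := by
        rw [prod_univ_sum]; simp
    _ = _ := by
        rw [prod_const, card_univ, Fintype.card_fin, Fintype.sum_option]
        simp [hg]

/-- bound for nontrivial automorphisms -/
noncomputable def delt (N : ℝ) : ℝ := 2 * (Real.exp 3 * N ^ (-(8/100) : ℝ)) +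
  Real.exp (Real.exp 6 * N ^ (9/10 : ℝ) - (1/20) * N ^ (9/10 : ℝ) * Real.log N)

theorem aut_bound {n d : ℕ} (hd : 4 ≤ d) {p : ℝ} (hp : 0 ≤ p) (hn1 : 1 ≤ n)
   (hpN : p ≤ (n:ℝ) ^ (-(99/100) : ℝ))
   (hN : ∀ H : Finset (Sym2 (Fin n)), ((ncont d H).card : ℝ) ≤ (regs (Fin n) d).card * p ^ H.card)
   (hbig : Real.exp 3 * (n:ℝ) ^ (-(8/100) : ℝ) ≤ 1/2) :
   ∑ σ : Equiv.Perm (Fin n), ((fixG d σ).card : ℝ) ≤ (regs (Fin n) d).card * (1 + delt (n:ℝ)) := by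
  set N : ℝ := (Nat.cast n : ℝ) with hNdef
  have hN1 : 1 ≤ N := by rw [hNdef]; exact_mod_cast hn1
  have hN0 : 0 < N := by linarith
  have hNV : N = Fintype.card (Fin n) := by simp [hNdef]
  set R : ℝ := (Nat.cast (regs (Fin n) d).card : ℝ) with hR
  have hR0 : 0 ≤ R := by positivity
  set q1 : ℝ := Real.exp 3 * N ^ (-(108/100) : ℝ) with hq1
  set Q : ℝ := Real.exp 6 * N ^ (-(12/10) : ℝ) with hQ
  set t : ℝ := N ^ (1/10 : ℝ) with ht
  set a0 : ℝ := N ^ (9/10 : ℝ) / 2 with ha0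
  have ht1 : 1 ≤ t := Real.one_le_rpow hN1 (by norm_num)
  have hQ0 : 0 ≤ Q := by positivity
  have each : ∀ σ : Equiv.Perm (Fin n), ((fixG d σ).card : ℝ) ≤
      R * (q1 ^ σ.support.card + t ^ (-a0) * (t * Q) ^ (univ.filter (encDom σ)).card) := by
    intro σ
    by_cases hs : (σ.support.card : ℝ) ≤ N ^ (9/10 : ℝ)
    · refine (caseA hd σ hp hNV hN1 hpN hN hs).trans ?_
      apply mul_le_mul_of_nonneg_left _ hR0
      have : 0 ≤ t ^ (-a0) * (t * Q) ^ (univ.filter (encDom σ)).card := by positivity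
      rw [← hq1]
      linarith
    · obtain ⟨h1, h2⟩ := caseB hd σ hp hNV hN1 hpN hN _ (enc_card σ)
      refine h1.trans ?_
      apply mul_le_mul_of_nonneg_left _ hR0
      have h3 : 0 ≤ q1 ^ σ.support.card := by positivity
      set k := (univ.filter (encDom σ)).card
      have h4 : a0 ≤ k := by
        push Not at hs
        have : (σ.support.card : ℝ) ≤ 2 * k := by exact_mod_cast h2
        rw [ha0]; linarith
      have h5 : 1 ≤ t ^ (-a0) * t ^ k := by
        rw [← Real.rpow_natCast, ← Real.rpow_add (by linarith)]
        exact Real.one_le_rpow ht1 (by linarith)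
      have h6 : 0 ≤ Q ^ k := by positivity
      rw [← hQ, mul_pow t, ← mul_assoc]
      nlinarith
  have hone : ((fixG d (1 : Equiv.Perm (Fin n))).card : ℝ) = R := by
    rw [hR]; congr 2; simp [fixG]
  have hx : Fintype.card (Fin n) * q1 = Real.exp 3 * N ^ (-(8/100) : ℝ) := by
    have h : N * N ^ (-(108/100) : ℝ) = N ^ (-(8/100) : ℝ) := by
      nth_rewrite 1 [← Real.rpow_one N]
      rw [← Real.rpow_add hN0]; norm_num
    rw [← hNV, hq1, ← h]; ring
  have s1 := perm_sum_small (V := Fin n) q1 (by positivity) (by rw [hx]; exact hbig)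
  rw [hx] at s1
  have s2 := enc_sum (n := n) (t * Q) (by positivity)
  have s3 : t ^ (-a0) * (1 + n * (t * Q)) ^ n ≤ Real.exp (Real.exp 6 * N ^ (9/10 : ℝ) - (1/20) * N ^ (9/10 : ℝ) * Real.log N) := by
    have e1 : (1 + n * (t * Q)) ^ n ≤ Real.exp (Real.exp 6 * N ^ (9/10 : ℝ)) := by
      calc (1 + n * (t * Q)) ^ n ≤ (Real.exp (n * (t * Q))) ^ n := by
            gcongr
            have := Real.add_one_le_exp (n * (t * Q)); linarith
        _ = Real.exp (n * (n * (t * Q))) := by rw [← Real.exp_nat_mul]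
        _ = _ := by
            congr 1
            have h : N * N * N ^ (1/10:ℝ) * N ^ (-(12/10) : ℝ) = N ^ (9/10 : ℝ) := by
              have h1 : N * N = N ^ (2:ℝ) := by rw [← sq]; norm_cast
              rw [h1, ← Real.rpow_add hN0, ← Real.rpow_add hN0]; norm_num
            rw [← h, ht, hQ]; ring
    have e2 : t ^ (-a0) = Real.exp (-((1/20) * N ^ (9/10 : ℝ) * Real.log N)) := by
      rw [ht, ← Real.rpow_mul hN0.le, Real.rpow_def_of_pos hN0]
      congr 1; rw [ha0]; ring
    rw [e2, sub_eq_add_neg, Real.exp_add, mul_comm]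
    exact mul_le_mul_of_nonneg_right e1 (Real.exp_pos _).le
  rw [← sum_erase_add univ _ (mem_univ (1 : Equiv.Perm (Fin n))), hone]
  have s4 : ∑ σ ∈ (univ : Finset (Equiv.Perm (Fin n))).erase 1, ((fixG d σ).card : ℝ) ≤
     R * (∑ σ ∈ (univ : Finset (Equiv.Perm (Fin n))).erase 1, q1 ^ σ.support.card +
       t ^ (-a0) * ∑ σ : Equiv.Perm (Fin n), (t * Q) ^ (univ.filter (encDom σ)).card) := by
    refine (sum_le_sum (fun σ _ => each σ)).trans ?_
    rw [← mul_sum, sum_add_distrib, ← mul_sum]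
    gcongr
    exact erase_subset _ _
  have s5 : t ^ (-a0) * ∑ σ : Equiv.Perm (Fin n), (t * Q) ^ (univ.filter (encDom σ)).card ≤ t ^ (-a0) * (1 + n * (t * Q)) ^ n := by
    gcongr
  have s6 := mul_le_mul_of_nonneg_left (add_le_add s1 (s5.trans s3)) hR0
  rw [delt]
  linarith

theorem mem_regs_iff {V : Type*} [Fintype V] [DecidableEq V] {d : ℕ} {G : SimpleGraph V} :
    G ∈ regs V d ↔ ∀ v, Nat.card (G.neighborSet v) = d := by
  classical
  unfold regs
  simp only [mem_filter, mem_univ, true_and]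
  apply forall_congr'
  intro v
  have : (univ.filter (fun w => G.Adj v w)).card = Nat.card (G.neighborSet v) := by
    rw [Nat.card_eq_fintype_card, ← Set.toFinset_card]
    congr 1; ext w; simp
  rw [this]

theorem mem_fixG {V : Type*} [Fintype V] {d : ℕ} {σ : Equiv.Perm V} {G : SimpleGraph V} :
    G ∈ fixG d σ ↔ G ∈ regs V d ∧ ∀ a b, G.Adj (σ a) (σ b) ↔ G.Adj a b := by
  classical
  unfold fixG; exact mem_filter

theorem comap_mem_regs {V : Type*} [Fintype V] [DecidableEq V] {d : ℕ} {G : SimpleGraph V} (h : G ∈ regs V d) (σ : Equiv.Perm V) :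
    G.comap σ ∈ regs V d := by
  classical
  rw [mem_regs_iff] at h ⊢
  intro v
  rw [← h (σ v)]
  exact Nat.card_congr ((SimpleGraph.Iso.comap σ G).mapNeighborSet v)

theorem mk_eq_iff {n : ℕ} {G H : SimpleGraph (Fin n)} :
    Quotient.mk (isoSetoid (Fin n)) G = Quotient.mk (isoSetoid (Fin n)) H ↔ ∃ σ : Equiv.Perm (Fin n), H.comap σ = G := by
  rw [Quotient.eq]
  constructor
  · rintro ⟨f⟩
    refine ⟨f.toEquiv, ?_⟩
    ext a b
    exact f.map_rel_iff
  · rintro ⟨σ, rfl⟩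
    exact ⟨SimpleGraph.Iso.comap σ H⟩

theorem isReg_mk_iff {n d : ℕ} {G : SimpleGraph (Fin n)} : IsRegClass (Quotient.mk (isoSetoid (Fin n)) G) d ↔ G ∈ regs (Fin n) d := by
  constructor
  · rintro ⟨H, hH, hd⟩
    obtain ⟨σ, rfl⟩ := mk_eq_iff.1 hH.symm
    exact comap_mem_regs (mem_regs_iff.2 hd) σ
  · intro h
    exact ⟨G, rfl, mem_regs_iff.1 h⟩

instance (n : ℕ) : Finite (GraphClass n) := Quotient.finite _

theorem burnside (n d : ℕ) : Nat.card {q : GraphClass n // IsRegClass q d} * n.factorial ≤ ∑ σ : Equiv.Perm (Fin n), (fixG d σ).card := by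
  classical
  have hs : ∀ G : SimpleGraph (Fin n), ∃ σ : Equiv.Perm (Fin n), (Quotient.out (Quotient.mk (isoSetoid (Fin n)) G)).comap σ = G := fun G =>
    mk_eq_iff.1 (Quotient.out_eq _).symm
  choose s hs using hs
  rw [← card_sigma, ← Fintype.card_coe, ← Nat.card_eq_fintype_card]
  have : n.factorial = Nat.card (Equiv.Perm (Fin n)) := by
    rw [Nat.card_eq_fintype_card, Fintype.card_perm, Fintype.card_fin]
  rw [this, ← Nat.card_prod]
  set gr : {q : GraphClass n // IsRegClass q d} × Equiv.Perm (Fin n) → SimpleGraph (Fin n) := fun x => (Quotient.out x.1.1).comap x.2 with hgr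
  have hmk : ∀ x, Quotient.mk (isoSetoid (Fin n)) (gr x) = x.1.1 := by
    intro x
    conv_rhs => rw [← Quotient.out_eq x.1.1]
    exact mk_eq_iff.2 ⟨x.2, rfl⟩
  have hgs : ∀ x, (Quotient.out x.1.1).comap (s (gr x)) = gr x := by
    intro x
    have := hs (gr x)
    rwa [hmk] at this
  refine Nat.card_le_card_of_injective (fun x => ⟨⟨(s (gr x))⁻¹ * x.2, gr x⟩, ?_⟩) ?_
  · simp only [mem_sigma, mem_univ, true_and]
    rw [mem_fixG]
    refine ⟨?_, ?_⟩
    · rw [← isReg_mk_iff, hmk]; exact x.1.2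
    · intro a b
      have e : ∀ a b, (gr x).Adj a b ↔ (Quotient.out x.1.1).Adj (s (gr x) a) (s (gr x) b) := by
        intro a b
        conv_lhs => rw [← hgs]
        rfl
      rw [e]
      simp only [Equiv.Perm.mul_apply]
      rw [show s (gr x) ((s (gr x))⁻¹ (x.2 a)) = x.2 a from (s (gr x)).apply_symm_apply _, show s (gr x) ((s (gr x))⁻¹ (x.2 b)) = x.2 b from (s (gr x)).apply_symm_apply _]
      rfl
  · intro x y h
    simp only [Subtype.mk.injEq, Sigma.mk.injEq, heq_eq_eq] at h
    obtain ⟨h1, h2⟩ := h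
    rw [h2] at h1
    refine Prod.ext (Subtype.ext ?_) (mul_left_cancel h1)
    rw [← hmk, h2, hmk]

open Classical in
theorem class_card {n : ℕ} (q : GraphClass n) :
    (univ.filter (fun G : SimpleGraph (Fin n) => Quotient.mk (isoSetoid (Fin n)) G = q)).card ≤ n.factorial := by
  have : n.factorial = Fintype.card (Equiv.Perm (Fin n)) := by
    rw [Fintype.card_perm, Fintype.card_fin]
  rw [this, ← card_univ]
  refine le_trans (card_le_card ?_) (card_image_le (f := fun σ : Equiv.Perm (Fin n) => (Quotient.out q).comap σ))
  intro G hG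
  simp only [mem_filter, mem_univ, true_and, mem_image] at hG ⊢
  apply mk_eq_iff.1
  rw [hG]; exact (Quotient.out_eq _).symm

theorem op_adj_cc {m t : ℕ} (L : SimpleGraph (Fin m)) (e : Fin t → Sym2 (Fin m)) (x y : Fin m) :
    (opGraphE (m+1) L e).Adj x.castSucc y.castSucc ↔ L.Adj x y ∧ s(x,y) ∉ Set.range e := by
  have hl : ∀ z : Fin m, z.castSucc ≠ Fin.last m := fun z => (Fin.castSucc_lt_last z).ne
  have hc : ∀ z : Fin m, (Fin.castLE (Nat.sub_le (m+1) 1) z : Fin (m+1)) = z.castSucc := fun z => rfl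
  have hinj : Function.Injective (Sym2.map (Fin.castSucc : Fin m → Fin (m+1))) := Sym2.map.injective (Fin.castSucc_injective m)
  unfold opGraphE
  rw [dif_pos (by omega), SimpleGraph.fromEdgeSet_adj]
  constructor
  · rintro ⟨h | ⟨z, _, hz⟩, hne⟩
    · obtain ⟨f, hf, hfe⟩ := h
      have : f = s(x, y) := hinj hfe
      subst this
      exact hf
    · exfalso
      have : Fin.last m ∈ s(x.castSucc, y.castSucc) := by
        rw [hz]; exact Sym2.mem_mk_right _ _
      rw [Sym2.mem_iff] at this
      rcases this with h | h
      · exact hl _ h.symm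
      · exact hl _ h.symm
  · rintro ⟨h1, h2⟩
    refine ⟨Or.inl ⟨s(x,y), ⟨h1, h2⟩, rfl⟩, ?_⟩
    intro h
    exact h1.ne (Fin.castSucc_injective m h)

theorem op_adj_cl {m t : ℕ} (L : SimpleGraph (Fin m)) (e : Fin t → Sym2 (Fin m)) (x : Fin m) :
    (opGraphE (m+1) L e).Adj x.castSucc (Fin.last m) ↔ ∃ i, x ∈ e i := by
  have hl : ∀ z : Fin m, z.castSucc ≠ Fin.last m := fun z => (Fin.castSucc_lt_last z).ne
  unfold opGraphE
  rw [dif_pos (by omega), SimpleGraph.fromEdgeSet_adj]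
  constructor
  · rintro ⟨h | ⟨z, hz', hz⟩, hne⟩
    · obtain ⟨f, hf, hfe⟩ := h
      exfalso
      have : Fin.last m ∈ Sym2.map (Fin.castSucc : Fin m → Fin (m+1)) f := by
        have h2 : Fin.last m ∈ s(x.castSucc, Fin.last m) := Sym2.mem_mk_right _ _
        rw [← hfe] at h2; exact h2
      rw [Sym2.mem_map] at this
      obtain ⟨a, _, ha⟩ := this
      exact hl a ha
    · have h2 : x.castSucc ∈ s(x.castSucc, Fin.last m) := Sym2.mem_mk_left _ _
      rw [hz, Sym2.mem_iff] at h2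
      rcases h2 with h | h
      · have : x = z := Fin.castSucc_injective m h
        rw [this]; exact hz'
      · exact absurd h (hl x)
  · intro h
    exact ⟨Or.inr ⟨x, h, rfl⟩, hl x⟩

/-- graphs on `Fin (m+1)` agree -/
theorem ext_last {m : ℕ} {G H : SimpleGraph (Fin (m+1))}
    (h1 : ∀ x y : Fin m, G.Adj x.castSucc y.castSucc ↔ H.Adj x.castSucc y.castSucc)
    (h2 : ∀ x : Fin m, G.Adj x.castSucc (Fin.last m) ↔ H.Adj x.castSucc (Fin.last m)) : G = H := by
  ext a b
  induction a using Fin.lastCases with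
  | last =>
    induction b using Fin.lastCases with
    | last => simp
    | cast y => rw [G.adj_comm, H.adj_comm]; exact h2 y
  | cast x =>
    induction b using Fin.lastCases with
    | last => exact h2 x
    | cast y => exact h1 x y

open Classical in
theorem op_deg_c {m t : ℕ} (L : SimpleGraph (Fin m)) (e : Fin t → Sym2 (Fin m)) (h : FormsInducedMatching L e) (x : Fin m) :
    (univ.filter (fun w => (opGraphE (m+1) L e).Adj x.castSucc w)).card = (univ.filter (fun w => L.Adj x w)).card := by
  obtain ⟨h1, h2, h3⟩ := h
  symm
  have hl : ∀ z : Fin m, z.castSucc ≠ Fin.last m := fun z => (Fin.castSucc_lt_last z).ne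
  apply card_bij (fun z _ => if s(x,z) ∈ Set.range e then Fin.last m else z.castSucc)
  · intro z hz
    simp only [mem_filter, mem_univ, true_and] at hz ⊢
    split_ifs with hr
    · obtain ⟨i, hi⟩ := hr
      exact (op_adj_cl L e x).2 ⟨i, by rw [hi]; exact Sym2.mem_mk_left _ _⟩
    · exact (op_adj_cc L e x z).2 ⟨hz, hr⟩
  · intro z hz z' hz' heq
    split_ifs at heq with a b b
    · obtain ⟨i, hi⟩ := a
      obtain ⟨j, hj⟩ := b
      have hij : i = j := by
        by_contra hne
        exact h2 i j hne x (by rw [hi]; exact Sym2.mem_mk_left _ _) (by rw [hj]; exact Sym2.mem_mk_left _ _)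
      subst hij
      rw [hi] at hj
      exact Sym2.congr_right.1 hj
    · exact absurd heq.symm (hl _)
    · exact absurd heq (hl _)
    · exact Fin.castSucc_injective m heq
  · intro b hb
    simp only [mem_filter, mem_univ, true_and] at hb
    induction b using Fin.lastCases with
    | last =>
      obtain ⟨i, hi⟩ := (op_adj_cl L e x).1 hb
      obtain ⟨y, hy⟩ := hi
      refine ⟨y, ?_, ?_⟩
      · simp only [mem_filter, mem_univ, true_and]
        have := h1 i
        rw [hy] at this
        exact this
      · rw [if_pos ⟨i, hy⟩]
    | cast y =>
      obtain ⟨a, b⟩ := (op_adj_cc L e x y).1 hb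
      exact ⟨y, by simpa using a, if_neg b⟩

/-- disjoint pairs -/
def Disj {m t : ℕ} (e : Fin t → Sym2 (Fin m)) : Prop :=
  (∀ i, ¬ (e i).IsDiag) ∧ (∀ i j, i ≠ j → ∀ x, x ∈ e i → x ∉ e j)

open Classical in
noncomputable def cov {m t : ℕ} (e : Fin t → Sym2 (Fin m)) : Finset (Fin m) := univ.filter (fun x => ∃ i, x ∈ e i)

theorem cov_card {m t : ℕ} {e : Fin t → Sym2 (Fin m)} (h : Disj e) : (cov e).card = 2 * t := by
  classical
  have : cov e = univ.biUnion (fun i => (e i).toFinset) := by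
    ext x; simp [cov]
  rw [this, card_biUnion]
  · rw [sum_congr rfl (fun i _ => Sym2.card_toFinset_of_not_isDiag _ (h.1 i))]
    simp [mul_comm]
  · intro i _ j _ hij
    simp only [Function.onFun]
    rw [Finset.disjoint_left]
    intro x hx
    rw [Sym2.mem_toFinset] at hx ⊢
    exact h.2 i j hij x hx

theorem FormsInducedMatching.disj {m t : ℕ} {L : SimpleGraph (Fin m)} {e : Fin t → Sym2 (Fin m)} (h : FormsInducedMatching L e) : Disj e :=
  ⟨fun i => L.not_isDiag_of_mem_edgeSet (h.1 i), h.2.1⟩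

open Classical in
noncomputable def nbl {m : ℕ} (G : SimpleGraph (Fin (m+1))) : Finset (Fin m) := univ.filter (fun x => G.Adj x.castSucc (Fin.last m))

open Classical in
theorem nbl_card {m : ℕ} (G : SimpleGraph (Fin (m+1))) : (nbl G).card = (univ.filter (fun w => G.Adj (Fin.last m) w)).card := by
  apply card_bij (fun z _ => z.castSucc)
  · intro z hz; simpa [nbl, G.adj_comm] using hz
  · intro z _ z' _ h; exact Fin.castSucc_injective m h
  · intro b hb
    simp only [mem_filter, mem_univ, true_and] at hb
    induction b using Fin.lastCases with
    | last => exact absurd hb (G.loopless.irrefl _)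
    | cast y => exact ⟨y, by simpa [nbl, G.adj_comm] using hb, rfl⟩

theorem nbl_op {m t : ℕ} (L : SimpleGraph (Fin m)) (e : Fin t → Sym2 (Fin m)) : nbl (opGraphE (m+1) L e) = cov e := by
  ext x
  simp only [nbl, cov, mem_filter, mem_univ, true_and]
  exact op_adj_cl L e x

theorem mem_regs {V : Type*} [Fintype V] {d : ℕ} {G : SimpleGraph V} [∀ v, DecidablePred (fun w => G.Adj v w)] :
    G ∈ regs V d ↔ ∀ v, (univ.filter (fun w => G.Adj v w)).card = d := by
  classical
  unfold regs
  rw [mem_filter]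
  simp only [mem_univ, true_and]
  apply forall_congr'
  intro v
  congr!

open Classical in
theorem op_reg_iff {m t : ℕ} {L : SimpleGraph (Fin m)} {e : Fin t → Sym2 (Fin m)} (h : FormsInducedMatching L e) :
    opGraphE (m+1) L e ∈ regs (Fin (m+1)) (2*t) ↔ L ∈ regs (Fin m) (2*t) := by
  rw [mem_regs, mem_regs]
  constructor
  · intro H v
    rw [← op_deg_c L e h]; exact H _
  · intro H v
    induction v using Fin.lastCases with
    | last => rw [← nbl_card, nbl_op, cov_card h.disj]
    | cast y => rw [op_deg_c L e h]; exact H _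

open Classical in
noncomputable def kapS {m : ℕ} (t : ℕ) (S : Finset (Fin m)) : Finset (Fin t → Sym2 (Fin m)) :=
  univ.filter (fun e => Disj e ∧ cov e = S)

theorem mem_kapS {m t : ℕ} {S : Finset (Fin m)} {e : Fin t → Sym2 (Fin m)} : e ∈ kapS t S ↔ Disj e ∧ cov e = S := by
  unfold kapS; simp

theorem mem_cov {m t : ℕ} {e : Fin t → Sym2 (Fin m)} {x : Fin m} : x ∈ cov e ↔ ∃ i, x ∈ e i := by
  unfold cov; simp

theorem perm_of_card {m : ℕ} {S S' : Finset (Fin m)} (h : S.card = S'.card) : ∃ σ : Equiv.Perm (Fin m), ∀ x, σ x ∈ S' ↔ x ∈ S := by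
  classical
  have e : {x // x ∈ S} ≃ {x // x ∈ S'} := Finset.equivOfCardEq h
  refine ⟨e.extendSubtype, fun x => ?_⟩
  by_cases hx : x ∈ S
  · simp [hx, e.extendSubtype_mem x hx]
  · have := e.extendSubtype_not_mem x hx
    simp [hx, this]

theorem mem_map_perm {m : ℕ} (σ : Equiv.Perm (Fin m)) (z : Sym2 (Fin m)) (x : Fin m) : x ∈ Sym2.map σ z ↔ σ.symm x ∈ z := by
  rw [Sym2.mem_map]
  constructor
  · rintro ⟨a, ha, rfl⟩; simpa using ha
  · intro h; exact ⟨_, h, by simp⟩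

theorem kap_le {m t : ℕ} {S S' : Finset (Fin m)} (h : S.card = S'.card) : (kapS t S).card ≤ (kapS t S').card := by
  obtain ⟨σ, hσ⟩ := perm_of_card h
  apply card_le_card_of_injOn (fun e i => Sym2.map σ (e i))
  · intro e he
    rw [mem_coe, mem_kapS] at he ⊢
    obtain ⟨⟨h1, h2⟩, h3⟩ := he
    refine ⟨⟨?_, ?_⟩, ?_⟩
    · intro i
      rw [Sym2.isDiag_map σ.injective]; exact h1 i
    · intro i j hij x
      rw [mem_map_perm, mem_map_perm]
      exact h2 i j hij _
    · ext x
      rw [mem_cov]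
      simp only [mem_map_perm]
      rw [← mem_cov, h3, ← hσ]; simp
  · intro e _ e' _ hee
    funext i
    exact Sym2.map.injective σ.injective (congrFun hee i)

theorem kap_eq {m t : ℕ} {S S' : Finset (Fin m)} (h : S.card = S'.card) : (kapS t S).card = (kapS t S').card :=
  le_antisymm (kap_le h) (kap_le h.symm)

open Classical in
/-- pairs giving `G` -/
noncomputable def Wp {m : ℕ} (t : ℕ) (G : SimpleGraph (Fin (m+1))) : Finset (SimpleGraph (Fin m) × (Fin t → Sym2 (Fin m))) :=
  univ.filter (fun p => p.1 ∈ regs (Fin m) (2*t) ∧ FormsInducedMatching p.1 p.2 ∧ opGraphE (m+1) p.1 p.2 = G)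

theorem mem_Wp {m t : ℕ} {G : SimpleGraph (Fin (m+1))} {p : SimpleGraph (Fin m) × (Fin t → Sym2 (Fin m))} :
    p ∈ Wp t G ↔ p.1 ∈ regs (Fin m) (2*t) ∧ FormsInducedMatching p.1 p.2 ∧ opGraphE (m+1) p.1 p.2 = G := by
  unfold Wp; simp

theorem Wp_upper {m t : ℕ} (G : SimpleGraph (Fin (m+1))) : (Wp t G).card ≤ (kapS t (nbl G)).card := by
  apply card_le_card_of_injOn (fun p => p.2)
  · intro p hp
    rw [mem_coe, mem_Wp] at hp
    rw [mem_coe, mem_kapS]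
    exact ⟨hp.2.1.disj, by rw [← hp.2.2, nbl_op]⟩
  · rintro ⟨L, e⟩ hp ⟨L', e'⟩ hp' h
    rw [mem_coe, mem_Wp] at hp hp'
    dsimp only at h hp hp'
    subst h
    have key : ∀ L : SimpleGraph (Fin m), FormsInducedMatching L e → opGraphE (m+1) L e = G → ∀ x y, L.Adj x y ↔ (G.Adj x.castSucc y.castSucc ∨ s(x,y) ∈ Set.range e) := by
      intro L h1 h2 x y
      rw [← h2, op_adj_cc]
      have : s(x,y) ∈ Set.range e → L.Adj x y := by
        rintro ⟨i, hi⟩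
        have := h1.1 i
        rwa [hi] at this
      tauto
    congr 1
    ext x y
    rw [key L hp.2.1 hp.2.2, key L' hp'.2.1 hp'.2.2]

def GoodL {m : ℕ} (G : SimpleGraph (Fin (m+1))) : Prop := ∀ x ∈ nbl G, ∀ y ∈ nbl G, ¬ G.Adj x.castSucc y.castSucc

def unop {m t : ℕ} (G : SimpleGraph (Fin (m+1))) (e : Fin t → Sym2 (Fin m)) (he : Disj e) : SimpleGraph (Fin m) where
  Adj x y := G.Adj x.castSucc y.castSucc ∨ s(x,y) ∈ Set.range e
  symm := ⟨by
    intro x y h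
    rw [G.adj_comm, Sym2.eq_swap]; exact h⟩
  loopless := ⟨by
    rintro x (h | ⟨i, hi⟩)
    · exact G.loopless.irrefl _ h
    · exact he.1 i (by rw [hi]; exact rfl)⟩

theorem Wp_lower {m t : ℕ} (G : SimpleGraph (Fin (m+1))) (hG : G ∈ regs (Fin (m+1)) (2*t)) (hgood : GoodL G) :
    (kapS t (nbl G)).card ≤ (Wp t G).card := by
  classical
  have main : ∀ e : Fin t → Sym2 (Fin m), ∀ he : e ∈ kapS t (nbl G), (unop G e (mem_kapS.1 he).1, e) ∈ Wp t G := by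
    intro e he
    obtain ⟨h1, h2⟩ := mem_kapS.1 he
    have hadj : ∀ x y, (unop G e h1).Adj x y ↔ (G.Adj x.castSucc y.castSucc ∨ s(x,y) ∈ Set.range e) := fun x y => Iff.rfl
    have hno : ∀ x y, s(x,y) ∈ Set.range e → ¬ G.Adj x.castSucc y.castSucc := by
      rintro x y ⟨i, hi⟩
      apply hgood
      · rw [← h2, mem_cov]; exact ⟨i, by rw [hi]; exact Sym2.mem_mk_left _ _⟩
      · rw [← h2, mem_cov]; exact ⟨i, by rw [hi]; exact Sym2.mem_mk_right _ _⟩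
    have hIM : FormsInducedMatching (unop G e h1) e := by
      refine ⟨?_, h1.2, ?_⟩
      · intro i
        have : ∀ z, e i = z → z ∈ (unop G e h1).edgeSet := by
          intro z
          induction z with | _ x y =>
          intro hz
          rw [SimpleGraph.mem_edgeSet, hadj]
          exact Or.inr ⟨i, hz⟩
        exact this _ rfl
      · intro u v hu hv huv
        rw [hadj] at huv
        rcases huv with h | h
        · exact absurd h (hgood u (by rw [← h2, mem_cov]; exact hu) v (by rw [← h2, mem_cov]; exact hv))
        · exact h
    have hop : opGraphE (m+1) (unop G e h1) e = G := by
      apply ext_last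
      · intro x y
        rw [op_adj_cc, hadj]
        have := hno x y
        tauto
      · intro x
        rw [op_adj_cl, ← mem_cov, h2]
        unfold nbl; simp
    rw [mem_Wp]
    refine ⟨?_, hIM, hop⟩
    rw [← op_reg_iff hIM, hop]
    exact hG
  apply card_le_card_of_injOn (fun e => if he : e ∈ kapS t (nbl G) then (unop G e (mem_kapS.1 he).1, e) else (⊥, e))
  · intro e he
    rw [mem_coe] at he
    simp only [he, dif_pos, mem_coe]
    exact main e he
  · intro e he e' he' h
    rw [mem_coe] at he he'
    simp only [he, he', dif_pos] at h
    exact congrArg Prod.snd h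

open Classical in
/-- generic tuple counting -/
theorem tuple_count {E : Type*} [Fintype E] {t : ℕ} (i j : Fin t) (hij : i ≠ j) (B : E → Finset E) (b : ℕ) (hB : ∀ a, (B a).card ≤ b) :
    (univ.filter (fun f : Fin t → E => f j ∈ B (f i))).card * Fintype.card E ≤ b * (Fintype.card E) ^ t := by
  have h1 : (univ.filter (fun f : Fin t → E => f j ∈ B (f i)) ×ˢ (univ : Finset E)).card ≤ ((univ : Finset (Fin t → E)).sigma (fun g => B (g i))).card := by
    apply card_le_card_of_injOn (fun p => (⟨Function.update p.1 j p.2, p.1 j⟩ : Σ _ : Fin t → E, E))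
    · rintro ⟨f, a⟩ hf
      simp only [coe_product, Set.mem_prod, mem_coe, mem_filter, mem_univ, true_and, and_true] at hf
      simp only [mem_coe, mem_sigma, mem_univ, true_and]
      rw [Function.update_of_ne hij]; exact hf
    · rintro ⟨f, a⟩ _ ⟨f', a'⟩ _ h
      simp only [Sigma.mk.injEq, heq_eq_eq] at h
      obtain ⟨h1, h2⟩ := h
      have ha : a = a' := by simpa using congrFun h1 j
      refine Prod.ext ?_ ha
      funext k
      by_cases hk : k = j
      · rw [hk]; exact h2
      · have := congrFun h1 k
        simpa [Function.update_of_ne hk] using this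
  rw [card_product, card_univ, card_sigma] at h1
  refine h1.trans ?_
  refine (sum_le_sum (fun g _ => hB (g i))).trans ?_
  rw [sum_const, card_univ, Fintype.card_fun, Fintype.card_fin, smul_eq_mul, mul_comm]

/-- tuples of edges which are not induced matchings -/
theorem bad_tuples {m t d : ℕ} (L : SimpleGraph (Fin m)) (hL : L ∈ regs (Fin m) d) :
    Nat.card {e : Fin t → Sym2 (Fin m) // (∀ i, e i ∈ L.edgeSet) ∧ ¬ FormsInducedMatching L e} * Nat.card L.edgeSet
      ≤ (t * t) * (2 * ((d + 1) * d)) * (Nat.card L.edgeSet) ^ t := by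
  classical
  have hdeg := mem_regs.1 hL
  set cl : Fin m → Finset (Fin m) := fun u => insert u (univ.filter (fun w => L.Adj u w)) with hcl
  have hclc : ∀ u, (cl u).card ≤ d + 1 := fun u => (card_insert_le _ _).trans (by rw [hdeg])
  set inc : Fin m → Finset L.edgeSet := fun v => univ.filter (fun e => v ∈ e.1) with hinc
  have hincc : ∀ v, (inc v).card ≤ d := by
    intro v
    rw [← hdeg v]
    have : inc v ⊆ ((univ.filter (fun w => L.Adj v w)).attach).image (fun w => ⟨s(v, w.1), by
        exact (mem_filter.1 w.2).2⟩) := by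
      rintro ⟨z, hz⟩ h
      simp only [hinc, mem_filter, mem_univ, true_and] at h
      obtain ⟨y, rfl⟩ := h
      simp only [mem_image, mem_attach, true_and, Subtype.exists, mem_filter, mem_univ]
      exact ⟨y, hz, rfl⟩
    exact (card_le_card this).trans (card_image_le.trans (by rw [card_attach]))
  set B : L.edgeSet → Finset L.edgeSet := fun e => (e.1.toFinset).biUnion (fun u => (cl u).biUnion inc) with hBdef
  have hB : ∀ a, (B a).card ≤ 2 * ((d + 1) * d) := by
    intro a
    refine (card_biUnion_le_card_mul _ _ ((d+1)*d) ?_).trans ?_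
    · intro u _
      refine (card_biUnion_le_card_mul _ _ d (fun v _ => hincc v)).trans ?_
      gcongr; exact hclc u
    · gcongr
      rw [Sym2.card_toFinset_of_not_isDiag _ (L.not_isDiag_of_mem_edgeSet a.2)]
  rw [Nat.card_eq_fintype_card, Nat.card_eq_fintype_card]
  set BD := fun (p : Fin t × Fin t) => (univ.filter (fun f : Fin t → L.edgeSet => f p.2 ∈ B (f p.1))) with hBD
  have hcnt : ∀ p : Fin t × Fin t, p.1 ≠ p.2 → (BD p).card * Fintype.card L.edgeSet ≤ (2 * ((d + 1) * d)) * (Fintype.card L.edgeSet) ^ t := by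
    intro p hp
    have := tuple_count p.1 p.2 hp B _ hB
    convert this using 3
    ext f; simp [hBD]
  have h1 : Fintype.card {e : Fin t → Sym2 (Fin m) // (∀ i, e i ∈ L.edgeSet) ∧ ¬ FormsInducedMatching L e} ≤
      ((univ.filter (fun p : Fin t × Fin t => p.1 ≠ p.2)).biUnion BD).card := by
    rw [← Fintype.card_coe]
    refine Fintype.card_le_of_injective (fun e => ⟨fun i => ⟨e.1 i, e.2.1 i⟩, ?_⟩) ?_
    · obtain ⟨e, he1, he2⟩ := e
      have : ∃ i j, i ≠ j ∧ ∃ u v, u ∈ e i ∧ v ∈ e j ∧ (u = v ∨ L.Adj u v) := by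
        by_contra hcon
        push Not at hcon
        apply he2
        refine ⟨he1, ?_, ?_⟩
        · intro i j hij x hx hx'
          exact (hcon i j hij x x hx hx').1 rfl
        · rintro u v ⟨i, hi⟩ ⟨j, hj⟩ huv
          by_cases hij : i = j
          · subst hij
            exact ⟨i, (Sym2.mem_and_mem_iff huv.ne).1 ⟨hi, hj⟩⟩
          · exact absurd huv (hcon i j hij u v hi hj).2
      obtain ⟨i, j, hij, u, v, hu, hv, huv⟩ := this
      simp only [mem_biUnion, mem_filter, mem_univ, true_and, Prod.exists, hBD, hBdef]
      refine ⟨i, j, hij, u, by simpa using hu, v, ?_, ?_⟩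
      · simp only [hcl, mem_insert, mem_filter, mem_univ, true_and]
        rcases huv with h | h
        · exact Or.inl h.symm
        · exact Or.inr h
      · simp only [hinc, mem_filter, mem_univ, true_and]; exact hv
    · rintro ⟨e, he⟩ ⟨e', he'⟩ h
      simp only [Subtype.mk.injEq] at h ⊢
      funext i
      have := congrFun h i
      simpa using this
  refine (Nat.mul_le_mul_right _ (h1.trans card_biUnion_le)).trans ?_
  rw [sum_mul]
  refine (sum_le_card_nsmul _ _ _ (fun p hp => hcnt p (mem_filter.1 hp).2)).trans ?_
  rw [smul_eq_mul, mul_assoc (t * t)]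
  apply Nat.mul_le_mul_right
  refine (card_filter_le _ _).trans ?_
  simp

theorem mem_ncont {V : Type*} [Fintype V] {d : ℕ} {H : Finset (Sym2 V)} {G : SimpleGraph V} :
    G ∈ ncont d H ↔ G ∈ regs V d ∧ ∀ e ∈ H, e ∈ G.edgeSet := by
  classical
  unfold ncont; exact mem_filter

open Classical in
/-- triangles at the last vertex -/
theorem bad_last {m d : ℕ} {p : ℝ} (hp : 0 ≤ p)
    (hN : ∀ H : Finset (Sym2 (Fin (m+1))), ((ncont d H).card : ℝ) ≤ (regs (Fin (m+1)) d).card * p ^ H.card) :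
    (((regs (Fin (m+1)) d).filter (fun G => ¬ GoodL G)).card : ℝ) ≤ (regs (Fin (m+1)) d).card * ((m:ℝ)^2 * p ^ 3) := by
  set Hf : Fin m × Fin m → Finset (Sym2 (Fin (m+1))) := fun q => {s(q.1.castSucc, Fin.last m), s(q.2.castSucc, Fin.last m), s(q.1.castSucc, q.2.castSucc)} with hHf
  have hl : ∀ z : Fin m, z.castSucc ≠ Fin.last m := fun z => (Fin.castSucc_lt_last z).ne
  have hc : ∀ q : Fin m × Fin m, q.1 ≠ q.2 → (Hf q).card = 3 := by
    intro q hq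
    have h12 : q.1.castSucc ≠ q.2.castSucc := fun h => hq (Fin.castSucc_injective m h)
    rw [hHf]
    apply card_eq_three.2
    refine ⟨_, _, _, ?_, ?_, ?_, rfl⟩
    · simp [h12, hl]
    · simp [h12, hl, (hl _).symm]
    · simp [h12, hl, (hl _).symm]
  have hsub : (regs (Fin (m+1)) d).filter (fun G => ¬ GoodL G) ⊆ (univ.filter (fun q : Fin m × Fin m => q.1 ≠ q.2)).biUnion (fun q => ncont d (Hf q)) := by
    intro G hG
    rw [mem_filter] at hG
    obtain ⟨h1, h2⟩ := hG
    unfold GoodL at h2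
    push Not at h2
    obtain ⟨x, hx, y, hy, hxy⟩ := h2
    simp only [nbl, mem_filter, mem_univ, true_and] at hx hy
    rw [mem_biUnion]
    refine ⟨(x, y), ?_, ?_⟩
    · simp only [mem_filter, mem_univ, true_and]
      intro h; subst h; exact hxy.ne rfl
    · rw [mem_ncont]
      refine ⟨h1, ?_⟩
      intro e he
      simp only [hHf, mem_insert, mem_singleton] at he
      rcases he with rfl | rfl | rfl
      · exact hx
      · exact hy
      · exact hxy
  calc (((regs (Fin (m+1)) d).filter (fun G => ¬ GoodL G)).card : ℝ)
      ≤ ((∑ q ∈ (univ.filter (fun q : Fin m × Fin m => q.1 ≠ q.2)), (ncont d (Hf q)).card : ℕ) : ℝ) := by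
        exact_mod_cast (card_le_card hsub).trans card_biUnion_le
    _ = ∑ q ∈ (univ.filter (fun q : Fin m × Fin m => q.1 ≠ q.2)), ((ncont d (Hf q)).card : ℝ) := by push_cast; rfl
    _ ≤ ∑ q ∈ (univ.filter (fun q : Fin m × Fin m => q.1 ≠ q.2)), ((regs (Fin (m+1)) d).card : ℝ) * p ^ 3 := by
        apply sum_le_sum
        intro q hq
        have := hN (Hf q)
        rwa [hc q (mem_filter.1 hq).2] at this
    _ ≤ ∑ q : Fin m × Fin m, ((regs (Fin (m+1)) d).card : ℝ) * p ^ 3 := by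
        apply sum_le_sum_of_subset_of_nonneg (filter_subset _ _)
        intros; positivity
    _ = _ := by
        rw [sum_const, card_univ, Fintype.card_prod, Fintype.card_fin, nsmul_eq_mul]; push_cast; ring

/-- existence of regular graphs -/
theorem regs_nonempty {m t : ℕ} (h : 2 * t < m) : (regs (Fin m) (2*t)).Nonempty := by
  classical
  obtain ⟨k, rfl⟩ : ∃ k, m = k + 1 := ⟨m - 1, by omega⟩
  set P : Fin (k+1) → Prop := fun δ => (1 ≤ δ.val ∧ δ.val ≤ t) ∨ (k + 1 - t ≤ δ.val) with hP
  have hneg : ∀ δ, P δ → P (-δ) := by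
    intro δ hδ
    have hv := Fin.val_neg δ
    have hlt := δ.isLt
    simp only [hP] at hδ ⊢
    rw [hv]
    split_ifs with h0
    · subst h0; simp at hδ; omega
    · have : δ.val ≠ 0 := fun h => h0 (Fin.ext h)
      omega
  have h0 : ¬ P 0 := by
    simp only [hP]; simp; omega
  refine ⟨{ Adj := fun x y => P (y - x), symm := ⟨fun x y hxy => by have := hneg _ hxy; rwa [neg_sub] at this⟩, loopless := ⟨fun x hx => by rw [sub_self] at hx; exact h0 hx⟩ }, ?_⟩
  rw [mem_regs]
  intro v
  have e1 : (univ.filter (fun w : Fin (k+1) => P (w - v))).card = (univ.filter P).card := by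
    apply card_bij (fun w _ => w - v)
    · intro w hw; simpa using hw
    · intro a _ b _ hab; exact sub_left_injective hab
    · intro b hb; exact ⟨b + v, by simpa using hb, by simp⟩
  rw [e1]
  have e2 : (univ.filter P).card = ((range (k+1)).filter (fun i => (1 ≤ i ∧ i ≤ t) ∨ (k + 1 - t ≤ i))).card := by
    apply card_bij (fun w _ => w.val)
    · intro w hw; simp only [mem_filter, mem_range, mem_univ, true_and] at hw ⊢; exact ⟨w.isLt, hw⟩
    · intro a _ b _ hab; exact Fin.ext hab
    · intro b hb
      simp only [mem_filter, mem_range] at hb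
      exact ⟨⟨b, hb.1⟩, by simpa [hP] using hb.2, rfl⟩
  rw [e2]
  have e3 : (range (k+1)).filter (fun i => (1 ≤ i ∧ i ≤ t) ∨ (k + 1 - t ≤ i)) = Icc 1 t ∪ Ico (k+1-t) (k+1) := by
    ext i; simp only [mem_filter, mem_range, mem_union, mem_Icc, mem_Ico]; omega
  rw [e3, card_union_of_disjoint, Nat.card_Icc, Nat.card_Ico]
  · omega
  · rw [Finset.disjoint_left]; intro i; simp only [mem_Icc, mem_Ico]; omega

theorem extPerm {m : ℕ} (σ : Equiv.Perm (Fin m)) : ∃ τ : Equiv.Perm (Fin (m+1)), (∀ x : Fin m, τ x.castSucc = (σ x).castSucc) ∧ τ (Fin.last m) = Fin.last m := by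
  refine ⟨(finSuccEquivLast.trans (Equiv.optionCongr σ)).trans finSuccEquivLast.symm, ?_, ?_⟩
  · intro x; simp
  · simp

theorem im_comap {m t : ℕ} (σ : Equiv.Perm (Fin m)) (L : SimpleGraph (Fin m)) (e : Fin t → Sym2 (Fin m)) :
    FormsInducedMatching (L.comap σ) e ↔ FormsInducedMatching L (fun i => Sym2.map σ (e i)) := by
  unfold FormsInducedMatching
  have he : ∀ z : Sym2 (Fin m), z ∈ (L.comap σ).edgeSet ↔ Sym2.map σ z ∈ L.edgeSet := by
    intro z
    induction z with | _ x y => exact Iff.rfl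
  simp only [he, mem_map_perm]
  refine and_congr Iff.rfl (and_congr ?_ ?_)
  · constructor
    · intro h i j hij x; exact h i j hij _
    · intro h i j hij x; simpa using h i j hij (σ x)
  · constructor
    · intro h u v hu hv huv
      obtain ⟨i, hi⟩ := h (σ.symm u) (σ.symm v) hu hv (by simpa using huv)
      exact ⟨i, by rw [hi]; simp⟩
    · intro h u v hu hv huv
      obtain ⟨i, hi⟩ := h (σ u) (σ v) (by simpa using hu) (by simpa using hv) huv
      exact ⟨i, Sym2.map.injective σ.injective (by rw [hi]; simp)⟩

theorem opVal_comap {m t : ℕ} (σ : Equiv.Perm (Fin m)) (L : SimpleGraph (Fin m)) (e : Fin t → Sym2 (Fin m)) :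
    opVal (m+1) (L.comap σ) e = opVal (m+1) L (fun i => Sym2.map σ (e i)) := by
  classical
  by_cases h : FormsInducedMatching (L.comap σ) e
  · have h' := (im_comap σ L e).1 h
    unfold opVal
    rw [if_pos h, if_pos h']
    congr 1
    obtain ⟨τ, hτ1, hτ2⟩ := extPerm σ
    refine mk_eq_iff.2 ⟨τ, ?_⟩
    apply ext_last
    · intro x y
      rw [op_adj_cc, SimpleGraph.comap_adj, hτ1, hτ1, op_adj_cc]
      refine and_congr Iff.rfl (not_congr ?_)
      constructor
      · rintro ⟨i, hi⟩
        dsimp only at hi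
        exact ⟨i, Sym2.map.injective σ.injective (by rw [hi]; simp)⟩
      · rintro ⟨i, hi⟩
        exact ⟨i, by simp [hi]⟩
    · intro x
      rw [op_adj_cl, SimpleGraph.comap_adj, hτ1, hτ2, op_adj_cl]
      simp [mem_map_perm]
  · have h' := fun h' => h ((im_comap σ L e).2 h')
    unfold opVal
    rw [if_neg h, if_neg h']

noncomputable def fN {m : ℕ} (t : ℕ) (L : SimpleGraph (Fin m)) (x : Option (GraphClass (m+1))) : ℕ :=
  Nat.card {e : Fin t → Sym2 (Fin m) // (∀ i, e i ∈ L.edgeSet) ∧ opVal (m+1) L e = x}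

theorem fN_comap {m t : ℕ} (σ : Equiv.Perm (Fin m)) (L : SimpleGraph (Fin m)) (x : Option (GraphClass (m+1))) :
    fN t (L.comap σ) x = fN t L x := by
  unfold fN
  apply Nat.card_congr
  refine Equiv.subtypeEquiv (Equiv.arrowCongr (Equiv.refl _) (symPerm σ)) ?_
  intro e
  have he : ∀ z : Sym2 (Fin m), z ∈ (L.comap σ).edgeSet ↔ Sym2.map σ z ∈ L.edgeSet := by
    intro z
    induction z with | _ x y => exact Iff.rfl
  rw [opVal_comap]
  simp only [he]
  rfl

theorem fN_class {m t : ℕ} {L L' : SimpleGraph (Fin m)} (h : Quotient.mk (isoSetoid (Fin m)) L = Quotient.mk (isoSetoid (Fin m)) L') (x : Option (GraphClass (m+1))) :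
    fN t L x = fN t L' x := by
  obtain ⟨σ, rfl⟩ := mk_eq_iff.1 h
  exact fN_comap σ L' x

theorem edge_tuples {m t : ℕ} (L : SimpleGraph (Fin m)) :
    Nat.card {e : Fin t → Sym2 (Fin m) // ∀ i, e i ∈ L.edgeSet} = (Nat.card L.edgeSet) ^ t := by
  have : {e : Fin t → Sym2 (Fin m) // ∀ i, e i ∈ L.edgeSet} ≃ (Fin t → L.edgeSet) := Equiv.subtypePiEquivPi
  rw [Nat.card_congr this, Nat.card_fun, Nat.card_fin]

theorem fN_total {m t : ℕ} (L : SimpleGraph (Fin m)) [Fintype (Option (GraphClass (m+1)))] :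
    ∑ x, fN t L x = (Nat.card L.edgeSet) ^ t := by
  classical
  rw [← edge_tuples]
  unfold fN
  rw [← Nat.card_sigma]
  apply Nat.card_congr
  refine ⟨fun p => ⟨p.2.1, p.2.2.1⟩, fun e => ⟨opVal (m+1) L e.1, ⟨e.1, e.2, rfl⟩⟩, ?_, ?_⟩
  · rintro ⟨x, e, he, rfl⟩; rfl
  · rintro ⟨e, he⟩; rfl

open Classical in
theorem im_count {m t : ℕ} (L : SimpleGraph (Fin m)) :
    (univ.filter (fun e : Fin t → Sym2 (Fin m) => FormsInducedMatching L e)).card +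
      Nat.card {e : Fin t → Sym2 (Fin m) // (∀ i, e i ∈ L.edgeSet) ∧ ¬ FormsInducedMatching L e} = (Nat.card L.edgeSet) ^ t := by
  rw [← edge_tuples, Nat.card_eq_fintype_card, Nat.card_eq_fintype_card, Fintype.card_subtype, Fintype.card_subtype, ← card_union_of_disjoint]
  · congr 1
    ext e
    simp only [mem_union, mem_filter, mem_univ, true_and]
    have : FormsInducedMatching L e → ∀ i, e i ∈ L.edgeSet := fun h => h.1
    tauto
  · rw [Finset.disjoint_left]; intro e; simp only [mem_filter, mem_univ, true_and]; tauto

open Classical in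
theorem fN_some {m t : ℕ} (L : SimpleGraph (Fin m)) (q : GraphClass (m+1)) :
    fN t L (some q) = (univ.filter (fun e : Fin t → Sym2 (Fin m) => FormsInducedMatching L e ∧ Quotient.mk (isoSetoid (Fin (m+1))) (opGraphE (m+1) L e) = q)).card := by
  unfold fN
  rw [Nat.card_eq_fintype_card, Fintype.card_subtype]
  congr 1
  ext e
  simp only [mem_filter, mem_univ, true_and]
  unfold opVal
  by_cases h : FormsInducedMatching L e
  · rw [if_pos h]
    simp only [h, true_and, Option.some.injEq]
    exact ⟨fun h => Option.some.inj h.2, fun h2 => ⟨h.1, congrArg some h2⟩⟩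
  · rw [if_neg h]; simp [h]

open Classical in
theorem sum_fN_lower {m t κ : ℕ} (hκ : ∀ S : Finset (Fin m), S.card = 2 * t → (kapS t S).card = κ) (q : GraphClass (m+1)) :
    κ * ((regs (Fin (m+1)) (2*t)).filter (fun G => GoodL G ∧ Quotient.mk (isoSetoid (Fin (m+1))) G = q)).card ≤
      ∑ L ∈ regs (Fin m) (2*t), fN t L (some q) := by
  set g := (regs (Fin (m+1)) (2*t)).filter (fun G => GoodL G ∧ Quotient.mk (isoSetoid (Fin (m+1))) G = q) with hg
  have h1 : ∑ L ∈ regs (Fin m) (2*t), fN t L (some q) = (Finset.sigma (regs (Fin m) (2*t)) (fun L => univ.filter (fun e : Fin t → Sym2 (Fin m) => FormsInducedMatching L e ∧ Quotient.mk (isoSetoid (Fin (m+1))) (opGraphE (m+1) L e) = q))).card := by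
    rw [card_sigma]
    exact sum_congr rfl (fun L _ => fN_some L q)
  have h2 : κ * g.card ≤ ∑ G ∈ g, (Wp t G).card := by
    rw [mul_comm, ← smul_eq_mul]
    apply card_nsmul_le_sum
    intro G hG
    rw [hg, mem_filter] at hG
    rw [← hκ (nbl G)]
    · exact Wp_lower G hG.1 hG.2.1
    · rw [nbl_card]; exact mem_regs.1 hG.1 _
  refine h2.trans ?_
  rw [h1, ← card_sigma]
  apply card_le_card_of_injOn (fun p : (Σ _ : SimpleGraph (Fin (m+1)), SimpleGraph (Fin m) × (Fin t → Sym2 (Fin m))) => (⟨p.2.1, p.2.2⟩ : Σ _ : SimpleGraph (Fin m), Fin t → Sym2 (Fin m)))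
  · rintro ⟨G, L, e⟩ hp
    rw [mem_coe, mem_sigma, mem_Wp] at hp
    obtain ⟨hp1, hp2, hp3, hp4⟩ := hp
    dsimp only at hp1 hp2 hp3 hp4
    rw [mem_coe, mem_sigma]
    refine ⟨hp2, ?_⟩
    simp only [mem_filter, mem_univ, true_and]
    refine ⟨hp3, ?_⟩
    rw [hp4]; rw [hg, mem_filter] at hp1; exact hp1.2.2
  · rintro ⟨G, L, e⟩ hp ⟨G', L', e'⟩ hp' h
    rw [mem_coe, mem_sigma, mem_Wp] at hp hp'
    simp only [Sigma.mk.injEq, heq_eq_eq] at h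
    obtain ⟨rfl, rfl⟩ := h
    have : G = G' := hp.2.2.2.symm.trans hp'.2.2.2
    subst this; rfl

open Classical in
theorem kap_lower {m t κ : ℕ} (hκ : ∀ S : Finset (Fin m), S.card = 2 * t → (kapS t S).card = κ) :
    ∑ L ∈ regs (Fin m) (2*t), (univ.filter (fun e : Fin t → Sym2 (Fin m) => FormsInducedMatching L e)).card ≤ κ * (regs (Fin (m+1)) (2*t)).card := by
  have h2 : ∑ G ∈ regs (Fin (m+1)) (2*t), (Wp t G).card ≤ κ * (regs (Fin (m+1)) (2*t)).card := by
    rw [mul_comm κ, ← smul_eq_mul (card _)]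
    apply sum_le_card_nsmul
    intro G hG
    rw [← hκ (nbl G)]
    · exact Wp_upper G
    · rw [nbl_card]; exact mem_regs.1 hG _
  refine le_trans ?_ h2
  rw [← card_sigma, ← card_sigma]
  apply card_le_card_of_injOn (fun p : (Σ _ : SimpleGraph (Fin m), Fin t → Sym2 (Fin m)) => (⟨opGraphE (m+1) p.1 p.2, (p.1, p.2)⟩ : Σ _ : SimpleGraph (Fin (m+1)), SimpleGraph (Fin m) × (Fin t → Sym2 (Fin m))))
  · rintro ⟨L, e⟩ hp
    rw [mem_coe, mem_sigma] at hp
    obtain ⟨hp1, hp2⟩ := hp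
    have hp2 := (mem_filter.1 hp2).2
    rw [mem_coe, mem_sigma]
    exact ⟨(op_reg_iff hp2).2 hp1, mem_Wp.2 ⟨hp1, hp2, rfl⟩⟩
  · rintro ⟨L, e⟩ _ ⟨L', e'⟩ _ h
    simp only [Sigma.mk.injEq, heq_eq_eq, Prod.mk.injEq] at h
    obtain ⟨_, rfl, rfl⟩ := h
    rfl

theorem tv_le {Ω : Type*} [Fintype Ω] (μ η l : Ω → ℝ) (h1 : ∀ x, l x ≤ μ x) (h2 : ∀ x, l x ≤ η x) (s1 : ∑ x, μ x = 1) (s2 : ∑ x, η x = 1) :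
    (1/2 : ℝ) * ∑ x, |μ x - η x| ≤ 1 - ∑ x, l x := by
  have : ∑ x, |μ x - η x| ≤ ∑ x, (μ x + η x - 2 * l x) := by
    apply sum_le_sum
    intro x _
    rw [abs_le]
    constructor
    · linarith [h1 x, h2 x]
    · linarith [h1 x, h2 x]
  rw [sum_sub_distrib, sum_add_distrib, s1, s2, ← mul_sum] at this
  linarith

theorem etaD_eq {m t : ℕ} (rep : {q : GraphClass m // IsRegClass q (2*t)} → SimpleGraph (Fin m)) (x : Option (GraphClass (m+1))) :
    etaD (m+1) (2*t) rep x = (Nat.card {q : GraphClass m // IsRegClass q (2*t)} : ℝ)⁻¹ *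
      ∑ᶠ q : {q : GraphClass m // IsRegClass q (2*t)}, (fN t (rep q) x : ℝ) / (Nat.card (rep q).edgeSet : ℝ) ^ t := by
  unfold etaD fN
  have h : 2 * t / 2 = t := by omega
  rw [h]
  rfl

theorem rep_reg {m d : ℕ} {rep : {q : GraphClass m // IsRegClass q d} → SimpleGraph (Fin m)}
    (hrep : ∀ q, Quotient.mk (isoSetoid (Fin m)) (rep q) = q.1) (q) : rep q ∈ regs (Fin m) d := by
  rw [← isReg_mk_iff, hrep]; exact q.2

theorem sum_class_le {m t : ℕ} (rep : {q : GraphClass m // IsRegClass q (2*t)} → SimpleGraph (Fin m))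
    (hrep : ∀ q, Quotient.mk (isoSetoid (Fin m)) (rep q) = q.1) [Fintype {q : GraphClass m // IsRegClass q (2*t)}] (x : Option (GraphClass (m+1))) :
    ∑ L ∈ regs (Fin m) (2*t), fN t L x ≤ m.factorial * ∑ q', fN t (rep q') x := by
  classical
  set cls : {L // L ∈ regs (Fin m) (2*t)} → {q : GraphClass m // IsRegClass q (2*t)} := fun L => ⟨Quotient.mk (isoSetoid (Fin m)) L.1, isReg_mk_iff.2 L.2⟩ with hcls
  rw [← sum_coe_sort, ← sum_fiberwise_of_maps_to (t := univ) (g := cls) (fun _ _ => mem_univ _), mul_sum]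
  apply sum_le_sum
  intro q' _
  have h4 : ∀ L ∈ univ.filter (fun L => cls L = q'), fN t L.1 x ≤ fN t (rep q') x := by
    intro L hL
    have hL := (mem_filter.1 hL).2
    apply le_of_eq
    apply fN_class
    rw [hrep, ← hL]
  refine (sum_le_card_nsmul _ _ _ h4).trans ?_
  rw [smul_eq_mul]
  apply Nat.mul_le_mul_right
  refine le_trans ?_ (class_card q'.1)
  apply card_le_card_of_injOn (fun L => L.1)
  · intro L hL
    rw [mem_coe] at hL ⊢
    have hL := (mem_filter.1 hL).2
    exact mem_filter.2 ⟨mem_univ _, congrArg Subtype.val hL⟩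
  · intro L _ L' _ h; exact Subtype.ext h

set_option maxHeartbeats 1000000 in
theorem tv_bound {m t : ℕ} (ht : 1 ≤ t) (htm : 2 * t < m)
    (rep : {q : GraphClass m // IsRegClass q (2*t)} → SimpleGraph (Fin m))
    (hrep : ∀ q, Quotient.mk (isoSetoid (Fin m)) (rep q) = q.1)
    (δ δ2 δ3 : ℝ) (hδ0 : 0 ≤ δ) (hδ2 : 0 ≤ δ2) (hδ2' : δ2 < 1)
    (hm : ∑ σ : Equiv.Perm (Fin m), ((fixG (2*t) σ).card : ℝ) ≤ (regs (Fin m) (2*t)).card * (1 + δ))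
    (hn : ∑ σ : Equiv.Perm (Fin (m+1)), ((fixG (2*t) σ).card : ℝ) ≤ (regs (Fin (m+1)) (2*t)).card * (1 + δ))
    (hbad : ∀ L ∈ regs (Fin m) (2*t), (Nat.card {e : Fin t → Sym2 (Fin m) // (∀ i, e i ∈ L.edgeSet) ∧ ¬ FormsInducedMatching L e} : ℝ) ≤ δ2 * ((m * t : ℕ) : ℝ) ^ t)
    (htri : ∀ s : Finset (SimpleGraph (Fin (m+1))), (∀ G ∈ s, G ∈ regs (Fin (m+1)) (2*t) ∧ ¬ GoodL G) → (s.card : ℝ) ≤ (regs (Fin (m+1)) (2*t)).card * δ3) :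
    (1 / 2 : ℝ) * ∑ᶠ x : Option (GraphClass (m+1)), |muD (m+1) (2*t) x - etaD (m+1) (2*t) rep x| ≤
      1 - (1 - δ2) / (1 + δ) * (1 - δ3) := by
  classical
  have : Fintype (GraphClass (m+1)) := Fintype.ofFinite _
  have : Fintype {q : GraphClass m // IsRegClass q (2*t)} := Fintype.ofFinite _
  have : Fintype {q : GraphClass (m+1) // IsRegClass q (2*t)} := Fintype.ofFinite _
  rw [finsum_eq_sum_of_fintype]
  -- basic quantities
  set Rm : ℝ := (Nat.cast (regs (Fin m) (2*t)).card : ℝ) with hRm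
  set Rn : ℝ := (Nat.cast (regs (Fin (m+1)) (2*t)).card : ℝ) with hRn
  set Um : ℝ := (Nat.cast (Nat.card {q : GraphClass m // IsRegClass q (2*t)}) : ℝ) with hUm
  set Un : ℝ := (Nat.cast (Nat.card {q : GraphClass (m+1) // IsRegClass q (2*t)}) : ℝ) with hUn
  set T : ℝ := ((m * t : ℕ) : ℝ) ^ t with hT
  have hT0 : 0 < T := by
    rw [hT]; apply pow_pos; exact_mod_cast Nat.mul_pos (by omega) (by omega)
  have hRm0 : 0 < Rm := by
    rw [hRm]; exact_mod_cast (regs_nonempty htm).card_pos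
  have hMe : ∀ L ∈ regs (Fin m) (2*t), Nat.card L.edgeSet = m * t := by
    intro L hL
    have := reg_two_edges hL
    rw [Fintype.card_fin] at this
    have h2 : m * (2 * t) = 2 * (m * t) := by ring
    omega
  obtain ⟨S0, _, hS0⟩ := exists_subset_card_eq (s := (univ : Finset (Fin m))) (n := 2 * t) (by simp; omega)
  obtain ⟨κ, hκdef⟩ : ∃ κ, κ = (kapS t S0).card := ⟨_, rfl⟩
  have hκ : ∀ S : Finset (Fin m), S.card = 2 * t → (kapS t S).card = κ := by
    intro S hS; rw [hκdef]; exact kap_eq (by rw [hS, hS0])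
  -- lower bound on κ Rn
  have hκR : (1 - δ2) * (Rm * T) ≤ κ * Rn := by
    have h1 := kap_lower hκ
    have h2 : ∀ L ∈ regs (Fin m) (2*t), (1 - δ2) * T ≤ ((univ.filter (fun e : Fin t → Sym2 (Fin m) => FormsInducedMatching L e)).card : ℝ) := by
      intro L hL
      have h3 := im_count (t := t) L
      rw [hMe L hL] at h3
      have h4 : ((univ.filter (fun e : Fin t → Sym2 (Fin m) => FormsInducedMatching L e)).card : ℝ) +
        (Nat.card {e : Fin t → Sym2 (Fin m) // (∀ i, e i ∈ L.edgeSet) ∧ ¬ FormsInducedMatching L e} : ℝ) = T := by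
        rw [hT]; exact_mod_cast h3
      have := hbad L hL
      linarith
    have h5 := card_nsmul_le_sum _ _ _ h2
    rw [nsmul_eq_mul, ← hRm] at h5
    have h6 : ∑ L ∈ regs (Fin m) (2*t), ((univ.filter (fun e : Fin t → Sym2 (Fin m) => FormsInducedMatching L e)).card : ℝ) ≤ κ * Rn := by
      rw [hRn]; exact_mod_cast h1
    linarith
  have hκRpos : 0 < κ * Rn := lt_of_lt_of_le (by apply mul_pos (by linarith); positivity) hκR
  have hRn0 : 0 < Rn := by
    rcases (show 0 ≤ Rn by positivity).lt_or_eq with h | h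
    · exact h
    · rw [← h] at hκRpos; simp at hκRpos
  have hUm0 : 0 < Um := by
    obtain ⟨L, hL⟩ := regs_nonempty htm
    have : Nonempty {q : GraphClass m // IsRegClass q (2*t)} := ⟨⟨_, isReg_mk_iff.2 hL⟩⟩
    rw [hUm]; exact_mod_cast Nat.card_pos
  have hUn0 : 0 < Un := by
    have : (regs (Fin (m+1)) (2*t)).Nonempty := by
      rw [hRn] at hRn0; rw [← card_pos]; exact_mod_cast hRn0
    obtain ⟨L, hL⟩ := this
    have : Nonempty {q : GraphClass (m+1) // IsRegClass q (2*t)} := ⟨⟨_, isReg_mk_iff.2 hL⟩⟩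
    rw [hUn]; exact_mod_cast Nat.card_pos
  have hBm : Um * (m.factorial : ℝ) ≤ Rm * (1 + δ) := by
    refine le_trans ?_ hm
    rw [hUm]; exact_mod_cast burnside m (2*t)
  have hBn : Un * ((m+1).factorial : ℝ) ≤ Rn * (1 + δ) := by
    refine le_trans ?_ hn
    rw [hUn]; exact_mod_cast burnside (m+1) (2*t)
  set g : GraphClass (m+1) → Finset (SimpleGraph (Fin (m+1))) := fun q =>
    (regs (Fin (m+1)) (2*t)).filter (fun G => GoodL G ∧ Quotient.mk (isoSetoid (Fin (m+1))) G = q) with hg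
  set c : ℝ := (1 - δ2) / (1 + δ) with hc
  have hc0 : 0 ≤ c := div_nonneg (by linarith) (by linarith)
  set l : Option (GraphClass (m+1)) → ℝ := fun x => match x with
    | none => 0
    | some q => c * (g q).card / Rn with hl
  -- formula for eta
  have heta : ∀ x, etaD (m+1) (2*t) rep x = Um⁻¹ * ((∑ q, (fN t (rep q) x : ℝ)) / T) := by
    intro x
    rw [etaD_eq, finsum_eq_sum_of_fintype, sum_div]
    congr 1
    apply sum_congr rfl
    intro q _
    rw [hMe _ (rep_reg hrep q)]
  have hlμ : ∀ x, l x ≤ muD (m+1) (2*t) x := by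
    intro x
    cases x with
    | none => simp [hl, muD]
    | some q =>
      simp only [hl, muD]
      split_ifs with hq
      · have h1 : ((g q).card : ℝ) ≤ ((m+1).factorial : ℝ) := by
          have : (g q).card ≤ (m+1).factorial := by
            refine (card_le_card ?_).trans (class_card q)
            intro G hG
            simp only [hg, mem_filter] at hG
            simp only [mem_filter, mem_univ, true_and]
            exact hG.2.2
          exact_mod_cast this
        have h2 : c ≤ 1 / (1 + δ) := by
          rw [hc]; gcongr; linarith
        rw [← hUn, ← one_div, div_le_div_iff₀ hRn0 hUn0]
        calc c * (g q).card * Un ≤ 1 / (1 + δ) * ((m+1).factorial : ℝ) * Un := by gcongr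
          _ = (Un * ((m+1).factorial : ℝ)) / (1 + δ) := by ring
          _ ≤ 1 * Rn := by
              rw [div_le_iff₀ (by linarith)]; linarith
      · have : g q = ∅ := by
          rw [eq_empty_iff_forall_notMem]
          intro G hG
          simp only [hg, mem_filter] at hG
          apply hq
          rw [← hG.2.2]
          exact isReg_mk_iff.2 hG.1
        rw [this]; simp
  have hlη : ∀ x, l x ≤ etaD (m+1) (2*t) rep x := by
    intro x
    rw [heta]
    cases x with
    | none =>
      simp only [hl]
      exact mul_nonneg (inv_nonneg.2 hUm0.le) (div_nonneg (sum_nonneg (fun _ _ => Nat.cast_nonneg _)) hT0.le)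
    | some q =>
      simp only [hl]
      have h1 : (κ : ℝ) * (g q).card ≤ ∑ L ∈ regs (Fin m) (2*t), (fN t L (some q) : ℝ) := by
        exact_mod_cast sum_fN_lower hκ q
      have h2 : ∑ L ∈ regs (Fin m) (2*t), (fN t L (some q) : ℝ) ≤ (m.factorial : ℝ) * ∑ q', (fN t (rep q') (some q) : ℝ) := by
        exact_mod_cast sum_class_le rep hrep (some q)
      set F0 := ∑ q', (fN t (rep q') (some q) : ℝ) with hF
      have hF0 : 0 ≤ F0 := sum_nonneg (fun _ _ => Nat.cast_nonneg _)
      have h3 : (κ : ℝ) * (g q).card * Um ≤ Rm * (1 + δ) * F0 := by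
        calc (κ : ℝ) * (g q).card * Um ≤ ((m.factorial : ℝ) * F0) * Um := mul_le_mul_of_nonneg_right (h1.trans h2) hUm0.le
          _ = (Um * (m.factorial : ℝ)) * F0 := by ring
          _ ≤ _ := by gcongr
      have hgoal : c * (g q).card / Rn ≤ F0 / (Um * T) := by
        rw [div_le_div_iff₀ hRn0 (by positivity), hc]
        rw [show (1 - δ2) / (1 + δ) * ((g q).card : ℝ) * (Um * T) = ((1 - δ2) * T * (g q).card * Um) / (1 + δ) by ring]
        rw [div_le_iff₀ (by linarith)]
        refine le_of_mul_le_mul_left ?_ hRm0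
        calc Rm * ((1 - δ2) * T * (g q).card * Um) = ((1 - δ2) * (Rm * T)) * ((g q).card * Um) := by ring
          _ ≤ (κ * Rn) * ((g q).card * Um) := by gcongr
          _ = Rn * (κ * (g q).card * Um) := by ring
          _ ≤ Rn * (Rm * (1 + δ) * F0) := by gcongr
          _ = _ := by ring
      refine hgoal.trans (le_of_eq ?_)
      field_simp
  have s1 : ∑ x, muD (m+1) (2*t) x = 1 := by
    rw [Fintype.sum_option]
    simp only [muD]
    rw [← sum_filter, sum_const, nsmul_eq_mul, zero_add, ← hUn]
    have : ((univ.filter (fun q : GraphClass (m+1) => IsRegClass q (2*t))).card : ℝ) = Un := by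
      rw [hUn, Nat.card_eq_fintype_card, Fintype.card_subtype]
    rw [this]; field_simp
  have s2 : ∑ x, etaD (m+1) (2*t) rep x = 1 := by
    simp only [heta]
    rw [← mul_sum, ← sum_div, sum_comm]
    have : ∀ q, ∑ x, (fN t (rep q) x : ℝ) = T := by
      intro q
      have := fN_total (t := t) (rep q)
      rw [hMe _ (rep_reg hrep q)] at this
      rw [hT]; exact_mod_cast this
    simp only [this]
    rw [sum_const, card_univ, nsmul_eq_mul, ← Nat.card_eq_fintype_card, ← hUm]
    field_simp
  refine (tv_le _ _ l hlμ hlη s1 s2).trans ?_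
  have s3 : ∑ x, l x = c * (((regs (Fin (m+1)) (2*t)).filter GoodL).card : ℝ) / Rn := by
    rw [Fintype.sum_option]
    simp only [hl]
    rw [zero_add, ← sum_div, ← mul_sum]
    congr 2
    have : ((regs (Fin (m+1)) (2*t)).filter GoodL).card = ∑ q, (g q).card := by
      obtain ⟨cl, hcl⟩ : ∃ cl : SimpleGraph (Fin (m+1)) → GraphClass (m+1), cl = fun G => Quotient.mk (isoSetoid (Fin (m+1))) G := ⟨_, rfl⟩
      have hfib := card_eq_sum_card_fiberwise (s := (regs (Fin (m+1)) (2*t)).filter GoodL) (f := cl) (t := univ) (fun _ _ => mem_coe.2 (mem_univ _))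
      refine hfib.trans (Finset.sum_congr rfl (fun q _ => ?_))
      congr 1
      ext G
      simp only [hg, mem_filter, hcl]
      exact and_assoc
    rw [this]; push_cast; rfl
  have s4 : (((regs (Fin (m+1)) (2*t)).filter GoodL).card : ℝ) + (((regs (Fin (m+1)) (2*t)).filter (fun G => ¬ GoodL G)).card : ℝ) = Rn := by
    rw [hRn]; exact_mod_cast card_filter_add_card_filter_not (s := regs (Fin (m+1)) (2*t)) GoodL
  have s5 := htri ((regs (Fin (m+1)) (2*t)).filter (fun G => ¬ GoodL G)) (fun G hG => mem_filter.1 hG)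
  have s6 : c * (1 - δ3) ≤ ∑ x, l x := by
    rw [s3, le_div_iff₀ hRn0, mul_assoc]
    gcongr
    linarith
  linarith

theorem delt_tendsto : Filter.Tendsto delt Filter.atTop (nhds 0) := by
  unfold delt
  have h1 : Filter.Tendsto (fun N : ℝ => 2 * (Real.exp 3 * N ^ (-(8/100) : ℝ))) Filter.atTop (nhds 0) := by
    have := (tendsto_rpow_neg_atTop (y := 8/100) (by norm_num)).const_mul (Real.exp 3) |>.const_mul 2
    simpa using this
  have h2 : Filter.Tendsto (fun N : ℝ => Real.exp (Real.exp 6 * N ^ (9/10 : ℝ) - (1/20) * N ^ (9/10 : ℝ) * Real.log N)) Filter.atTop (nhds 0) := by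
    rw [Real.tendsto_exp_comp_nhds_zero]
    have h3 : Filter.Tendsto (fun N : ℝ => Real.exp 6 - (1/20) * Real.log N) Filter.atTop Filter.atBot := by
      have := (Real.tendsto_log_atTop.const_mul_atTop (show (0:ℝ) < 1/20 by norm_num))
      have := Filter.tendsto_atBot_add_const_left Filter.atTop (Real.exp 6) (Filter.tendsto_neg_atTop_atBot.comp this)
      simpa [sub_eq_add_neg] using this
    have h4 := (tendsto_rpow_atTop (y := 9/10) (by norm_num)).atTop_mul_atBot₀ h3
    refine h4.congr (fun N => ?_)
    ring
  simpa using h1.add h2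

theorem delt_nonneg {N : ℝ} (h : 0 ≤ N) : 0 ≤ delt N := by unfold delt; positivity

theorem ncont_real {k d : ℕ} (hd : 1 ≤ d) (hk : 1 ≤ k) (hev : Even d) (H : Finset (Sym2 (Fin k))) :
    ((ncont d H).card : ℝ) ≤ (regs (Fin k) d).card * (36 * (d:ℝ) / k) ^ H.card := by
  obtain ⟨t, ht⟩ := hev
  have hb := ncont_bound (V := Fin k) (d := d) (M := k * t) (by rw [Fintype.card_fin, ht]; ring) hd H
  have hb' : ((ncont d H).card : ℝ) * ((k * t : ℕ) : ℝ) ^ H.card ≤ (18 * (d:ℝ) ^ 2) ^ H.card * (regs (Fin k) d).card := by exact_mod_cast hb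
  have hM : (0:ℝ) < ((k * t : ℕ) : ℝ) := by exact_mod_cast Nat.mul_pos (by omega) (by omega)
  have e : 36 * (d:ℝ) / k = (18 * (d:ℝ)^2) / ((k * t : ℕ) : ℝ) := by
    have hk0 : (0:ℝ) < k := by exact_mod_cast hk
    have ht0 : (0:ℝ) < t := by exact_mod_cast (show 0 < t by omega)
    have hdt : (d:ℝ) = 2 * t := by rw [ht]; push_cast; ring
    push_cast
    rw [hdt]; field_simp; norm_num
  rw [e, div_pow, ← mul_div_assoc, le_div_iff₀ (by positivity)]
  linarith

theorem final_bound {m t : ℕ} {l : ℝ} (ht : 2 ≤ t) (hl : ((2*t : ℕ) : ℝ) ≤ l)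
    (hlm : l < m) (h1 : 36 * l / m ≤ (m:ℝ) ^ (-(99/100) : ℝ)) (h2 : 36 * l / (m+1 : ℕ) ≤ ((m+1 : ℕ):ℝ) ^ (-(99/100) : ℝ))
    (h3 : Real.exp 3 * (m:ℝ) ^ (-(8/100) : ℝ) ≤ 1/2) (h4 : Real.exp 3 * ((m+1 : ℕ):ℝ) ^ (-(8/100) : ℝ) ≤ 1/2)
    (h5 : 2 * l ^ 3 / m < 1)
    (rep : {q : GraphClass m // IsRegClass q (2*t)} → SimpleGraph (Fin m))
    (hrep : ∀ q, Quotient.mk (isoSetoid (Fin m)) (rep q) = q.1) :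
    (1 / 2 : ℝ) * ∑ᶠ x : Option (GraphClass (m+1)), |muD (m+1) (2*t) x - etaD (m+1) (2*t) rep x| ≤
      1 - (1 - 2 * l ^ 3 / m) / (1 + (delt (m:ℝ) + delt ((m+1 : ℕ) : ℝ))) * (1 - 46656 * l ^ 3 / (m+1 : ℕ)) := by
  have hl0 : (0:ℝ) < l := lt_of_lt_of_le (by exact_mod_cast (show 0 < 2 * t by omega)) hl
  have hm0 : (0:ℝ) < m := hl0.trans hlm
  have hm1 : 1 ≤ m := by exact_mod_cast hm0
  have hd1 := delt_nonneg hm0.le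
  have hd2 := delt_nonneg (N := ((m+1 : ℕ) : ℝ)) (by positivity)
  have hev : Even (2 * t) := even_two_mul t
  have htm : 2 * t < m := by exact_mod_cast lt_of_le_of_lt hl hlm
  apply tv_bound (by omega) htm rep hrep
  · linarith
  · positivity
  · exact h5
  · refine (aut_bound (n := m) (d := 2*t) (p := 36 * ((2*t : ℕ):ℝ) / m) (by omega) (by positivity) hm1 ?_ (fun H => ncont_real (by omega) hm1 hev H) h3).trans ?_
    · refine le_trans ?_ h1
      gcongr
    · gcongr; linarith
  · refine (aut_bound (n := m+1) (d := 2*t) (p := 36 * ((2*t : ℕ):ℝ) / (m+1 : ℕ)) (by omega) (by positivity) (by omega) ?_ (fun H => ncont_real (by omega) (by omega) hev H) h4).trans ?_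
    · refine le_trans ?_ h2
      gcongr
    · gcongr; linarith
  · intro L hL
    have hb := bad_tuples (t := t) L hL
    have hM : Nat.card L.edgeSet = m * t := by
      have := reg_two_edges hL
      rw [Fintype.card_fin] at this
      have h2 : m * (2 * t) = 2 * (m * t) := by ring
      omega
    rw [hM] at hb
    set b := Nat.card {e : Fin t → Sym2 (Fin m) // (∀ i, e i ∈ L.edgeSet) ∧ ¬ FormsInducedMatching L e}
    have hb' : (b:ℝ) * (m * t) ≤ (t * t) * (2 * ((2 * t + 1) * (2 * t))) * ((m * t : ℕ) : ℝ) ^ t := by exact_mod_cast hb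
    have ht0 : (0:ℝ) < t := by exact_mod_cast (show 0 < t by omega)
    have ht1 : (1:ℝ) ≤ t := by exact_mod_cast (show 1 ≤ t by omega)
    have hT0 : (0:ℝ) ≤ ((m * t : ℕ) : ℝ) ^ t := by positivity
    set T : ℝ := ((m * t : ℕ) : ℝ) ^ t
    have hl' : 2 * (t:ℝ) ≤ l := by exact_mod_cast hl
    have hl3 : (2 * (t:ℝ)) ^ 3 ≤ l ^ 3 := by gcongr
    rw [show 2 * l ^ 3 / (m:ℝ) * T = (2 * l ^ 3 * T) / m by ring, le_div_iff₀ hm0]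
    have h6 : (b:ℝ) * m ≤ t * (2 * ((2 * t + 1) * (2 * t))) * T := by
      refine le_of_mul_le_mul_right ?_ ht0
      linarith
    refine h6.trans (mul_le_mul_of_nonneg_right ?_ hT0)
    have h7 : 0 ≤ (t:ℝ)^2 * (t - 1) := mul_nonneg (sq_nonneg _) (sub_nonneg.2 ht1)
    nlinarith
  · intro s hs
    classical
    have := bad_last (m := m) (d := 2*t) (p := 36 * ((2*t : ℕ):ℝ) / (m+1 : ℕ)) (by positivity) (fun H => ncont_real (by omega) (by omega) hev H)
    refine le_trans ?_ (this.trans ?_)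
    · have : s ⊆ (regs (Fin (m+1)) (2*t)).filter (fun G => ¬ GoodL G) := fun G hG => mem_filter.2 (hs G hG)
      exact_mod_cast card_le_card this
    · gcongr
      have hn0 : (0:ℝ) < ((m+1 : ℕ):ℝ) := by positivity
      calc (m:ℝ)^2 * (36 * ((2*t : ℕ):ℝ) / (m+1 : ℕ)) ^ 3 ≤ ((m+1 : ℕ):ℝ)^2 * (36 * l / (m+1 : ℕ)) ^ 3 := by
            gcongr; linarith
        _ = _ := by field_simp; norm_num

theorem log_tend (c : ℝ) (k : ℕ) {a : ℝ} (ha : 0 < a) : Filter.Tendsto (fun x : ℝ => c * Real.log x ^ k / x ^ a) Filter.atTop (nhds 0) := by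
  have h := (isLittleO_log_rpow_rpow_atTop (k:ℝ) ha).tendsto_div_nhds_zero.const_mul c
  simp only [mul_zero, Real.rpow_natCast] at h
  refine h.congr (fun x => ?_)
  ring

end Helpers

/-- For odd `n → ∞` and even `4 ≤ d(n) ≤ (log n)²`, the total variation distance between
`μ_d` (uniform on isomorphism classes of `d`-regular graphs on `n` vertices, with null
outcome `L_∅` of probability `0`) and `η_d` (the distribution of `op(L,S)`) tends to
`0`; here `rep` is an arbitrary fixed choice of labelled representatives. -/
theorem stmt16 (d : ℕ → ℕ) (hde : ∀ n, Even (d n))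
    (hd : ∀ᶠ n : ℕ in Filter.atTop, 4 ≤ d n ∧ (d n : ℝ) ≤ (Real.log n) ^ 2)
    (rep : (n : ℕ) →
      {q : GraphClass (n - 1) // IsRegClass q (d n)} → SimpleGraph (Fin (n - 1)))
    (hrep : ∀ n q, Quotient.mk (isoSetoid (Fin (n - 1))) (rep n q) = q.1) :
    Filter.Tendsto
      (fun n : ℕ => (1 / 2 : ℝ) *
        ∑ᶠ x : Option (GraphClass n), |muD n (d n) x - etaD n (d n) (rep n) x|)
      (Filter.atTop ⊓ Filter.principal {n : ℕ | Odd n}) (nhds 0) := by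
  refine Filter.Tendsto.mono_left ?_ inf_le_left
  rw [← Filter.tendsto_add_atTop_iff_nat 1]
  have hcast1 : Filter.Tendsto (fun m : ℕ => ((m + 1 : ℕ) : ℝ)) Filter.atTop Filter.atTop :=
    tendsto_natCast_atTop_atTop.comp (Filter.tendsto_add_atTop_nat 1)
  have hcast : Filter.Tendsto (fun m : ℕ => (m : ℝ)) Filter.atTop Filter.atTop := tendsto_natCast_atTop_atTop
  set l : ℕ → ℝ := fun m => Real.log ((m + 1 : ℕ) : ℝ) ^ 2 with hl
  -- ratio (m+1)/m
  have hratio : ∀ᶠ m : ℕ in Filter.atTop, (1:ℝ) ≤ m ∧ ((m+1 : ℕ) : ℝ) ≤ 2 * m := by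
    filter_upwards [Filter.eventually_ge_atTop 1] with m hm
    have : (1:ℝ) ≤ m := by exact_mod_cast hm
    exact ⟨this, by push_cast; linarith⟩
  have hC : Filter.Tendsto (fun m : ℕ => 46656 * l m ^ 3 / ((m+1 : ℕ) : ℝ)) Filter.atTop (nhds 0) := by
    have := (log_tend 46656 6 (a := 1) one_pos).comp hcast1
    refine this.congr (fun m => ?_)
    simp only [Function.comp, hl, Real.rpow_one]
    ring
  have hB : Filter.Tendsto (fun m : ℕ => 2 * l m ^ 3 / (m : ℝ)) Filter.atTop (nhds 0) := by
    refine squeeze_zero' ?_ ?_ hC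
    · filter_upwards with m
      have : 0 ≤ l m := sq_nonneg _
      positivity
    · filter_upwards [hratio] with m hm
      have h0 : 0 ≤ l m ^ 3 := pow_nonneg (sq_nonneg _) 3
      rw [div_le_div_iff₀ (by linarith) (by positivity)]
      nlinarith
  have hA : Filter.Tendsto (fun m : ℕ => delt (m:ℝ) + delt ((m+1 : ℕ) : ℝ)) Filter.atTop (nhds 0) := by
    simpa using (delt_tendsto.comp hcast).add (delt_tendsto.comp hcast1)
  have hlim : Filter.Tendsto (fun m : ℕ => 1 - (1 - 2 * l m ^ 3 / m) / (1 + (delt (m:ℝ) + delt ((m+1 : ℕ) : ℝ))) * (1 - 46656 * l m ^ 3 / (m+1 : ℕ))) Filter.atTop (nhds 0) := by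
    have := (((hB.const_sub 1).div (hA.const_add 1) (by norm_num)).mul (hC.const_sub 1)).const_sub 1
    simpa using this
  have hsmall : ∀ᶠ m : ℕ in Filter.atTop, 72 * l m / ((m+1 : ℕ) : ℝ) ≤ ((m+1 : ℕ):ℝ) ^ (-(99/100) : ℝ) := by
    have := ((log_tend 72 2 (a := 1/100) (by norm_num)).comp hcast1).eventually (Iio_mem_nhds one_pos)
    filter_upwards [this] with m hm
    simp only [Function.comp] at hm
    have h0 : (0:ℝ) < ((m+1 : ℕ):ℝ) := by positivity
    have hm : 72 * l m / ((m+1 : ℕ):ℝ) ^ (1/100 : ℝ) < 1 := hm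
    rw [div_lt_one (by positivity)] at hm
    rw [div_le_iff₀ h0]
    have : ((m+1 : ℕ):ℝ) ^ (-(99/100) : ℝ) * ((m+1 : ℕ):ℝ) = ((m+1 : ℕ):ℝ) ^ (1/100 : ℝ) := by
      nth_rewrite 2 [← Real.rpow_one ((m+1 : ℕ):ℝ)]
      rw [← Real.rpow_add h0]; norm_num
    rw [this]; exact hm.le
  have hexp : ∀ᶠ x : ℝ in Filter.atTop, Real.exp 3 * x ^ (-(8/100) : ℝ) ≤ 1/2 := by
    have := (tendsto_rpow_neg_atTop (y := 8/100) (by norm_num)).const_mul (Real.exp 3)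
    rw [mul_zero] at this
    exact (this.eventually (Iio_mem_nhds (show (0:ℝ) < 1/2 by norm_num))).mono (fun x hx => le_of_lt hx)
  refine squeeze_zero' ?_ ?_ hlim
  · filter_upwards with m
    have : 0 ≤ ∑ᶠ x : Option (GraphClass (m+1)), |muD (m+1) (d (m+1)) x - etaD (m+1) (d (m+1)) (rep (m+1)) x| :=
      finsum_nonneg (fun x => abs_nonneg _)
    positivity
  · filter_upwards [(Filter.tendsto_add_atTop_nat 1).eventually hd, hratio, hsmall, hcast.eventually hexp, hcast1.eventually hexp,
      hB.eventually (Iio_mem_nhds one_pos)] with m hdm hr hs he1 he2 hb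
    obtain ⟨hm1, hm2⟩ := hr
    obtain ⟨hd4, hdl⟩ := hdm
    have hn0 : (0:ℝ) < ((m+1 : ℕ):ℝ) := by positivity
    have hl4 : 4 ≤ l m := le_trans (by exact_mod_cast hd4) hdl
    have hlt : l m < m := by
      have hb : 2 * l m ^ 3 / m < 1 := hb
      rw [div_lt_one (by linarith)] at hb
      nlinarith [pow_pos (show 0 < l m by linarith) 2, pow_le_pow_left₀ (by norm_num) hl4 2]
    have hq : 36 * l m / m ≤ 72 * l m / ((m+1 : ℕ):ℝ) := by
      rw [div_le_div_iff₀ (by linarith) hn0]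
      nlinarith
    obtain ⟨t, ht⟩ := hde (m+1)
    have ht : d (m+1) = 2 * t := by omega
    have hr1 := hrep (m+1)
    revert hr1
    generalize rep (m+1) = rp
    revert rp hd4 hdl
    rw [ht]
    intro hd4 hdl rp hr1
    refine final_bound (m := m) (t := t) (l := l m) (by omega) hdl hlt ?_ ?_ he1 he2 hb rp hr1
    · refine (hq.trans hs).trans ?_
      apply Real.rpow_le_rpow_of_nonpos (by linarith) (by push_cast; linarith) (by norm_num)
    · refine le_trans ?_ hs
      gcongr; norm_num
end

section
/- Let n be odd, let d be an even integer with 4 ≤ d ≤ n-2, let L be a d-regular graph on n-1 vertices, let M be an induced d-matching of L, let r be a vertex of L, and let t ≥ 1. If L admits t strong independent spanning trees rooted at r with respect to M, then the d-regular graph op(L, M) on n vertices admits t independent spanning trees rooted at r. -/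
open Filter

/-- The spanning trees `T 0, …, T (t-1)` of `G` are independent spanning trees rooted at `r`:
each `T i` is a spanning tree of `G` (a tree on the whole vertex set, all of whose edges lie
in `G`), and for every vertex `v ≠ r`, the paths from `v` to `r` in any two distinct trees
share only the vertices `v` and `r`. -/
def IsIST {n : ℕ} (G : SimpleGraph (Fin n)) (r : Fin n) {t : ℕ}
    (T : Fin t → SimpleGraph (Fin n)) : Prop :=
  (∀ i, T i ≤ G ∧ (T i).IsTree) ∧
  ∀ v : Fin n, v ≠ r → ∀ i j : Fin t, i ≠ j →
    ∀ p : (T i).Walk v r, ∀ q : (T j).Walk v r, p.IsPath → q.IsPath →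
      ∀ x : Fin n, x ∈ p.support → x ∈ q.support → x = v ∨ x = r

/-- `G` contains (at least) `t` independent spanning trees rooted at `r`. -/
def HasISTs {n : ℕ} (G : SimpleGraph (Fin n)) (r : Fin n) (t : ℕ) : Prop :=
  ∃ T : Fin t → SimpleGraph (Fin n), IsIST G r T

/-- `M` is an induced `d`-matching of `L`: a subgraph of `L` in which every vertex has at
most one neighbour, consisting of `d/2` edges (hence spanning `d` vertices), and such
that the subgraph of `L` induced on the spanned vertices consists exactly of these
edges. -/
def IsInducedMatching {n : ℕ} (L M : SimpleGraph (Fin n)) (d : ℕ) : Prop :=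
  M ≤ L ∧
  (∀ v w x : Fin n, M.Adj v w → M.Adj v x → w = x) ∧
  Nat.card M.edgeSet = d / 2 ∧
  (∀ u v : Fin n, u ∈ M.support → v ∈ M.support → L.Adj u v → M.Adj u v)

/-- `L` admits `t` strong independent spanning trees rooted at `r` with respect to the
induced matching `M`: there are ISTs `T_1,…,T_t` of `L` rooted at `r` such that (P1) no
edge of any `T_i` lies in `M`, and (P2) for all distinct `i, j` and all `u, v ∈ V(M)`,
the paths from `u` to `r` in `T_i` and from `v` to `r` in `T_j` intersect exactly in
`{u, r}` if `u = v`, and exactly in `{r}` if `u ≠ v`. -/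
def HasStrongISTs {n : ℕ} (L M : SimpleGraph (Fin n)) (r : Fin n) (t : ℕ) : Prop :=
  ∃ T : Fin t → SimpleGraph (Fin n),
    IsIST L r T ∧
    (∀ i, Disjoint (T i) M) ∧
    (∀ i j : Fin t, i ≠ j → ∀ u v : Fin n, u ∈ M.support → v ∈ M.support →
      ∀ p : (T i).Walk u r, ∀ q : (T j).Walk v r, p.IsPath → q.IsPath →
        {x : Fin n | x ∈ p.support ∧ x ∈ q.support} =
          (if u = v then ({u, r} : Set (Fin n)) else {r}))

/-- The operation `op`: given a graph `L` on `n-1` vertices and a matching `M ⊆ L`, delete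
the edges of `M` from `L`, add the new vertex `⟨n-1⟩`, and join it to every vertex covered
by `M`.  Vertices of `L` are embedded into `Fin n` via `Fin.castLE`. -/
noncomputable def opGraphM (n : ℕ) (L M : SimpleGraph (Fin (n - 1))) :
    SimpleGraph (Fin n) :=
  if h : 1 ≤ n then
    SimpleGraph.fromEdgeSet
      ((Sym2.map (Fin.castLE (Nat.sub_le n 1))) '' (L.edgeSet \ M.edgeSet) ∪
       {f : Sym2 (Fin n) | ∃ x : Fin (n - 1), x ∈ M.support ∧
          f = s(Fin.castLE (Nat.sub_le n 1) x, (⟨n - 1, by omega⟩ : Fin n))})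
  else ⊥

/-- Add a pendant vertex `w` attached at `e u`. -/
def pend {V W : Type*} (T : SimpleGraph V) (e : V ↪ W) (w : W) (u : V) : SimpleGraph W :=
  T.map e ⊔ SimpleGraph.edge w (e u)

/-- The natural homomorphism into the extended graph. -/
def pendHom {V W : Type*} (T : SimpleGraph V) (e : V ↪ W) (w : W) (u : V) : T →g pend T e w u where
  toFun := e
  map_rel' := fun {a b} h => Or.inl (by simpa using h)

theorem pend_adj_new {V W : Type*} (T : SimpleGraph V) (e : V ↪ W) (w : W) (u : V)
    (hw : ∀ x, e x ≠ w) : (pend T e w u).Adj w (e u) := by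
  refine Or.inr ?_
  rw [SimpleGraph.edge_adj]
  exact ⟨Or.inl ⟨rfl, rfl⟩, (hw u).symm⟩

theorem pend_isTree {V W : Type*} [Finite V] [Finite W] (T : SimpleGraph V) (e : V ↪ W) (w : W)
    (u : V) (hw : ∀ x, e x ≠ w) (hs : ∀ y, y ≠ w → ∃ x, e x = y)
    (hc : Nat.card W = Nat.card V + 1) (hT : T.IsTree) : (pend T e w u).IsTree := by
  rw [SimpleGraph.isTree_iff_connected_and_card] at hT ⊢
  obtain ⟨hconn, hcard⟩ := hT
  have hreach : ∀ y, (pend T e w u).Reachable y (e u) := by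
    intro y
    by_cases hy : y = w
    · subst hy
      exact (pend_adj_new T e y u hw).reachable
    · obtain ⟨x, rfl⟩ := hs y hy
      exact (hconn.preconnected x u).map (pendHom T e w u)
  refine ⟨?_, ?_⟩
  · have : Nonempty W := ⟨w⟩
    exact ⟨fun a b => (hreach a).trans (hreach b).symm⟩
  · have hE : (pend T e w u).edgeSet = insert s(w, e u) (e.sym2Map '' T.edgeSet) := by
      unfold pend
      rw [SimpleGraph.edgeSet_sup, SimpleGraph.edgeSet_map, SimpleGraph.edgeSet_edge_of_ne (hw u).symm]
      rw [Set.union_singleton]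
    have hnot : s(w, e u) ∉ e.sym2Map '' T.edgeSet := by
      rintro ⟨z, -, hz⟩
      have : w ∈ e.sym2Map z := by rw [hz]; simp
      rw [Function.Embedding.sym2Map_apply, Sym2.mem_map] at this
      obtain ⟨a, -, ha⟩ := this
      exact hw a ha
    rw [Nat.card_coe_set_eq] at hcard ⊢
    rw [hE, Set.ncard_insert_of_notMem hnot (Set.toFinite _),
      Set.ncard_image_of_injective _ e.sym2Map.injective, hcard, hc]

theorem path_unique_of_tree {V : Type*} {T : SimpleGraph V} (hT : T.IsTree) {a b : V}
    (p q : T.Walk a b) (hp : p.IsPath) (hq : q.IsPath) : p = q :=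
  congrArg Subtype.val ((hT.isAcyclic.subsingleton_path a b).elim ⟨p, hp⟩ ⟨q, hq⟩)

/-- Lifting a path to the extended graph. -/
theorem pend_lift {V W : Type*} (T : SimpleGraph V) (e : V ↪ W) (w : W)
    (u : V) {a b : V} (q : T.Walk a b) (hq : q.IsPath) :
    ∃ q' : (pend T e w u).Walk (e a) (e b), q'.IsPath ∧
      ∀ x, x ∈ q'.support ↔ ∃ y ∈ q.support, e y = x := by
  have hinj : Function.Injective (pendHom T e w u) := e.injective
  have h1 : (q.map (pendHom T e w u)).IsPath := SimpleGraph.Walk.IsPath.map hinj hq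
  have h2 : ∀ x, x ∈ (q.map (pendHom T e w u)).support ↔
      ∃ y ∈ q.support, pendHom T e w u y = x := by
    intro x
    rw [SimpleGraph.Walk.support_map, List.mem_map]
  exact ⟨q.map (pendHom T e w u), h1, h2⟩

/-- Paths from old vertices in the extended tree come from paths in the old tree. -/
theorem pend_support_old {V W : Type*} (T : SimpleGraph V) (e : V ↪ W) (w : W)
    (u : V) (hT : T.IsTree) (hT' : (pend T e w u).IsTree) (a b : V)
    (p : (pend T e w u).Walk (e a) (e b)) (hp : p.IsPath) :
    ∃ q : T.Walk a b, q.IsPath ∧ ∀ x, x ∈ p.support ↔ ∃ y ∈ q.support, e y = x := by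
  obtain ⟨q, hq, -⟩ := hT.existsUnique_path a b
  obtain ⟨q', hq', hmem⟩ := pend_lift T e w u q hq
  refine ⟨q, hq, ?_⟩
  rw [path_unique_of_tree hT' p q' hp hq']
  exact hmem

/-- Paths from the new vertex in the extended tree. -/
theorem pend_support_new {V W : Type*} (T : SimpleGraph V) (e : V ↪ W) (w : W)
    (u : V) (hw : ∀ x, e x ≠ w) (hT : T.IsTree) (hT' : (pend T e w u).IsTree) (b : V)
    (p : (pend T e w u).Walk w (e b)) (hp : p.IsPath) :
    ∃ q : T.Walk u b, q.IsPath ∧ ∀ x, x ∈ p.support ↔ x = w ∨ ∃ y ∈ q.support, e y = x := by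
  obtain ⟨q, hq, -⟩ := hT.existsUnique_path u b
  obtain ⟨q', hq', hmem⟩ := pend_lift T e w u q hq
  refine ⟨q, hq, ?_⟩
  have h : p = SimpleGraph.Walk.cons (pend_adj_new T e w u hw) q' := by
    refine path_unique_of_tree hT' _ _ hp ?_
    rw [SimpleGraph.Walk.cons_isPath_iff]
    refine ⟨hq', ?_⟩
    rw [hmem]
    rintro ⟨y, -, hy⟩
    exact hw y hy
  intro x
  rw [h, SimpleGraph.Walk.support_cons, List.mem_cons, hmem]

/-- The support of a matching with `k` edges has at least `2k` vertices. -/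
theorem two_mul_card_le_support {m : ℕ} (M : SimpleGraph (Fin m))
    (h : ∀ v w x : Fin m, M.Adj v w → M.Adj v x → w = x) :
    2 * Nat.card M.edgeSet ≤ Nat.card M.support := by
  classical
  rw [Nat.card_eq_fintype_card, ← SimpleGraph.edgeFinset_card, ← M.sum_degrees_eq_twice_card_edges,
    Nat.card_eq_fintype_card, ← Set.toFinset_card, Finset.card_eq_sum_ones]
  rw [← Finset.sum_subset (Finset.subset_univ M.support.toFinset)]
  · refine Finset.sum_le_sum fun v _ => ?_
    rw [← SimpleGraph.card_neighborFinset_eq_degree, Finset.card_le_one]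
    intro a ha b hb
    exact h v a b (by simpa using ha) (by simpa using hb)
  · intro v _ hv
    by_contra h0
    obtain ⟨x, hx⟩ := (M.degree_pos_iff_exists_adj v).1 (Nat.pos_of_ne_zero h0)
    exact hv (by simpa [SimpleGraph.mem_support] using ⟨x, hx⟩)

/-- The number of ISTs is at most the degree of the root, if some vertex is not adjacent to it. -/
theorem card_ist_le {m : ℕ} (L : SimpleGraph (Fin m)) (r : Fin m) (t : ℕ)
    (T : Fin t → SimpleGraph (Fin m)) (hT : IsIST L r T) (v : Fin m) (hv : v ≠ r)
    (hnadj : ¬ L.Adj v r) : t ≤ Nat.card (L.neighborSet r) := by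
  choose p hp using fun i => ((hT.1 i).2.existsUnique_path v r).exists
  have hnil : ∀ i, ¬ (p i).Nil := fun i => SimpleGraph.Walk.not_nil_of_ne hv
  have hadj : ∀ i, (T i).Adj (p i).penultimate r := fun i => (p i).adj_penultimate (hnil i)
  let f : Fin t → L.neighborSet r := fun i =>
    ⟨(p i).penultimate, ((hT.1 i).1 (hadj i)).symm⟩
  have hf : Function.Injective f := by
    intro i j hij
    by_contra hne
    have heq : (p i).penultimate = (p j).penultimate := congrArg Subtype.val hij
    rcases hT.2 v hv i j hne (p i) (p j) (hp i) (hp j) (p i).penultimate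
      (SimpleGraph.Walk.getVert_mem_support _ _)
      (heq ▸ SimpleGraph.Walk.getVert_mem_support _ _) with h | h
    · exact hnadj ((hT.1 i).1 (h ▸ hadj i))
    · exact (hadj i).ne h
  simpa using Nat.card_le_card_of_injective f hf

/-- A regular graph with an induced matching of at least two edges has a non-neighbour of `r`. -/
theorem exists_nonadj {m d : ℕ} (hd4 : 4 ≤ d) (L M : SimpleGraph (Fin m))
    (hreg : ∀ v, Nat.card (L.neighborSet v) = d) (hM : IsInducedMatching L M d)
    (r : Fin m) : ∃ v, v ≠ r ∧ ¬ L.Adj v r := by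
  classical
  by_contra hcon
  push Not at hcon
  have hr : L.neighborSet r = {r}ᶜ := by
    ext x
    simp only [SimpleGraph.mem_neighborSet, Set.mem_compl_iff, Set.mem_singleton_iff]
    exact ⟨fun h => h.ne', fun h => (hcon x h).symm⟩
  have hcard : ∀ v : Fin m, ({v}ᶜ : Set (Fin m)).ncard = d := by
    intro v
    rw [← hreg r, Nat.card_coe_set_eq, hr, Set.ncard_compl, Set.ncard_compl]
    simp
  have hcomplete : ∀ a b, a ≠ b → L.Adj a b := by
    intro a b hab
    have hsub : L.neighborSet a ⊆ {a}ᶜ := fun x hx h => (SimpleGraph.Adj.ne hx) h.symm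
    have heq : L.neighborSet a = {a}ᶜ := by
      refine Set.eq_of_subset_of_ncard_le hsub ?_ (Set.toFinite _)
      rw [hcard, ← Nat.card_coe_set_eq, hreg]
    have : b ∈ L.neighborSet a := by rw [heq]; exact fun h => hab h.symm
    exact this
  obtain ⟨-, hmat, hE, hind⟩ := hM
  have hsupp := two_mul_card_le_support M hmat
  have h4 : 2 < M.support.ncard := by rw [← Nat.card_coe_set_eq]; omega
  rw [Set.two_lt_ncard_iff (Set.toFinite _)] at h4
  obtain ⟨a, b, c, ha, hb, hc, hab, hac, hbc⟩ := h4
  exact hbc (hmat a b c (hind a b ha hb (hcomplete a b hab)) (hind a c ha hc (hcomplete a c hac)))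

/-- If `L` is a `d`-regular graph on `n-1` vertices (`n` odd, `d` even,
`4 ≤ d ≤ n-2`) admitting `t ≥ 1` strong ISTs rooted at `r` with respect to an induced
`d`-matching `M`, then the `d`-regular graph `op(L,M)` on `n` vertices admits `t` ISTs
rooted at `r`. -/
theorem stmt17 (n d : ℕ) (hodd : Odd n) (hde : Even d) (hd4 : 4 ≤ d) (hdn : d ≤ n - 2)
    (L M : SimpleGraph (Fin (n - 1)))
    (hreg : ∀ v, Nat.card (L.neighborSet v) = d)
    (hM : IsInducedMatching L M d)
    (r : Fin (n - 1)) (t : ℕ) (ht : 1 ≤ t)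
    (hstrong : HasStrongISTs L M r t) :
    HasISTs (opGraphM n L M) (Fin.castLE (Nat.sub_le n 1) r) t := by
  obtain ⟨m, rfl⟩ : ∃ m, n = m + 1 := ⟨n - 1, by omega⟩
  change SimpleGraph (Fin m) at L M
  change Fin m at r
  obtain ⟨T, hT, hdisj, hP2⟩ := hstrong
  change Fin t → SimpleGraph (Fin m) at T
  obtain ⟨v0, hv0, hnadj⟩ := exists_nonadj hd4 L M hreg hM r
  have htd : t ≤ d := (card_ist_le L r t T hT v0 hv0 hnadj).trans (hreg r).le
  have hsupp : t ≤ Nat.card M.support := by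
    have := two_mul_card_le_support M hM.2.1
    have h2 : Nat.card M.edgeSet = d / 2 := hM.2.2.1
    obtain ⟨k, hk⟩ := hde
    omega
  obtain ⟨u⟩ : Nonempty (Fin t ↪ M.support) := by
    classical
    rw [Function.Embedding.nonempty_iff_card_le]
    simpa [Nat.card_eq_fintype_card] using hsupp
  let e : Fin m ↪ Fin (m + 1) := Fin.castLEEmb (Nat.le_succ m)
  let w : Fin (m + 1) := Fin.last m
  have hw : ∀ x, e x ≠ w := by
    intro x h
    have h1 : (x : ℕ) = m := congrArg Fin.val h
    have := x.isLt
    omega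
  have hs : ∀ y, y ≠ w → ∃ x, e x = y := by
    intro y hy
    have h1 : (y : ℕ) ≠ m := fun h => hy (Fin.ext h)
    exact ⟨⟨y, by omega⟩, Fin.ext rfl⟩
  have hTree : ∀ i, (pend (T i) e w (u i).1).IsTree := fun i =>
    pend_isTree _ _ _ _ hw hs (by simp) (hT.1 i).2
  refine ⟨fun i => pend (T i) e w (u i).1, fun i => ⟨?_, hTree i⟩, ?_⟩
  · intro a b hab
    unfold opGraphM
    rw [dif_pos (by omega), SimpleGraph.fromEdgeSet_adj]
    refine ⟨?_, hab.ne⟩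
    rcases hab with hab | hab
    · obtain ⟨x, y, hxy, rfl, rfl⟩ := (SimpleGraph.map_adj _ _ _ _).1 hab
      refine Or.inl ⟨s(x, y), ⟨(hT.1 i).1 hxy, fun hm => ?_⟩, rfl⟩
      exact (SimpleGraph.disjoint_left.1 (hdisj i)) x y hxy hm
    · rw [SimpleGraph.edge_adj] at hab
      refine Or.inr ⟨(u i : Fin m), (u i).2, ?_⟩
      rcases hab.1 with ⟨rfl, rfl⟩ | ⟨rfl, rfl⟩
      · exact Sym2.eq_swap
      · rfl
  · intro v hv i j hij p q hp hq x hxp hxq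
    by_cases hvw : v = w
    · obtain rfl : w = v := hvw.symm
      obtain ⟨p', hp', hpx⟩ := pend_support_new (T i) e w (u i).1 hw (hT.1 i).2 (hTree i) r p hp
      obtain ⟨q', hq', hqx⟩ := pend_support_new (T j) e w (u j).1 hw (hT.1 j).2 (hTree j) r q hq
      rcases (hpx x).1 hxp with h | ⟨y, hy, rfl⟩
      · exact Or.inl h
      rcases (hqx _).1 hxq with h | ⟨y', hy', hyy⟩
      · exact Or.inl h
      obtain rfl := e.injective hyy
      right
      have hne : (u i : Fin m) ≠ u j := fun h => hij (u.injective (Subtype.ext h))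
      have h := hP2 i j hij (u i).1 (u j).1 (u i).2 (u j).2 p' q' hp' hq'
      rw [if_neg hne] at h
      have : y' ∈ ({r} : Set (Fin m)) := h ▸ (⟨hy, hy'⟩ : _ ∧ _)
      rw [Set.mem_singleton_iff.1 this]
      rfl
    · obtain ⟨a, rfl⟩ := hs v hvw
      obtain ⟨p', hp', hpx⟩ := pend_support_old (T i) e w (u i).1 (hT.1 i).2 (hTree i) a r p hp
      obtain ⟨q', hq', hqx⟩ := pend_support_old (T j) e w (u j).1 (hT.1 j).2 (hTree j) a r q hq
      obtain ⟨y, hy, rfl⟩ := (hpx x).1 hxp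
      obtain ⟨y', hy', hyy⟩ := (hqx _).1 hxq
      obtain rfl := e.injective hyy
      have har : a ≠ r := fun h => hv (by rw [h]; rfl)
      rcases hT.2 a har i j hij p' q' hp' hq' y' hy hy' with h | h
      · exact Or.inl (by rw [h])
      · exact Or.inr (by rw [h]; rfl)
end

section
/- Let n → ∞ through even integers and let d = d(n) satisfy 4 ≤ d ≤ (log n)²; set k = ⌊d/4⌋ and β = log₂ n + 20·log₂ log n. Sample (M_1,…,M_d) = G''(n,d), for each i ∈ [k] let G_i = M_{4i-3} ∪ M_{4i-2} ∪ M_{4i-1}, and let r be a uniformly random vertex of [n], independent of the graph. Then with high probability, for every vertex u ≠ r there is at most one index i ∈ [k] such that the graph distance from u to r in G_i is at most β/3. -/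
/-- `M` is an ordered `d`-tuple of pairwise edge-disjoint perfect matchings of `K_n`
(each matching being viewed as a 1-regular simple graph on `[n]`). -/
def IsPMTuple {n d : ℕ} (M : Fin d → SimpleGraph (Fin n)) : Prop :=
  (∀ i, ∀ v, Nat.card ((M i).neighborSet v) = 1) ∧
  ∀ i j, i ≠ j → Disjoint (M i) (M j)

open Classical in
/-- Probability that `G''(n,d)`, the uniformly random ordered `d`-tuple of pairwise
edge-disjoint perfect matchings of `K_n`, satisfies the property `A`. -/
noncomputable def tupleProb (n d : ℕ) (A : (Fin d → SimpleGraph (Fin n)) → Prop) : ℝ :=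
  ((Finset.univ.filter (fun M : Fin d → SimpleGraph (Fin n) =>
      IsPMTuple M ∧ A M)).card : ℝ) /
  ((Finset.univ.filter (fun M : Fin d → SimpleGraph (Fin n) => IsPMTuple M)).card : ℝ)

/-- The `i`-th group graph `G_i`: the union of the matchings in colours `4i-3, 4i-2,
4i-1` (1-indexed), i.e. (0-indexed) in colours `4i, 4i+1, 4i+2`. -/
noncomputable def groupGraph {n d : ℕ} (M : Fin d → SimpleGraph (Fin n)) (i : ℕ) :
    SimpleGraph (Fin n) :=
  ⨆ c : Fin d, ⨆ _ : c.val = 4 * i ∨ c.val = 4 * i + 1 ∨ c.val = 4 * i + 2, M c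

open Classical in
/-- Probability of the event `A` for the pair consisting of the uniformly random tuple
`G''(n,d)` together with an independent uniformly random root vertex `r ∈ [n]`. -/
noncomputable def rootProb (n d : ℕ)
    (A : (Fin d → SimpleGraph (Fin n)) → Fin n → Prop) : ℝ :=
  ((Finset.univ.filter (fun P : (Fin d → SimpleGraph (Fin n)) × Fin n =>
      IsPMTuple P.1 ∧ A P.1 P.2)).card : ℝ) /
  ((Finset.univ.filter (fun P : (Fin d → SimpleGraph (Fin n)) × Fin n =>
      IsPMTuple P.1)).card : ℝ)

section Aux

open Classical in
/-- The partner of `v` in the matching `G`. -/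
noncomputable def mate {V : Type*} (G : SimpleGraph V) (v : V) : V :=
  if h : ∃ w, G.Adj v w then h.choose else v

def IsPM {V : Type*} (G : SimpleGraph V) : Prop := ∀ v, ∃ w, ∀ z, G.Adj v z ↔ z = w

lemma isPM_iff {V : Type*} (G : SimpleGraph V) :
    (∀ v, Nat.card (G.neighborSet v) = 1) ↔ IsPM G := by
  unfold IsPM
  refine forall_congr' fun v => ?_
  rw [Nat.card_eq_one_iff_exists]
  constructor
  · rintro ⟨⟨w, hw⟩, h⟩
    refine ⟨w, fun z => ⟨fun hz => ?_, fun hz => hz ▸ hw⟩⟩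
    exact congrArg Subtype.val (h ⟨z, hz⟩)
  · rintro ⟨w, h⟩
    refine ⟨⟨w, (h w).2 rfl⟩, ?_⟩
    rintro ⟨z, hz⟩
    exact Subtype.ext ((h z).1 hz)

lemma adj_iff_mate {V : Type*} {G : SimpleGraph V} (hG : IsPM G) (v z : V) :
    G.Adj v z ↔ z = mate G v := by
  obtain ⟨w, hw⟩ := hG v
  have h : ∃ w, G.Adj v w := ⟨w, (hw w).2 rfl⟩
  have h1 : G.Adj v (mate G v) := by
    unfold mate
    rw [dif_pos h]
    exact h.choose_spec
  rw [hw, (hw _).1 h1]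

lemma adj_mate {V : Type*} {G : SimpleGraph V} (hG : IsPM G) (v : V) : G.Adj v (mate G v) :=
  (adj_iff_mate hG v _).2 rfl

lemma mate_mate {V : Type*} {G : SimpleGraph V} (hG : IsPM G) (v : V) :
    mate G (mate G v) = v :=
  ((adj_iff_mate hG _ _).1 (adj_mate hG v).symm).symm

/-- End vertex of the walk from `r` with colour word `w` (last letter at the head). -/
noncomputable def ev {V C : Type*} (M : C → SimpleGraph V) : List C → V → V
  | [], r => r
  | c :: w, r => mate (M c) (ev M w r)

open Classical in
/-- Visited vertices. -/
noncomputable def vis {V C : Type*} (M : C → SimpleGraph V) : List C → V → Finset V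
  | [], r => {r}
  | c :: w, r => insert (ev M (c :: w) r) (vis M w r)

lemma ev_mem_vis {V C : Type*} (M : C → SimpleGraph V) (w : List C) (r : V) :
    ev M w r ∈ vis M w r := by
  cases w <;> simp [vis, ev]

open Classical in
lemma card_vis {V C : Type*} (M : C → SimpleGraph V) (w : List C) (r : V) :
    (vis M w r).card ≤ w.length + 1 := by
  induction w with
  | nil => simp [vis]
  | cons c w ih =>
    have := Finset.card_insert_le (ev M (c :: w) r) (vis M w r)
    simp only [vis, List.length_cons]
    omega

/-- PM tuples in general form. -/
def PMT {V C : Type*} (M : C → SimpleGraph V) : Prop :=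
  (∀ i, IsPM (M i)) ∧ ∀ i j, i ≠ j → ∀ p q, (M i).Adj p q → ¬ (M j).Adj p q

lemma isPMTuple_iff {n d : ℕ} (M : Fin d → SimpleGraph (Fin n)) : IsPMTuple M ↔ PMT M := by
  unfold IsPMTuple PMT
  refine and_congr (forall_congr' fun i => isPM_iff _) ?_
  refine forall_congr' fun i => forall_congr' fun j => forall_congr' fun _ => ?_
  rw [SimpleGraph.disjoint_left]

variable {V C : Type*} [DecidableEq V] [DecidableEq C]

lemma isPM_comap {G : SimpleGraph V} (hG : IsPM G) (σ : Equiv.Perm V) :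
    IsPM (G.comap σ) := by
  intro v
  refine ⟨σ.symm (mate G (σ v)), fun z => ?_⟩
  rw [SimpleGraph.comap_adj, adj_iff_mate hG, Equiv.eq_symm_apply]

lemma mate_comap {G : SimpleGraph V} (hG : IsPM G) (σ : Equiv.Perm V) (v : V) :
    mate (G.comap σ) v = σ.symm (mate G (σ v)) := by
  symm
  rw [← adj_iff_mate (isPM_comap hG σ), SimpleGraph.comap_adj, Equiv.apply_symm_apply]
  exact adj_mate hG _

/-- the switching -/
def sw (M : C → SimpleGraph V) (c : C) (y a : V) : C → SimpleGraph V :=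
  Function.update M c ((M c).comap (Equiv.swap y a))

lemma sw_sw (M : C → SimpleGraph V) (c : C) (y a : V) : sw (sw M c y a) c y a = M := by
  unfold sw
  rw [Function.update_idem, Function.update_self, SimpleGraph.comap_comap]
  have : (⇑(Equiv.swap y a) ∘ ⇑(Equiv.swap y a)) = id := by
    ext v; simp
  rw [this, SimpleGraph.comap_id, Function.update_eq_self]

lemma ev_sw_of_notMem (M : C → SimpleGraph V) (c : C) (y a r : V) (w : List C) (hw : c ∉ w) :
    ev (sw M c y a) w r = ev M w r := by
  induction w with
  | nil => rfl
  | cons e w ih =>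
    simp only [List.mem_cons, not_or] at hw
    simp only [ev]
    rw [ih hw.2]
    unfold sw
    rw [Function.update_of_ne (Ne.symm hw.1)]

lemma ev_sw (M : C → SimpleGraph V) (hM : PMT M) (c : C) (y a r : V) (w : List C)
    (hy : y ∉ vis M w r) (ha : a ∉ vis M w r) :
    ev (sw M c y a) w r = ev M w r := by
  induction w with
  | nil => rfl
  | cons e w ih =>
    simp only [vis, Finset.mem_insert, not_or] at hy ha
    simp only [ev] at hy ha ⊢
    rw [ih hy.2 ha.2]
    by_cases he : e = c
    · subst he
      unfold sw
      rw [Function.update_self, mate_comap (hM.1 e)]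
      have h0 := ev_mem_vis M w r
      rw [Equiv.swap_apply_of_ne_of_ne (a := y) (b := a) (x := ev M w r)
        (fun h => hy.2 (h ▸ h0)) (fun h => ha.2 (h ▸ h0)), Equiv.symm_swap,
        Equiv.swap_apply_of_ne_of_ne (Ne.symm hy.1) (Ne.symm ha.1)]
    · unfold sw
      rw [Function.update_of_ne he]

lemma pmt_sw (M : C → SimpleGraph V) (hM : PMT M) (c : C) (x y a : V)
    (hxy : y = mate (M c) x) (hax : a ≠ x) (hay : a ≠ y)
    (h1 : ∀ e, a ≠ mate (M e) x) (h2 : ∀ e, a ≠ mate (M c) (mate (M e) y)) :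
    PMT (sw M c y a) := by
  have hx : x = mate (M c) y := by rw [hxy, mate_mate (hM.1 c)]
  have hxney : x ≠ y := by
    have := adj_mate (hM.1 c) x
    rw [← hxy] at this
    exact this.ne
  -- key claim
  have key : ∀ e, e ≠ c → ∀ p q, ((M c).comap (Equiv.swap y a)).Adj p q →
      ¬ (M e).Adj p q := by
    intro e he
    have half : ∀ p q, (p = y ∨ p = a) → ((M c).comap (Equiv.swap y a)).Adj p q →
        ¬ (M e).Adj p q := by
      rintro p q (rfl | rfl) h h'
      · rw [SimpleGraph.comap_adj, Equiv.swap_apply_left, adj_iff_mate (hM.1 c)] at h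
        rw [adj_iff_mate (hM.1 e)] at h'
        have hq : q = mate (M c) a := by
          rw [← h]
          symm
          apply Equiv.swap_apply_of_ne_of_ne
          · rintro rfl
            rw [Equiv.swap_apply_left] at h
            exact (adj_mate (hM.1 c) a).ne h
          · rintro rfl
            rw [Equiv.swap_apply_right] at h
            apply hax
            rw [hx, h, mate_mate (hM.1 c)]
        apply h2 e
        rw [← h', hq, mate_mate (hM.1 c)]
      · rw [SimpleGraph.comap_adj, Equiv.swap_apply_right, adj_iff_mate (hM.1 c), ← hx] at h
        have hq : q = x := by
          rw [Equiv.swap_apply_eq_iff] at h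
          rw [h]
          exact Equiv.swap_apply_of_ne_of_ne hxney (Ne.symm hax)
        rw [hq] at h'
        exact h1 e ((adj_iff_mate (hM.1 e) _ _).1 h'.symm)
    intro p q h
    by_cases hp : p = y ∨ p = a
    · exact half p q hp h
    by_cases hq : q = y ∨ q = a
    · exact fun h' => half q p hq h.symm h'.symm
    rw [not_or] at hp hq
    rw [SimpleGraph.comap_adj, Equiv.swap_apply_of_ne_of_ne hp.1 hp.2,
      Equiv.swap_apply_of_ne_of_ne hq.1 hq.2] at h
    exact hM.2 c e (Ne.symm he) p q h
  constructor
  · intro i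
    unfold sw
    by_cases hi : i = c
    · subst hi
      rw [Function.update_self]
      exact isPM_comap (hM.1 i) _
    · rw [Function.update_of_ne hi]
      exact hM.1 i
  · intro i j hij p q
    unfold sw
    by_cases hi : i = c
    · subst hi
      rw [Function.update_self, Function.update_of_ne (Ne.symm hij)]
      exact key j (Ne.symm hij) p q
    · rw [Function.update_of_ne hi]
      by_cases hj : j = c
      · subst hj
        rw [Function.update_self]
        exact fun h h' => key i hi p q h' h
      · rw [Function.update_of_ne hj]
        exact hM.2 i j hij p q

open Classical in
lemma card_B [Fintype V] [Fintype C] (r : V) (c : C) (w w' : List C) (hc : c ∉ w') :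
    (Finset.univ.filter (fun M : C → SimpleGraph V => PMT M ∧
      ev M (c :: w) r = ev M w' r ∧ ev M (c :: w) r ∉ vis M w r)).card *
      (Fintype.card V - (w.length + 2 + 2 * Fintype.card C)) ≤
    (Finset.univ.filter (fun M : C → SimpleGraph V => PMT M)).card := by
  set B := (Finset.univ.filter (fun M : C → SimpleGraph V => PMT M ∧
      ev M (c :: w) r = ev M w' r ∧ ev M (c :: w) r ∉ vis M w r)) with hB
  let X : (C → SimpleGraph V) → Finset V := fun M =>
    vis M w r ∪ {ev M (c :: w) r} ∪
      Finset.univ.image (fun e => mate (M e) (ev M w r)) ∪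
      Finset.univ.image (fun e => mate (M c) (mate (M e) (ev M (c :: w) r)))
  have hX : ∀ M, (X M).card ≤ w.length + 2 + 2 * Fintype.card C := by
    intro M
    have a1 := card_vis M w r
    have a2 : (Finset.univ.image (fun e => mate (M e) (ev M w r))).card ≤ Fintype.card C :=
      Finset.card_image_le
    have a3 : (Finset.univ.image
      (fun e => mate (M c) (mate (M e) (ev M (c :: w) r)))).card ≤ Fintype.card C :=
      Finset.card_image_le
    have b1 := Finset.card_union_le (vis M w r ∪ {ev M (c :: w) r} ∪
      Finset.univ.image (fun e => mate (M e) (ev M w r)))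
      (Finset.univ.image (fun e => mate (M c) (mate (M e) (ev M (c :: w) r))))
    have b2 := Finset.card_union_le (vis M w r ∪ {ev M (c :: w) r})
      (Finset.univ.image (fun e => mate (M e) (ev M w r)))
    have b3 := Finset.card_union_le (vis M w r) {ev M (c :: w) r}
    rw [Finset.card_singleton] at b3
    simp only [X]
    omega
  have h1 : B.card * (Fintype.card V - (w.length + 2 + 2 * Fintype.card C)) ≤
      (B.sigma (fun M => (X M)ᶜ)).card := by
    rw [Finset.card_sigma, ← smul_eq_mul]
    apply Finset.card_nsmul_le_sum
    intro M _
    rw [Finset.card_compl]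
    have := hX M
    omega
  refine h1.trans ?_
  let f : (Σ _ : C → SimpleGraph V, V) → (C → SimpleGraph V) :=
    fun P => sw P.1 c (ev P.1 (c :: w) r) P.2
  let g : (C → SimpleGraph V) → (Σ _ : C → SimpleGraph V, V) := fun M =>
    ⟨sw M c (ev M w' r) (mate (M c) (ev M w r)), mate (M c) (ev M w r)⟩
  have main : ∀ P ∈ B.sigma (fun M => (X M)ᶜ), PMT (f P) ∧ g (f P) = P := by
    rintro ⟨M, a⟩ hP
    simp only [Finset.mem_sigma, hB, Finset.mem_filter, Finset.mem_univ, true_and,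
      Finset.mem_compl, X, Finset.mem_union, Finset.mem_singleton, Finset.mem_image,
      not_or, not_exists] at hP
    obtain ⟨⟨hM, he, hy⟩, ⟨⟨ha, hay⟩, ha1⟩, ha2⟩ := hP
    have hxv := ev_mem_vis M w r
    have hax : a ≠ ev M w r := fun h => ha (h ▸ hxv)
    have hxy : ev M w r ≠ ev M (c :: w) r := fun h => hy (h ▸ hxv)
    refine ⟨pmt_sw M hM c (ev M w r) _ a rfl hax hay (fun e h => ha1 e h.symm)
      (fun e h => ha2 e h.symm), ?_⟩
    have e1 : ev (f ⟨M, a⟩) w r = ev M w r := ev_sw M hM c _ a r w hy ha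
    have e2 : ev (f ⟨M, a⟩) w' r = ev M (c :: w) r := by
      rw [he]
      exact ev_sw_of_notMem M c _ a r w' hc
    have e3 : mate (f ⟨M, a⟩ c) (ev M w r) = a := by
      simp only [f, sw]
      rw [Function.update_self, mate_comap (hM.1 c),
        Equiv.swap_apply_of_ne_of_ne hxy (Ne.symm hax)]
      rw [Equiv.symm_swap]
      exact Equiv.swap_apply_left _ _
    simp only [g]
    rw [e1, e2, e3]
    simp only [f]
    rw [sw_sw]
  apply Finset.card_le_card_of_injOn f
  · intro P hP
    simpa using (main P hP).1
  · intro P hP Q hQ h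
    rw [← (main P hP).2, ← (main Q hQ).2, h]


/-- Non-backtracking words of length `a` over the alphabet `S`. -/
def NB (S : Finset C) : ℕ → Finset (List C)
  | 0 => {[]}
  | a + 1 => (NB S a).biUnion fun w => (S.filter (fun c => w.head? ≠ some c)).image (· :: w)

lemma mem_NB_succ (S : Finset C) (a : ℕ) (c : C) (w : List C) :
    c :: w ∈ NB S (a + 1) ↔ w ∈ NB S a ∧ c ∈ S ∧ w.head? ≠ some c := by
  simp only [NB, Finset.mem_biUnion, Finset.mem_image, Finset.mem_filter]
  constructor
  · rintro ⟨w1, h1, c1, ⟨h2, h3⟩, h4⟩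
    rw [List.cons.injEq] at h4
    obtain ⟨rfl, rfl⟩ := h4
    exact ⟨h1, h2, h3⟩
  · rintro ⟨h1, h2, h3⟩
    exact ⟨w, h1, c, ⟨h2, h3⟩, rfl⟩

lemma NB_prop (S : Finset C) (a : ℕ) (w : List C) (hw : w ∈ NB S a) :
    w.length = a ∧ ∀ c ∈ w, c ∈ S := by
  induction a generalizing w with
  | zero =>
    simp only [NB, Finset.mem_singleton] at hw
    subst hw
    simp
  | succ a ih =>
    cases w with
    | nil => simp [NB] at hw
    | cons c w =>
      rw [mem_NB_succ] at hw
      obtain ⟨h1, h2⟩ := ih w hw.1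
      refine ⟨by simp [h1], ?_⟩
      intro e he
      rcases List.mem_cons.1 he with rfl | he
      · exact hw.2.1
      · exact h2 e he

lemma card_NB_succ (S : Finset C) (hS : S.card ≤ 3) (a : ℕ) :
    (NB S (a + 1)).card ≤ 3 * 2 ^ a := by
  induction a with
  | zero =>
    simp only [NB, Finset.singleton_biUnion]
    refine Finset.card_image_le.trans ((Finset.card_filter_le _ _).trans ?_)
    omega
  | succ a ih =>
    rw [NB]
    refine (Finset.card_biUnion_le_card_mul _ _ 2 ?_).trans ?_
    · intro w hw
      cases w with
      | nil => simpa using (NB_prop S _ _ hw).1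
      | cons c w =>
        have hc := ((mem_NB_succ _ _ _ _).1 hw).2.1
        refine Finset.card_image_le.trans ?_
        have : S.filter (fun e => (c :: w).head? ≠ some e) ⊆ S.erase c := by
          intro e he
          rw [Finset.mem_filter] at he
          rw [Finset.mem_erase]
          refine ⟨fun h => he.2 (by simp [h]), he.1⟩
        have h2 := Finset.card_le_card this
        rw [Finset.card_erase_of_mem hc] at h2
        omega
    · rw [pow_succ]
      omega

/-- Non-backtracking words of length at most `L`. -/
def NBle (S : Finset C) (L : ℕ) : Finset (List C) := (Finset.range (L + 1)).biUnion (NB S)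

lemma card_NBle (S : Finset C) (hS : S.card ≤ 3) (L : ℕ) : (NBle S L).card ≤ 4 * 2 ^ L := by
  have h : ∀ L, ∑ a ∈ Finset.range (L + 1), (NB S a).card ≤ 4 * 2 ^ L - 3 := by
    intro L
    induction L with
    | zero => simp [NB]
    | succ L ih =>
      rw [Finset.sum_range_succ]
      have := card_NB_succ S hS L
      have h1 : 1 ≤ 2 ^ L := Nat.one_le_two_pow
      rw [pow_succ]
      omega
  unfold NBle
  refine Finset.card_biUnion_le.trans ((h L).trans (Nat.sub_le _ _))

lemma exists_word (M : C → SimpleGraph V) (hM : PMT M) (S : Finset C) (G : SimpleGraph V)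
    (hG : ∀ p q, G.Adj p q → ∃ c ∈ S, (M c).Adj p q) (r : V) (a : ℕ) :
    ∀ u, G.Reachable u r → G.dist u r = a → ∃ w ∈ NB S a, ev M w r = u ∧
      (∀ z ∈ vis M w r, G.dist z r ≤ a) ∧ ∀ c w0, w = c :: w0 → u ∉ vis M w0 r := by
  induction a with
  | zero =>
    intro u hu h0
    have : u = r := (hu.dist_eq_zero_iff).1 h0
    subst this
    refine ⟨[], by simp [NB], rfl, ?_, ?_⟩
    · simp [vis]
    · simp
  | succ a ih =>
    intro u hu hd
    obtain ⟨p, hp⟩ := hu.exists_walk_length_eq_dist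
    rw [hd] at hp
    cases p with
    | nil => simp at hp
    | @cons _ v _ h p =>
      rw [SimpleGraph.Walk.length_cons] at hp
      have hv : G.Reachable v r := ⟨p⟩
      have h1 : G.dist v r ≤ a := by
        have := SimpleGraph.dist_le p
        omega
      have h2 : a ≤ G.dist v r := by
        obtain ⟨q, hq⟩ := hv.exists_walk_length_eq_dist
        have := SimpleGraph.dist_le (SimpleGraph.Walk.cons h q)
        rw [SimpleGraph.Walk.length_cons] at this
        omega
      obtain ⟨w, hw, hev, hvis, -⟩ := ih v hv (le_antisymm h1 h2)
      obtain ⟨c, hcS, hc⟩ := hG u v h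
      have hum : u = mate (M c) v := (adj_iff_mate (hM.1 c) _ _).1 hc.symm
      have hunot : u ∉ vis M w r := fun hh => by
        have := hvis u hh
        omega
      refine ⟨c :: w, ?_, ?_, ?_, ?_⟩
      · rw [mem_NB_succ]
        refine ⟨hw, hcS, ?_⟩
        intro hh
        cases w with
        | nil => simp at hh
        | cons c' w1 =>
          simp only [List.head?_cons, Option.some.injEq] at hh
          subst hh
          apply hunot
          simp only [ev] at hev
          rw [hum, ← hev, mate_mate (hM.1 _)]
          simp only [vis, Finset.mem_insert]
          exact Or.inr (ev_mem_vis _ _ _)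
      · simp only [ev]
        rw [hev, hum]
      · intro z hz
        simp only [vis, Finset.mem_insert, ev] at hz
        rcases hz with rfl | hz
        · rw [hev, ← hum, hd]
        · exact (hvis z hz).trans (Nat.le_succ a)
      · intro c1 w1 h1
        rw [List.cons.injEq] at h1
        rw [← h1.2]
        exact hunot

end Aux

section Main

/-- Colours of group `i`. -/
def cols (d i : ℕ) : Finset (Fin d) :=
  Finset.univ.filter (fun c => c.val = 4 * i ∨ c.val = 4 * i + 1 ∨ c.val = 4 * i + 2)

lemma card_cols (d i : ℕ) : (cols d i).card ≤ 3 := by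
  have : ((cols d i).image Fin.val) ⊆ {4 * i, 4 * i + 1, 4 * i + 2} := by
    intro x hx
    simp only [cols, Finset.mem_image, Finset.mem_filter, Finset.mem_univ, true_and] at hx
    obtain ⟨c, hc, rfl⟩ := hx
    simpa using hc
  rw [← Finset.card_image_of_injective _ Fin.val_injective]
  exact (Finset.card_le_card this).trans Finset.card_le_three

lemma groupGraph_adj {n d : ℕ} (M : Fin d → SimpleGraph (Fin n)) (i : ℕ) (p q : Fin n)
    (h : (groupGraph M i).Adj p q) : ∃ c ∈ cols d i, (M c).Adj p q := by
  unfold groupGraph at h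
  simp only [SimpleGraph.iSup_adj] at h
  obtain ⟨c, hc, h⟩ := h
  exact ⟨c, by simpa [cols] using hc, h⟩

open Classical in
lemma card_bad (n d L k : ℕ) (r : Fin n) (hK : 0 < n - (L + 1 + 2 * d)) :
    (Finset.univ.filter (fun M : Fin d → SimpleGraph (Fin n) => PMT M ∧
      ∃ u, u ≠ r ∧ ∃ i j, i < k ∧ j < k ∧ i ≠ j ∧
        ((groupGraph M i).Reachable u r ∧ (groupGraph M i).dist u r ≤ L) ∧
        ((groupGraph M j).Reachable u r ∧ (groupGraph M j).dist u r ≤ L))).card ≤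
    (k * k) * (((4 * 2 ^ L) * (4 * 2 ^ L)) *
      ((Finset.univ.filter (fun M : Fin d → SimpleGraph (Fin n) => PMT M)).card /
        (n - (L + 1 + 2 * d)))) := by
  set T := (Finset.univ.filter (fun M : Fin d → SimpleGraph (Fin n) => PMT M)).card with hT
  let B : ℕ × ℕ → List (Fin d) × List (Fin d) → Finset (Fin d → SimpleGraph (Fin n)) :=
    fun ij ww => Finset.univ.filter (fun M => PMT M ∧ ij.1 ≠ ij.2 ∧ ∃ c w0, ww.1 = c :: w0 ∧
      ev M (c :: w0) r = ev M ww.2 r ∧ ev M (c :: w0) r ∉ vis M w0 r)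
  have hsub : (Finset.univ.filter (fun M : Fin d → SimpleGraph (Fin n) => PMT M ∧
      ∃ u, u ≠ r ∧ ∃ i j, i < k ∧ j < k ∧ i ≠ j ∧
        ((groupGraph M i).Reachable u r ∧ (groupGraph M i).dist u r ≤ L) ∧
        ((groupGraph M j).Reachable u r ∧ (groupGraph M j).dist u r ≤ L))) ⊆
      (Finset.range k ×ˢ Finset.range k).biUnion (fun ij =>
        (NBle (cols d ij.1) L ×ˢ NBle (cols d ij.2) L).biUnion (B ij)) := by
    intro M hM
    simp only [Finset.mem_filter, Finset.mem_univ, true_and] at hM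
    obtain ⟨hM, u, hur, i, j, hi, hj, hij, ⟨hri, hdi⟩, hrj, hdj⟩ := hM
    obtain ⟨w, hw, hev, -, hnot⟩ := exists_word M hM (cols d i) (groupGraph M i)
      (groupGraph_adj M i) r _ u hri rfl
    obtain ⟨w', hw', hev', -, -⟩ := exists_word M hM (cols d j) (groupGraph M j)
      (groupGraph_adj M j) r _ u hrj rfl
    rw [Finset.mem_biUnion]
    refine ⟨(i, j), by simp [hi, hj], ?_⟩
    rw [Finset.mem_biUnion]
    refine ⟨(w, w'), ?_, ?_⟩
    · rw [Finset.mem_product]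
      constructor
      · exact Finset.mem_biUnion.2 ⟨_, Finset.mem_range.2 (Nat.lt_succ_of_le hdi), hw⟩
      · exact Finset.mem_biUnion.2 ⟨_, Finset.mem_range.2 (Nat.lt_succ_of_le hdj), hw'⟩
    · simp only [B, Finset.mem_filter, Finset.mem_univ, true_and]
      refine ⟨hM, hij, ?_⟩
      cases w with
      | nil => exact absurd hev.symm hur
      | cons c w0 =>
        refine ⟨c, w0, rfl, hev.trans hev'.symm, ?_⟩
        rw [hev]
        exact hnot c w0 rfl
  refine (Finset.card_le_card hsub).trans ?_
  have hcard : k * k = (Finset.range k ×ˢ Finset.range k).card := by simp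
  rw [hcard]
  apply Finset.card_biUnion_le_card_mul
  rintro ⟨i, j⟩ -
  refine le_trans (Finset.card_biUnion_le_card_mul _ _ (T / (n - (L + 1 + 2 * d))) ?_) ?_
  · rintro ⟨w, w'⟩ hww
    rw [Finset.mem_product] at hww
    obtain ⟨hw, hw'⟩ := hww
    obtain ⟨a, ha, hw⟩ := Finset.mem_biUnion.1 hw
    obtain ⟨b, hb, hw'⟩ := Finset.mem_biUnion.1 hw'
    have hw := NB_prop _ _ _ hw
    have hw' := NB_prop _ _ _ hw'
    rw [Nat.le_div_iff_mul_le hK]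
    by_cases hij : i = j
    · have : B (i, j) (w, w') = ∅ := by
        simp [B, hij]
      simp [this]
    cases w with
    | nil =>
      have : B (i, j) ([], w') = ∅ := by
        simp [B]
      simp [this]
    | cons c w0 =>
      have hc : c ∉ w' := by
        intro h
        have h1 := hw'.2 c h
        have h2 := hw.2 c (by simp)
        simp only [cols, Finset.mem_filter, Finset.mem_univ, true_and] at h1 h2
        omega
      have key := card_B (V := Fin n) (C := Fin d) r c w0 w' hc
      rw [Fintype.card_fin, Fintype.card_fin] at key
      refine le_trans (Nat.mul_le_mul ?_ ?_) key
      · apply Finset.card_le_card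
        intro M hM
        simp only [B, Finset.mem_filter, Finset.mem_univ, true_and] at hM ⊢
        obtain ⟨h1, -, c1, w1, h2, h3⟩ := hM
        rw [List.cons.injEq] at h2
        obtain ⟨rfl, rfl⟩ := h2
        exact ⟨h1, h3⟩
      · have h3 := hw.1
        rw [Finset.mem_range] at ha
        rw [List.length_cons] at h3
        omega
  · apply Nat.mul_le_mul_right
    rw [Finset.card_product]
    exact Nat.mul_le_mul (card_NBle _ (card_cols _ _) _) (card_NBle _ (card_cols _ _) _)

lemma exists_PMT (n d : ℕ) (hn : Even n) (hd : 2 * d ≤ n) :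
    ∃ M : Fin d → SimpleGraph (Fin n), PMT M := by
  obtain ⟨m, hm⟩ := hn
  refine ⟨fun c => SimpleGraph.mk (fun x y => (x.val + y.val) % n = 2 * c.val + 1) ?_ ?_,
    ?_, ?_⟩
  · constructor
    intro x y h
    rw [add_comm]
    exact h
  · constructor
    intro x h
    have h1 := x.isLt
    rcases lt_or_ge (x.val + x.val) n with h2 | h2
    · rw [Nat.mod_eq_of_lt h2] at h
      omega
    · rw [Nat.mod_eq_sub_mod h2, Nat.mod_eq_of_lt (by omega)] at h
      omega
  · intro c x
    have hx := x.isLt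
    have hc := c.isLt
    have hy : (2 * c.val + 1 + (n - x.val)) % n < n := Nat.mod_lt _ (by omega)
    refine ⟨⟨_, hy⟩, fun z => ?_⟩
    have hz := z.isLt
    rw [Fin.ext_iff]
    simp only
    rcases lt_or_ge (x.val + z.val) n with h2 | h2
    · rw [Nat.mod_eq_of_lt h2]
      rcases lt_or_ge (2 * c.val + 1 + (n - x.val)) n with h3 | h3
      · rw [Nat.mod_eq_of_lt h3]
        omega
      · rw [Nat.mod_eq_sub_mod h3, Nat.mod_eq_of_lt (by omega)]
        omega
    · rw [Nat.mod_eq_sub_mod h2, Nat.mod_eq_of_lt (by omega)]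
      rcases lt_or_ge (2 * c.val + 1 + (n - x.val)) n with h3 | h3
      · rw [Nat.mod_eq_of_lt h3]
        omega
      · rw [Nat.mod_eq_sub_mod h3, Nat.mod_eq_of_lt (by omega)]
        omega
  · intro i j hij p q h h'
    apply hij
    apply Fin.ext
    simp only at h h'
    omega

open Classical in
lemma rootProb_ge (n d D : ℕ) (A : (Fin d → SimpleGraph (Fin n)) → Fin n → Prop)
    (hn : 0 < n)
    (hT : 0 < (Finset.univ.filter (fun M : Fin d → SimpleGraph (Fin n) => PMT M)).card)
    (h : ∀ r, (Finset.univ.filter (fun M : Fin d → SimpleGraph (Fin n) =>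
      PMT M ∧ ¬ A M r)).card ≤ D) :
    1 - (D : ℝ) /
      ((Finset.univ.filter (fun M : Fin d → SimpleGraph (Fin n) => PMT M)).card : ℝ) ≤
      rootProb n d A ∧ rootProb n d A ≤ 1 := by
  set T := (Finset.univ.filter (fun M : Fin d → SimpleGraph (Fin n) => PMT M)).card with hTdef
  unfold rootProb
  simp only [isPMTuple_iff]
  have htot : (Finset.univ.filter (fun P : (Fin d → SimpleGraph (Fin n)) × Fin n =>
      PMT P.1)).card = T * n := by
    have : (Finset.univ.filter (fun P : (Fin d → SimpleGraph (Fin n)) × Fin n => PMT P.1)) =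
        (Finset.univ.filter (fun M : Fin d → SimpleGraph (Fin n) => PMT M)) ×ˢ
          (Finset.univ : Finset (Fin n)) := by
      ext P
      simp
    rw [this, Finset.card_product, Finset.card_univ, Fintype.card_fin]
  have hbad : (Finset.univ.filter (fun P : (Fin d → SimpleGraph (Fin n)) × Fin n =>
      PMT P.1 ∧ ¬ A P.1 P.2)).card ≤ n * D := by
    have hsub : (Finset.univ.filter (fun P : (Fin d → SimpleGraph (Fin n)) × Fin n =>
      PMT P.1 ∧ ¬ A P.1 P.2)) ⊆ (Finset.univ : Finset (Fin n)).biUnion (fun r =>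
        (Finset.univ.filter (fun M : Fin d → SimpleGraph (Fin n) =>
          PMT M ∧ ¬ A M r)).image (fun M => (M, r))) := by
      rintro ⟨M, r⟩ hP
      simp only [Finset.mem_filter, Finset.mem_univ, true_and] at hP
      simp only [Finset.mem_biUnion, Finset.mem_image, Finset.mem_filter, Finset.mem_univ,
        true_and]
      exact ⟨r, M, hP, rfl⟩
    refine (Finset.card_le_card hsub).trans ?_
    refine (Finset.card_biUnion_le_card_mul _ _ D
      (fun r _ => Finset.card_image_le.trans (h r))).trans ?_
    simp
  have hsplit : (Finset.univ.filter (fun P : (Fin d → SimpleGraph (Fin n)) × Fin n =>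
      PMT P.1 ∧ A P.1 P.2)).card + (Finset.univ.filter
      (fun P : (Fin d → SimpleGraph (Fin n)) × Fin n => PMT P.1 ∧ ¬ A P.1 P.2)).card
      = T * n := by
    rw [← htot, ← Finset.filter_filter, ← Finset.filter_filter]
    exact Finset.card_filter_add_card_filter_not _
  rw [htot]
  set g := (Finset.univ.filter (fun P : (Fin d → SimpleGraph (Fin n)) × Fin n =>
      PMT P.1 ∧ A P.1 P.2)).card
  have hTn : (0 : ℝ) < ((T * n : ℕ) : ℝ) := by
    exact_mod_cast Nat.mul_pos hT hn
  have hT' : (0 : ℝ) < (T : ℝ) := by exact_mod_cast hT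
  have hn' : (0 : ℝ) < (n : ℝ) := by exact_mod_cast hn
  constructor
  · rw [le_div_iff₀ hTn]
    have h1 : (T * n : ℕ) ≤ g + n * D := by omega
    have h2 : (T : ℝ) * n ≤ g + n * D := by exact_mod_cast h1
    push_cast
    have : (1 - (D : ℝ) / T) * (T * n) = T * n - n * D := by
      field_simp
    rw [this]
    linarith
  · rw [div_le_one hTn]
    have : g ≤ T * n := by omega
    exact_mod_cast this

end Main
section Asym

open Filter Real

lemma asym_small : ∀ᶠ n : ℕ in atTop, 1 ≤ Real.log n ∧ 17 * Real.log n ^ 2 ≤ n / 2 := by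
  have h1 : Tendsto (fun n : ℕ => Real.log (n : ℝ)) atTop atTop :=
    Real.tendsto_log_atTop.comp tendsto_natCast_atTop_atTop
  have h2 := ((isLittleO_pow_log_id_atTop (n := 2)).comp_tendsto
    (tendsto_natCast_atTop_atTop (R := ℝ))).bound (show (0 : ℝ) < 1 / 34 by norm_num)
  filter_upwards [h1.eventually_ge_atTop 1, h2] with n hn hn2
  refine ⟨hn, ?_⟩
  simp only [Function.comp, id, norm_pow, Real.norm_eq_abs, sq_abs, Nat.abs_cast] at hn2
  linarith

lemma asym_tend : Tendsto (fun n : ℕ => 32 * (Real.log n ^ (18 : ℕ) / (n : ℝ) ^ (1 / 3 : ℝ)))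
    atTop (nhds 0) := by
  have h := (isLittleO_log_rpow_rpow_atTop 18 (show (0 : ℝ) < 1 / 3 by norm_num))
  have h2 := (h.tendsto_div_nhds_zero.comp (tendsto_natCast_atTop_atTop (R := ℝ))).const_mul 32
  rw [mul_zero] at h2
  refine h2.congr fun n => ?_
  simp only [Function.comp]
  rw [← Real.rpow_natCast]
  norm_num

lemma four_pow_le (n L : ℕ) (hl : 1 ≤ Real.log n) (hn : 0 < (n : ℝ))
    (hL : (L : ℝ) ≤ (Real.logb 2 n + 20 * Real.logb 2 (Real.log n)) / 3) :
    (4 : ℝ) ^ L ≤ (n : ℝ) ^ (2 / 3 : ℝ) * Real.log n ^ (14 : ℕ) := by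
  have hl0 : 0 < Real.log n := by linarith
  calc (4 : ℝ) ^ L = (2 : ℝ) ^ (2 * (L : ℝ)) := by
        rw [Real.rpow_mul (by norm_num), Real.rpow_natCast]; norm_num
    _ ≤ (2 : ℝ) ^ (Real.logb 2 n * (2 / 3) + Real.logb 2 (Real.log n) * (40 / 3)) := by
        apply Real.rpow_le_rpow_of_exponent_le (by norm_num)
        linarith
    _ = (n : ℝ) ^ (2 / 3 : ℝ) * Real.log n ^ (40 / 3 : ℝ) := by
        rw [Real.rpow_add (by norm_num), Real.rpow_mul (by norm_num),
          Real.rpow_mul (by norm_num), Real.rpow_logb (by norm_num) (by norm_num) hn,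
          Real.rpow_logb (by norm_num) (by norm_num) hl0]
    _ ≤ _ := by
        apply mul_le_mul_of_nonneg_left _ (by positivity)
        rw [← Real.rpow_natCast]
        apply Real.rpow_le_rpow_of_exponent_le hl
        norm_num

lemma L_le (n L : ℕ) (hl : 1 ≤ Real.log n) (hn : 0 < (n : ℝ))
    (hL : (L : ℝ) ≤ (Real.logb 2 n + 20 * Real.logb 2 (Real.log n)) / 3) :
    (L : ℝ) ≤ 14 * Real.log n := by
  have h1 : Real.logb 2 (Real.log n) ≤ Real.logb 2 n := by
    apply Real.logb_le_logb_of_le (by norm_num) (by linarith)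
    linarith [Real.log_le_sub_one_of_pos hn]
  have h2 : Real.logb 2 n ≤ 2 * Real.log n := by
    unfold Real.logb
    rw [div_le_iff₀ (Real.log_pos (by norm_num))]
    nlinarith [Real.log_two_gt_d9]
  linarith

end Asym

/-- For even `n → ∞` and `4 ≤ d(n) ≤ (log n)²`, `k = ⌊d/4⌋` and
`β = log₂ n + 20 log₂ log n`: sampling `G''(n, d(n))` together with an independent
uniformly random root `r`, with high probability every vertex `u ≠ r` is within distance
`β/3` of `r` in at most one of the group graphs `G_1,…,G_k`. -/
theorem stmt18 (d : ℕ → ℕ)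
    (hd : ∀ᶠ n : ℕ in Filter.atTop, 4 ≤ d n ∧ (d n : ℝ) ≤ (Real.log n) ^ 2) :
    Filter.Tendsto
      (fun n : ℕ => rootProb n (d n)
        (fun M r => ∀ u : Fin n, u ≠ r →
          ∀ i j : ℕ, i < d n / 4 → j < d n / 4 →
            ((groupGraph M i).Reachable u r ∧
              ((groupGraph M i).dist u r : ℝ) ≤
                (Real.logb 2 n + 20 * Real.logb 2 (Real.log n)) / 3) →
            ((groupGraph M j).Reachable u r ∧
              ((groupGraph M j).dist u r : ℝ) ≤
                (Real.logb 2 n + 20 * Real.logb 2 (Real.log n)) / 3) →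
            i = j))
      (Filter.atTop ⊓ Filter.principal {n : ℕ | Even n}) (nhds 1) := by
  classical
  set β : ℕ → ℝ := fun n => (Real.logb 2 n + 20 * Real.logb 2 (Real.log n)) / 3 with hβ
  have hlow : Filter.Tendsto
      (fun n : ℕ => 1 - 32 * (Real.log n ^ (18 : ℕ) / (n : ℝ) ^ (1 / 3 : ℝ)))
      (Filter.atTop ⊓ Filter.principal {n : ℕ | Even n}) (nhds 1) := by
    have := (asym_tend.const_sub 1).mono_left
      (inf_le_left : Filter.atTop ⊓ Filter.principal {n : ℕ | Even n} ≤ Filter.atTop)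
    simpa using this
  have hev : ∀ᶠ n : ℕ in Filter.atTop ⊓ Filter.principal {n : ℕ | Even n},
      1 - 32 * (Real.log n ^ (18 : ℕ) / (n : ℝ) ^ (1 / 3 : ℝ)) ≤
        rootProb n (d n) (fun M r => ∀ u : Fin n, u ≠ r →
          ∀ i j : ℕ, i < d n / 4 → j < d n / 4 →
            ((groupGraph M i).Reachable u r ∧ ((groupGraph M i).dist u r : ℝ) ≤ β n) →
            ((groupGraph M j).Reachable u r ∧ ((groupGraph M j).dist u r : ℝ) ≤ β n) →
            i = j) ∧
        rootProb n (d n) (fun M r => ∀ u : Fin n, u ≠ r →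
          ∀ i j : ℕ, i < d n / 4 → j < d n / 4 →
            ((groupGraph M i).Reachable u r ∧ ((groupGraph M i).dist u r : ℝ) ≤ β n) →
            ((groupGraph M j).Reachable u r ∧ ((groupGraph M j).dist u r : ℝ) ≤ β n) →
            i = j) ≤ 1 := by
    rw [Filter.eventually_inf_principal]
    filter_upwards [hd, asym_small, Filter.eventually_gt_atTop 0] with n hdn hsm hn0 heven
    obtain ⟨hl, hs⟩ := hsm
    have hn : (0 : ℝ) < n := by exact_mod_cast hn0
    have hl2 : Real.log n ≤ Real.log n ^ 2 := by nlinarith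
    have hlognn : 0 ≤ Real.logb 2 (n : ℝ) := by
      unfold Real.logb
      exact div_nonneg (by linarith) (Real.log_nonneg (by norm_num))
    have hloglog : 0 ≤ Real.logb 2 (Real.log n) := by
      unfold Real.logb
      exact div_nonneg (Real.log_nonneg hl) (Real.log_nonneg (by norm_num))
    have hβ0 : 0 ≤ β n := by
      simp only [hβ]
      positivity
    set L := ⌊β n⌋₊ with hLdef
    have hLβ : (L : ℝ) ≤ β n := Nat.floor_le hβ0
    have hL14 := L_le n L hl hn hLβ
    have hL4 := four_pow_le n L hl hn hLβ
    have hsum : ((L + 1 + 2 * d n : ℕ) : ℝ) ≤ n / 2 := by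
      push_cast
      linarith [hdn.2]
    have hsum2 : L + 1 + 2 * d n ≤ n := by
      have : ((L + 1 + 2 * d n : ℕ) : ℝ) ≤ (n : ℝ) := by linarith
      exact_mod_cast this
    have hKr : (n : ℝ) / 2 ≤ ((n - (L + 1 + 2 * d n) : ℕ) : ℝ) := by
      rw [Nat.cast_sub hsum2]
      linarith
    have hK : 0 < n - (L + 1 + 2 * d n) := by
      have : (0 : ℝ) < ((n - (L + 1 + 2 * d n) : ℕ) : ℝ) := by linarith
      exact_mod_cast this
    have hT : 0 < (Finset.univ.filter
        (fun M : Fin (d n) → SimpleGraph (Fin n) => PMT M)).card := by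
      obtain ⟨M, hM⟩ := exists_PMT n (d n) heven (by omega)
      exact Finset.card_pos.2 ⟨M, by simpa using hM⟩
    have main := rootProb_ge n (d n) _ (fun M r => ∀ u : Fin n, u ≠ r →
          ∀ i j : ℕ, i < d n / 4 → j < d n / 4 →
            ((groupGraph M i).Reachable u r ∧ ((groupGraph M i).dist u r : ℝ) ≤ β n) →
            ((groupGraph M j).Reachable u r ∧ ((groupGraph M j).dist u r : ℝ) ≤ β n) →
            i = j) hn0 hT (fun r => le_trans (Finset.card_le_card (by
              intro M hM
              simp only [Finset.mem_filter, Finset.mem_univ, true_and] at hM ⊢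
              refine ⟨hM.1, ?_⟩
              have h2 := hM.2
              push Not at h2
              obtain ⟨u, hu, i, j, hi, hj, ⟨h3, h4⟩, ⟨h5, h6⟩, h7⟩ := h2
              exact ⟨u, hu, i, j, hi, hj, h7, ⟨h3, Nat.le_floor h4⟩, h5, Nat.le_floor h6⟩))
            (card_bad n (d n) L (d n / 4) r hK))
    refine ⟨le_trans ?_ main.1, main.2⟩
    apply sub_le_sub_left
    set T := (Finset.univ.filter
        (fun M : Fin (d n) → SimpleGraph (Fin n) => PMT M)).card
    have hT' : (0 : ℝ) < (T : ℝ) := by exact_mod_cast hT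
    set K := n - (L + 1 + 2 * d n)
    rw [div_le_iff₀ hT']
    have hdiv : ((T / K : ℕ) : ℝ) ≤ (T : ℝ) / (n / 2) :=
      Nat.cast_div_le.trans (div_le_div_of_nonneg_left hT'.le (by positivity) hKr)
    have hk : ((d n / 4 : ℕ) : ℝ) ≤ Real.log n ^ 2 := by
      refine le_trans ?_ hdn.2
      exact_mod_cast Nat.div_le_self _ _
    have h4L : (2 : ℝ) ^ L * 2 ^ L = 4 ^ L := by
      rw [← mul_pow]
      norm_num
    have hnn : (n : ℝ) = (n : ℝ) ^ (2 / 3 : ℝ) * (n : ℝ) ^ (1 / 3 : ℝ) := by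
      rw [← Real.rpow_add hn]
      norm_num
    have hp1 : 0 < (n : ℝ) ^ (2 / 3 : ℝ) := Real.rpow_pos_of_pos hn _
    have hp2 : 0 < (n : ℝ) ^ (1 / 3 : ℝ) := Real.rpow_pos_of_pos hn _
    simp only [Nat.cast_mul, Nat.cast_pow, Nat.cast_ofNat]
    calc ((d n / 4 : ℕ) : ℝ) * ((d n / 4 : ℕ) : ℝ) *
          (4 * 2 ^ L * (4 * 2 ^ L) * ((T / K : ℕ) : ℝ))
        = ((d n / 4 : ℕ) : ℝ) * ((d n / 4 : ℕ) : ℝ) * (16 * 4 ^ L * ((T / K : ℕ) : ℝ)) := by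
          rw [← h4L]
          ring
      _ ≤ Real.log n ^ 2 * Real.log n ^ 2 *
          (16 * ((n : ℝ) ^ (2 / 3 : ℝ) * Real.log n ^ (14 : ℕ)) * ((T : ℝ) / (n / 2))) := by
          gcongr
      _ = 32 * (Real.log n ^ (18 : ℕ) / (n : ℝ) ^ (1 / 3 : ℝ)) * T := by
          have : (T : ℝ) / (n / 2) =
              2 * T / ((n : ℝ) ^ (2 / 3 : ℝ) * (n : ℝ) ^ (1 / 3 : ℝ)) := by
            rw [← hnn]
            field_simp
          rw [this]
          field_simp
          ring
  exact tendsto_of_tendsto_of_tendsto_of_le_of_le' hlow tendsto_const_nhds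
    (hev.mono fun n h => h.1) (hev.mono fun n h => h.2)
end
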